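/- Let p be a prime and let ℤ/p act linearly on S^n via an orthogonal representation ρ : ℤ/p → O(n+1) with fixed point set the great k-sphere S^k, where 0 < k < n. Suppose that either (i) k < n − 2, or (ii) k = n − 2 and n is even, or (iii) k = n − 1 and n is odd. Then TC^{ℤ/p}(S^n) = 3. -/

import Mathlib

open Set unitInterval

namespace PaperTC

variable {G X : Type*}

/-- The orbit of `x` under the action `act`. -/
def orbit (act : G → X → X) (x : X) : Set X := {y | ∃ g, act g x = y}

/-- The fixed point set of the action `act`. -/
def fixedSet (act : G → X → X) : Set X := {x | ∀ g, act g x = x}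

/-- The fixed point set of a subset `S` of the acting group. -/
def fixedSetOf (act : G → X → X) (S : Set G) : Set X := {x | ∀ g ∈ S, act g x = x}

/-- `minCover P` is the least `k ≥ 1` satisfying `P k`, as an element of `ℕ∞`
(equal to `∞` if there is no such `k`). -/
noncomputable def minCover (P : ℕ → Prop) : ℕ∞ :=
  sInf {k : ℕ∞ | ∃ m : ℕ, k = m ∧ 1 ≤ m ∧ P m}

section Plain

variable (Y : Type*) [TopologicalSpace Y]

/-- `Y × Y` can be covered by `k` open sets each admitting a motion planner. -/
def TCcover (k : ℕ) : Prop :=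
  ∃ U : Fin k → Set (Y × Y),
    (∀ i, IsOpen (U i)) ∧ (⋃ i, U i) = univ ∧
    ∀ i, ∃ s : Y × Y → C(I, Y),
      ContinuousOn s (U i) ∧ ∀ p ∈ U i, s p 0 = p.1 ∧ s p 1 = p.2

/-- Topological complexity (non-reduced, possibly infinite). -/
noncomputable def TC : ℕ∞ := minCover (TCcover Y)

/-- `Y` can be covered by `k` open sets, each of which can be deformed within `Y`
to a point. -/
def catCover (k : ℕ) : Prop :=
  ∃ U : Fin k → Set Y,
    (∀ i, IsOpen (U i)) ∧ (⋃ i, U i) = univ ∧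
    ∀ i, ∃ H : Y × I → Y,
      ContinuousOn H (U i ×ˢ (univ : Set I)) ∧ (∀ x ∈ U i, H (x, 0) = x) ∧
      ∃ y₀, ∀ x ∈ U i, H (x, 1) = y₀

/-- Non-reduced Lusternik–Schnirelmann category. -/
noncomputable def cat : ℕ∞ := minCover (catCover Y)

end Plain

section Equivariant

variable [TopologicalSpace X] (act : G → X → X)

/-- `X × X` can be covered by `k` invariant open sets each admitting an
equivariant motion planner. -/
def eqTCcover (k : ℕ) : Prop :=
  ∃ U : Fin k → Set (X × X),
    (∀ i, IsOpen (U i)) ∧ (⋃ i, U i) = univ ∧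
    ∀ i, (∀ g p, p ∈ U i → (act g p.1, act g p.2) ∈ U i) ∧
      ∃ s : X × X → C(I, X),
        ContinuousOn s (U i) ∧
        (∀ p ∈ U i, s p 0 = p.1 ∧ s p 1 = p.2) ∧
        (∀ g p, p ∈ U i → ∀ t : I, s (act g p.1, act g p.2) t = act g (s p t))

/-- Equivariant topological complexity `TC_G` of Colman and Grant. -/
noncomputable def eqTC : ℕ∞ := minCover (eqTCcover act)

/-- `X × X` can be covered by `k` `(G × G)`-invariant open sets, each admitting a
`(G × G)`-equivariant section of `π^G : P X ×_{X/G} P X → X × X`; such a section is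
recorded by a pair of paths `s₁ p`, `s₂ p`, with the orbit of the endpoint of the first
equal to the orbit of the starting point of the second. -/
def invTCcover (k : ℕ) : Prop :=
  ∃ U : Fin k → Set (X × X),
    (∀ i, IsOpen (U i)) ∧ (⋃ i, U i) = univ ∧
    ∀ i, (∀ g₁ g₂ : G, ∀ p, p ∈ U i → (act g₁ p.1, act g₂ p.2) ∈ U i) ∧
      ∃ s₁ s₂ : X × X → C(I, X),
        ContinuousOn s₁ (U i) ∧ ContinuousOn s₂ (U i) ∧
        (∀ p ∈ U i, s₁ p 0 = p.1 ∧ s₂ p 1 = p.2 ∧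
          orbit act (s₁ p 1) = orbit act (s₂ p 0)) ∧
        (∀ g₁ g₂ : G, ∀ p, p ∈ U i → ∀ t : I,
          s₁ (act g₁ p.1, act g₂ p.2) t = act g₁ (s₁ p t) ∧
          s₂ (act g₁ p.1, act g₂ p.2) t = act g₂ (s₂ p t))

/-- Invariant topological complexity `TC^G` of Lubawski and Marzantowicz. -/
noncomputable def invTC : ℕ∞ := minCover (invTCcover act)

/-- The invariant open set `U` is `G`-compressible into `A`: the inclusion `U ↪ X` is
`G`-equivariantly homotopic to a `G`-map with values in `A`. -/
def GCompressible (A : Set X) (U : Set X) : Prop :=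
  (∀ g x, x ∈ U → act g x ∈ U) ∧
  ∃ H : X × I → X,
    ContinuousOn H (U ×ˢ (univ : Set I)) ∧ (∀ x ∈ U, H (x, 0) = x) ∧
    (∀ g x, x ∈ U → ∀ t : I, H (act g x, t) = act g (H (x, t))) ∧
    (∀ x ∈ U, H (x, 1) ∈ A)

/-- A `G`-categorical set: compressible into a single orbit. -/
def GCategorical (U : Set X) : Prop :=
  ∃ x₀ : X, GCompressible act (orbit act x₀) U

/-- `X` can be covered by `k` open `G`-categorical sets. -/
def catGCover (k : ℕ) : Prop :=
  ∃ U : Fin k → Set X,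
    (∀ i, IsOpen (U i)) ∧ (⋃ i, U i) = univ ∧ ∀ i, GCategorical act (U i)

/-- Equivariant Lusternik–Schnirelmann category `cat_G`. -/
noncomputable def catG : ℕ∞ := minCover (catGCover act)

/-- `X` can be covered by `k` open sets `G`-compressible into `{star}`. -/
def pointedCatGCover (star : X) (k : ℕ) : Prop :=
  ∃ U : Fin k → Set X,
    (∀ i, IsOpen (U i)) ∧ (⋃ i, U i) = univ ∧
    ∀ i, GCompressible act {star} (U i)

/-- The pointed equivariant category `_{{⋆}}cat_G(X)`. -/
noncomputable def pointedCatG (star : X) : ℕ∞ := minCover (pointedCatGCover act star)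

/-- `X` is `G`-contractible: the identity is `G`-homotopic to a map with values in a
single orbit. -/
def GContractible : Prop :=
  ∃ H : X × I → X,
    Continuous H ∧ (∀ x, H (x, 0) = x) ∧
    (∀ g x, ∀ t : I, H (act g x, t) = act g (H (x, t))) ∧
    ∃ x₀ : X, ∀ x, H (x, 1) ∈ orbit act x₀

end Equivariant

/-- The orbit space `X/G` with the quotient topology. -/
abbrev OrbitSpace (act : G → X → X) : Type _ := Quot (fun x y => ∃ g, act g x = y)

end PaperTC
namespace PaperTC

/-- The unit sphere `S^n ⊆ ℝ^{n+1}` (with the Euclidean metric). -/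
abbrev Sph (n : ℕ) : Set (EuclideanSpace ℝ (Fin (n + 1))) := Metric.sphere 0 1

/-- The action of `G` on the unit sphere `S^n` obtained by restricting an orthogonal
representation of `G` on `ℝ^{n+1}`. -/
noncomputable def sphereAct {G : Type*} [Monoid G] {n : ℕ}
    (ρ : G →* (EuclideanSpace ℝ (Fin (n + 1)) ≃ₗᵢ[ℝ] EuclideanSpace ℝ (Fin (n + 1)))) :
    G → ↥(Sph n) → ↥(Sph n) := fun g x =>
  ⟨ρ g x, mem_sphere_zero_iff_norm.mpr (by
    rw [(ρ g).norm_map]; exact mem_sphere_zero_iff_norm.mp x.2)⟩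

end PaperTC

open PaperTC


namespace KTC

open Finset Equiv

/-- skip the index `i` -/
def skip (i j : ℕ) : ℕ := if j < i then j else j + 1

/-- Alternating coboundary of a cochain on sequences. -/
def dlt {X R : Type*} [CommRing R] (a : ℕ) (φ : (ℕ → X) → R) (x : ℕ → X) : R :=
  ∑ i ∈ range (a + 2), (-1) ^ i * φ (fun j => x (skip i j))

/-- `φ` depends only on the entries `0..a`. -/
def Dep {X R : Type*} (a : ℕ) (φ : (ℕ → X) → R) : Prop :=
  ∀ x y : ℕ → X, (∀ j ≤ a, x j = y j) → φ x = φ y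

/-- `φ` vanishes on degenerate tuples. -/
def Nrm {X R : Type*} [CommRing R] (a : ℕ) (φ : (ℕ → X) → R) : Prop :=
  ∀ x : ℕ → X, (∃ i < a, x i = x (i + 1)) → φ x = 0

def cup {X R : Type*} [CommRing R] (a : ℕ) (A B : (ℕ → X) → R) (x : ℕ → X) : R :=
  A x * B (fun j => x (a + j))

theorem cup_leibniz {X R : Type*} [CommRing R] (a b : ℕ) (A B : (ℕ → X) → R)
    (hA : Dep a A) (x : ℕ → X) :
    dlt (a + b) (cup a A B) x =
      dlt a A x * B (fun j => x (a + 1 + j)) + (-1) ^ a * A x * dlt b B (fun j => x (a + j)) := by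
  unfold dlt cup
  rw [show a + b + 2 = (a + 1) + (b + 1) by ring, Finset.sum_range_add,
    Finset.sum_range_succ (n := a + 1), Finset.sum_range_succ' (n := b + 1)]
  have h1 : ∀ i ∈ range (a + 1), (-1 : R) ^ i * (A (fun j => x (skip i j)) *
      B (fun j => x (skip i (a + j)))) = ((-1) ^ i * A (fun j => x (skip i j))) *
      B (fun j => x (a + 1 + j)) := by
    intro i hi
    rw [mul_assoc]
    congr 3
    funext j
    simp only [Finset.mem_range] at hi
    simp only [skip]
    rw [if_neg (by omega)]
    congr 1; ring
  rw [Finset.sum_congr rfl h1, ← Finset.sum_mul]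
  have h2 : ∀ i ∈ range (b + 1), (-1 : R) ^ (a + 1 + i) * (A (fun j => x (skip (a + 1 + i) j)) *
      B (fun j => x (skip (a + 1 + i) (a + j)))) = (-1) ^ a * A x * ((-1) ^ (i + 1) *
      B (fun j => x (a + skip (i + 1) j))) := by
    intro i hi
    have e1 : A (fun j => x (skip (a + 1 + i) j)) = A x := by
      apply hA
      intro j hj
      simp only [skip]
      rw [if_pos (by omega)]
    have e2 : (fun j => x (skip (a + 1 + i) (a + j))) = (fun j => x (a + skip (i + 1) j)) := by
      funext j
      simp only [skip]
      by_cases h : j < i + 1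
      · rw [if_pos (by omega), if_pos h]
      · rw [if_neg (by omega), if_neg h]; congr 1
    rw [e1, e2]; ring
  rw [Finset.sum_congr rfl h2, ← Finset.mul_sum]
  have e3 : A (fun j => x (skip (a + 1) j)) = A x := by
    apply hA
    intro j hj
    simp only [skip]
    rw [if_pos (by omega)]
  have e4 : (fun j => x (a + skip 0 j)) = (fun j => x (a + 1 + j)) := by
    funext j
    simp only [skip]
    simp only [not_lt_zero, if_false]
    congr 1; ring
  rw [e3, e4]
  ring

/-- Sign of a permutation in a ring. -/
def sg (R : Type*) [CommRing R] {N : ℕ} (ς : Perm (Fin N)) : R := ((Perm.sign ς : ℤ) : R)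

theorem sg_mul (R : Type*) [CommRing R] {N : ℕ} (ς τ : Perm (Fin N)) :
    sg R (ς * τ) = sg R ς * sg R τ := by
  simp [sg]

/-- The lattice path of the Kuhn simplex. -/
def path {N : ℕ} (m : Fin N → ℕ) (ς : Perm (Fin N)) (j : ℕ) : Fin N → ℕ :=
  fun c => m c + if (ς c : ℕ) < j then 1 else 0

def box (L N : ℕ) : Finset (Fin N → ℕ) := Fintype.piFinset (fun _ => range L)

theorem mem_box {L N : ℕ} {m : Fin N → ℕ} : m ∈ box L N ↔ ∀ c, m c < L := by
  simp [box]

theorem kuhn_interior {R : Type*} [CommRing R] {N : ℕ} (φ : (ℕ → (Fin (N + 1) → ℕ)) → R)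
    (m : Fin (N + 1) → ℕ) (i : ℕ) (hi : i < N) :
    ∑ ς : Perm (Fin (N + 1)), sg R ς * φ (fun j => path m ς (skip (i + 1) j)) = 0 := by
  set s : Perm (Fin (N + 1)) := Equiv.swap ⟨i, by omega⟩ ⟨i + 1, by omega⟩ with hs
  have hne : (⟨i, by omega⟩ : Fin (N + 1)) ≠ ⟨i + 1, by omega⟩ := by
    intro h; simp at h
  have hsg : sg R s = -1 := by
    simp [sg, hs, Perm.sign_swap hne]
  apply Finset.sum_involution (fun ς _ => s * ς)
  · intro ς _
    have : (fun j => path m (s * ς) (skip (i + 1) j)) = fun j => path m ς (skip (i + 1) j) := by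
      funext j c
      simp only [path]
      congr 1
      have hsk : skip (i + 1) j ≠ i + 1 := by
        simp only [skip]; split_ifs <;> omega
      generalize skip (i + 1) j = J at hsk
      have : ((s * ς) c : ℕ) < J ↔ (ς c : ℕ) < J := by
        rw [Perm.mul_apply, hs, Equiv.swap_apply_def]
        split_ifs with h1 h2
        · rw [h1]; simp; omega
        · rw [h2]; simp; omega
        · rfl
      simp only [this]
    rw [this, sg_mul, hsg]; ring
  · intro ς _ _ h
    have : s = 1 := by simpa using h
    have h2 : s ⟨i, by omega⟩ = ⟨i + 1, by omega⟩ := by rw [hs, Equiv.swap_apply_left]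
    rw [this] at h2
    exact hne h2
  · intro ς _; exact Finset.mem_univ _
  · intro ς _
    show s * (s * ς) = ς
    rw [← mul_assoc, hs, Equiv.swap_mul_self, one_mul]

/-- Telescoping in one coordinate of the box. -/
theorem box_telescope {R : Type*} [CommRing R] {N : ℕ} (L : ℕ) (hL : 0 < L) (c : Fin N)
    (g : (Fin N → ℕ) → R) :
    ∑ m ∈ box L N, (g (fun d => m d + if d = c then 1 else 0) - g m) =
      ∑ m ∈ (box L N).filter (fun m => m c = 0),
        (g (fun d => m d + if d = c then L else 0) - g m) := by
  classical
  rw [Finset.sum_sub_distrib, Finset.sum_sub_distrib]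
  have e1 : ∑ m ∈ box L N, g (fun d => m d + if d = c then 1 else 0) =
      ∑ m ∈ (box L N).filter (fun m => m c ≠ 0), g m +
      ∑ m ∈ (box L N).filter (fun m => m c = 0), g (fun d => m d + if d = c then L else 0) := by
    rw [← Finset.sum_filter_add_sum_filter_not (box L N) (fun m => m c + 1 < L)]
    congr 1
    · apply Finset.sum_nbij' (fun m d => m d + if d = c then 1 else 0)
        (fun m d => m d - if d = c then 1 else 0)
      · intro m hm
        simp only [Finset.mem_filter, mem_box] at hm ⊢
        refine ⟨fun d => ?_, by simp⟩
        split_ifs with h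
        · subst h; exact hm.2
        · simpa using hm.1 d
      · intro m hm
        simp only [Finset.mem_filter, mem_box] at hm ⊢
        refine ⟨fun d => lt_of_le_of_lt (Nat.sub_le _ _) (hm.1 d), ?_⟩
        have := hm.1 c
        simp; omega
      · intro m hm; funext d; simp
      · intro m hm
        simp only [Finset.mem_filter, mem_box] at hm
        funext d
        dsimp only
        split_ifs with h
        · subst h; have := hm.2; omega
        · simp
      · intro m hm; rfl
    · apply Finset.sum_nbij' (fun m d => m d - if d = c then (L - 1) else 0)
        (fun m d => m d + if d = c then (L - 1) else 0)
      · intro m hm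
        simp only [Finset.mem_filter, mem_box] at hm ⊢
        refine ⟨fun d => lt_of_le_of_lt (Nat.sub_le _ _) (hm.1 d), ?_⟩
        have := hm.1 c
        simp; omega
      · intro m hm
        simp only [Finset.mem_filter, mem_box] at hm ⊢
        refine ⟨fun d => ?_, ?_⟩
        · split_ifs with h
          · subst h; have := hm.2; omega
          · simpa using hm.1 d
        · simp; omega
      · intro m hm
        simp only [Finset.mem_filter, mem_box] at hm
        funext d
        dsimp only
        split_ifs with h
        · subst h; have := hm.2; omega
        · simp
      · intro m hm; funext d; simp
      · intro m hm
        simp only [Finset.mem_filter, mem_box] at hm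
        congr 1
        funext d
        dsimp only
        split_ifs with h
        · subst h; have := hm.2; have := hm.1 d; omega
        · simp
  rw [e1, ← Finset.sum_filter_add_sum_filter_not (box L N) (fun m => m c = 0) g]
  ring

theorem stokes {R : Type*} [CommRing R] {N : ℕ} (L : ℕ) (hL : 0 < L)
    (φ : (ℕ → (Fin (N + 1) → ℕ)) → R) (hφ : Dep N φ) :
    ∑ m ∈ box L (N + 1), ∑ ς : Perm (Fin (N + 1)), sg R ς * dlt N φ (path m ς) =
    (-1) ^ N * ∑ ς : Perm (Fin (N + 1)), sg R ς *
      ∑ m ∈ (box L (N + 1)).filter (fun m => m (ς.symm (Fin.last N)) = 0),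
      (φ (path (fun d => m d + if d = ς.symm (Fin.last N) then L else 0) ς) - φ (path m ς)) := by
  have h1 : ∀ m : Fin (N + 1) → ℕ, ∑ ς : Perm (Fin (N + 1)), sg R ς * dlt N φ (path m ς) =
      ∑ ς : Perm (Fin (N + 1)), sg R ς * φ (fun j => path m ς (j + 1)) +
      (-1) ^ (N + 1) * ∑ ς : Perm (Fin (N + 1)), sg R ς * φ (path m ς) := by
    intro m
    simp only [dlt, Finset.mul_sum]
    rw [Finset.sum_comm, Finset.sum_range_succ, Finset.sum_range_succ']
    have z : ∑ k ∈ range N, ∑ ς : Perm (Fin (N + 1)),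
        sg R ς * ((-1) ^ (k + 1) * φ (fun j => path m ς (skip (k + 1) j))) = 0 := by
      apply Finset.sum_eq_zero
      intro k hk
      have := kuhn_interior (R := R) φ m k (by simpa using hk)
      calc _ = (-1) ^ (k + 1) * ∑ ς : Perm (Fin (N + 1)),
            sg R ς * φ (fun j => path m ς (skip (k + 1) j)) := by
            rw [Finset.mul_sum]; apply Finset.sum_congr rfl; intros; ring
        _ = 0 := by rw [this, mul_zero]
    rw [z, zero_add]
    congr 1
    · apply Finset.sum_congr rfl
      intro ς _
      simp [skip]
    · apply Finset.sum_congr rfl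
      intro ς _
      have : φ (fun j => path m ς (skip (N + 1) j)) = φ (path m ς) := by
        apply hφ
        intro j hj
        simp only [skip]
        rw [if_pos (by omega)]
      rw [this]; ring
  have h2 : ∀ m : Fin (N + 1) → ℕ,
      ∑ ς : Perm (Fin (N + 1)), sg R ς * φ (fun j => path m ς (j + 1)) =
      (-1) ^ N * ∑ ς : Perm (Fin (N + 1)), sg R ς *
        φ (path (fun d => m d + if d = ς.symm (Fin.last N) then 1 else 0) ς) := by
    intro m
    rw [← Equiv.sum_comp (Equiv.mulLeft (finRotate (N + 1))), Finset.mul_sum]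
    apply Finset.sum_congr rfl
    intro ς _
    simp only [Equiv.coe_mulLeft]
    have hs : sg R (finRotate (N + 1)) = (-1) ^ N := by
      simp [sg, sign_finRotate]
    rw [sg_mul, hs, mul_assoc]
    congr 2
    apply hφ
    intro j hj
    funext c
    simp only [path]
    by_cases h : ς c = Fin.last N
    · have hc : c = ς.symm (Fin.last N) := by rw [← h]; simp
      have hv : ((finRotate (N + 1) * ς) c : ℕ) = 0 := by
        rw [Perm.mul_apply, h, finRotate_last]; rfl
      have hw : (ς c : ℕ) = N := by rw [h]; rfl
      rw [if_pos hc]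
      split_ifs <;> omega
    · have hc : ¬ c = ς.symm (Fin.last N) := by
        intro h'; apply h; rw [h']; simp
      have hlt : (ς c : ℕ) < N := by
        have := (ς c).2
        have h3 : (ς c : ℕ) ≠ N := fun h4 => h (Fin.ext h4)
        omega
      have hv : ((finRotate (N + 1) * ς) c : ℕ) = ς c + 1 := by
        rw [Perm.mul_apply]
        have : finRotate (N + 1) (ς c) = ⟨(ς c : ℕ) + 1, by omega⟩ := finRotate_of_lt hlt
        rw [this]
      rw [if_neg hc]
      split_ifs <;> omega
  simp only [h1, h2]
  rw [Finset.sum_add_distrib, ← Finset.mul_sum, ← Finset.mul_sum, Finset.sum_comm,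
    Finset.sum_comm (s := box L (N + 1)), pow_succ]
  have : ∀ A B C : R, A - B = C → (-1 : R) ^ N * A + (-1) ^ N * (-1) * B = (-1) ^ N * C := by
    intro A B C h; rw [← h]; ring
  apply this
  rw [← Finset.sum_sub_distrib]
  apply Finset.sum_congr rfl
  intro ς _
  rw [← Finset.mul_sum, ← Finset.mul_sum, ← mul_sub, ← Finset.sum_sub_distrib]
  congr 1
  exact box_telescope L hL (ς.symm (Fin.last N)) (fun m => φ (path m ς))

end KTC

namespace KTC
open Finset Equiv

/-- block permutation -/
def blk {a b : ℕ} (s : Perm (Fin a)) (t : Perm (Fin b)) : Perm (Fin (a + b)) :=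
  finSumFinEquiv.permCongr (Perm.sumCongr s t)

theorem blk_castAdd {a b : ℕ} (s : Perm (Fin a)) (t : Perm (Fin b)) (i : Fin a) :
    blk s t (Fin.castAdd b i) = Fin.castAdd b (s i) := by
  simp [blk, Equiv.permCongr_apply]

theorem blk_natAdd {a b : ℕ} (s : Perm (Fin a)) (t : Perm (Fin b)) (i : Fin b) :
    blk s t (Fin.natAdd a i) = Fin.natAdd a (t i) := by
  simp [blk, Equiv.permCongr_apply]

theorem sg_blk (R : Type*) [CommRing R] {a b : ℕ} (s : Perm (Fin a)) (t : Perm (Fin b)) :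
    sg R (blk s t) = sg R s * sg R t := by
  simp [sg, blk, Perm.sign_permCongr, Perm.sign_sumCongr]

theorem blk_inj {a b : ℕ} :
    Function.Injective (fun q : Perm (Fin a) × Perm (Fin b) => blk q.1 q.2) := by
  rintro ⟨s, t⟩ ⟨s', t'⟩ h
  simp only at h
  ext i
  · have := congrArg (fun w => w (Fin.castAdd b i)) h
    simp only [blk_castAdd] at this
    simpa using congrArg Fin.val this
  · have := congrArg (fun w => w (Fin.natAdd a i)) h
    simp only [blk_natAdd] at this
    simpa using congrArg Fin.val this

theorem exists_blk {a b : ℕ} (ς : Perm (Fin (a + b)))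
    (h : ∀ i : Fin a, (ς (Fin.castAdd b i) : ℕ) < a) : ∃ s t, ς = blk s t := by
  have hm : Set.MapsTo (finSumFinEquiv.symm.permCongr ς) (Set.range Sum.inl)
      (Set.range Sum.inl) := by
    rintro _ ⟨i, rfl⟩
    refine ⟨⟨ς (Fin.castAdd b i), h i⟩, ?_⟩
    rw [Equiv.permCongr_apply, Equiv.eq_symm_apply]
    simp
  obtain ⟨⟨s, t⟩, hst⟩ := Equiv.Perm.mem_sumCongrHom_range_of_perm_mapsTo_inl hm
  refine ⟨s, t, ?_⟩
  rw [blk]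
  have h2 : Perm.sumCongr s t = finSumFinEquiv.symm.permCongr ς := hst
  rw [h2]
  ext; simp [Equiv.permCongr_apply]

theorem sum_blk {R : Type*} [CommRing R] {a b : ℕ} (f : Perm (Fin (a + b)) → R)
    (h : ∀ ς, f ς ≠ 0 → ∀ i : Fin a, (ς (Fin.castAdd b i) : ℕ) < a) :
    ∑ ς, f ς = ∑ s : Perm (Fin a), ∑ t : Perm (Fin b), f (blk s t) := by
  rw [← Fintype.sum_prod_type']
  symm
  apply Fintype.sum_of_injective _ blk_inj
  · intro ς hς
    by_contra h0
    obtain ⟨s, t, rfl⟩ := exists_blk ς (h ς h0)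
    exact hς ⟨(s, t), rfl⟩
  · intro x; rfl

theorem sum_box_append {R : Type*} [CommRing R] {a b L : ℕ} (f : (Fin (a + b) → ℕ) → R) :
    ∑ m ∈ box L (a + b), f m = ∑ m₁ ∈ box L a, ∑ m₂ ∈ box L b, f (Fin.append m₁ m₂) := by
  rw [← Finset.sum_product']
  symm
  apply Finset.sum_nbij' (fun q => Fin.append q.1 q.2)
    (fun m => (fun i => m (Fin.castAdd b i), fun i => m (Fin.natAdd a i)))
  · rintro ⟨m1, m2⟩ h
    simp only [Finset.mem_product, mem_box] at h ⊢
    intro c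
    refine Fin.addCases (fun i => ?_) (fun i => ?_) c
    · simpa using h.1 i
    · simpa using h.2 i
  · intro m h
    simp only [Finset.mem_product, mem_box] at h ⊢
    exact ⟨fun c => h _, fun c => h _⟩
  · rintro ⟨m1, m2⟩ h
    simp
  · intro m h
    exact Fin.append_castAdd_natAdd
  · intro m h; rfl

theorem path_blk_fst {a b : ℕ} (m₁ : Fin a → ℕ) (m₂ : Fin b → ℕ) (s : Perm (Fin a))
    (t : Perm (Fin b)) (j : ℕ) :
    (fun c => path (Fin.append m₁ m₂) (blk s t) j (Fin.castAdd b c)) = path m₁ s j := by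
  funext c
  simp [path, blk_castAdd]

theorem path_blk_shift {a b : ℕ} (m₁ : Fin a → ℕ) (m₂ : Fin b → ℕ) (s : Perm (Fin a))
    (t : Perm (Fin b)) (j : ℕ) :
    path (Fin.append m₁ m₂) (blk s t) (a + j) =
      Fin.append (fun c => m₁ c + 1) (path m₂ t j) := by
  funext c
  refine Fin.addCases (fun i => ?_) (fun i => ?_) c
  · simp only [path, blk_castAdd, Fin.append_left, Fin.val_castAdd]
    rw [if_pos (by have := (s i).2; omega)]
  · simp [path, blk_natAdd]

/-- a path is degenerate at coordinates not moved -/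
theorem path_step {N : ℕ} (m : Fin N → ℕ) (ς : Perm (Fin N)) (j : ℕ) (c : Fin N)
    (h : (ς c : ℕ) ≠ j) : path m ς j c = path m ς (j + 1) c := by
  simp only [path]
  split_ifs <;> omega

theorem step_of_ne {a b : ℕ} {X R : Type*} [CommRing R] (A : (ℕ → X) → R) (n o : ℕ) (hA : Nrm n A)
    (f : (Fin a → ℕ) → X) (ι : Fin a → Fin b)
    (m : Fin b → ℕ) (ς : Perm (Fin b))
    (h : A (fun j => f (fun c => path m ς (o + j) (ι c))) ≠ 0) (i : ℕ) (hi : i < n) :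
    ∃ c, (ς (ι c) : ℕ) = o + i := by
  by_contra hc
  push Not at hc
  apply h
  apply hA
  refine ⟨i, hi, ?_⟩
  congr 1
  funext c
  exact path_step m ς (o + i) (ι c) (hc c)

theorem perm_fst_block {a b : ℕ} (ς : Perm (Fin (a + b)))
    (h : ∀ i < a, ∃ c : Fin a, (ς (Fin.castAdd b c) : ℕ) = i) (c : Fin a) :
    (ς (Fin.castAdd b c) : ℕ) < a := by
  choose f hf using fun i : Fin a => h i i.2
  have hinj : Function.Injective f := by
    intro i j hij
    have h1 := hf i
    rw [hij, hf j] at h1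
    exact Fin.ext h1.symm
  obtain ⟨i, rfl⟩ := (Finite.injective_iff_surjective.mp hinj) c
  rw [hf]; exact i.2

theorem block_prod {X R : Type*} [CommRing R] {a b L : ℕ} (A : (ℕ → X) → R) (hA : Nrm a A)
    (f : (Fin a → ℕ) → X)
    (C : (ℕ → (Fin (a + b) → ℕ)) → R) :
    ∑ ς : Perm (Fin (a + b)), sg R ς * ∑ m ∈ box L (a + b),
      A (fun j => f (fun c => path m ς j (Fin.castAdd b c))) * C (fun j => path m ς (a + j)) =
    ∑ s : Perm (Fin a), sg R s * ∑ m₁ ∈ box L a, A (fun j => f (path m₁ s j)) *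
      ∑ t : Perm (Fin b), sg R t * ∑ m₂ ∈ box L b,
        C (fun j => Fin.append (fun c => m₁ c + 1) (path m₂ t j)) := by
  rw [sum_blk]
  · apply Finset.sum_congr rfl
    intro s _
    simp only [sum_box_append, path_blk_fst, path_blk_shift, sg_blk, Finset.mul_sum]
    rw [Finset.sum_comm]
    apply Finset.sum_congr rfl
    intro m1 _
    apply Finset.sum_congr rfl
    intro t _
    apply Finset.sum_congr rfl
    intro m2 _
    ring
  · intro ς hς
    have : ∃ m ∈ box L (a + b), A (fun j => f (fun c => path m ς j (Fin.castAdd b c))) ≠ 0 := by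
      by_contra hcon
      push Not at hcon
      apply hς
      rw [Finset.sum_eq_zero, mul_zero]
      intro m hm
      rw [hcon m hm, zero_mul]
    obtain ⟨m, -, hm⟩ := this
    apply perm_fst_block
    intro i hi
    have := step_of_ne A a 0 hA f (Fin.castAdd b) m ς (by simpa using hm) i hi
    simpa using this

end KTC

namespace KTC
open Finset Equiv

theorem sum_box_one {R : Type*} [CommRing R] {L : ℕ} (hL : 0 < L) (f : (Fin 1 → ℕ) → R) :
    ∑ m ∈ box L 1, (if m 0 = 0 then f m else 0) = f (fun _ => 0) := by
  rw [Finset.sum_eq_single (fun _ => 0)]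
  · simp
  · intro m _ hm
    rw [if_neg]
    intro h
    apply hm
    funext i
    rw [Subsingleton.elim i 0, h]
  · intro h
    exact absurd (mem_box.mpr (fun _ => hL)) h

theorem stokes_face {R : Type*} [CommRing R] {N : ℕ} (L : ℕ) (hL : 0 < L)
    (φ : (ℕ → (Fin (N + 1) → ℕ)) → R) (hφ : Dep N φ)
    (h0 : ∀ m ∈ box L (N + 1), ∀ ς, dlt N φ (path m ς) = 0)
    (hside : ∀ ς : Perm (Fin (N + 1)), ς.symm (Fin.last N) ≠ Fin.last N →
      ∑ m ∈ (box L (N + 1)).filter (fun m => m (ς.symm (Fin.last N)) = 0),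
        (φ (path (fun d => m d + if d = ς.symm (Fin.last N) then L else 0) ς) - φ (path m ς)) = 0) :
    ∑ ς : Perm (Fin N), sg R ς * ∑ m ∈ box L N,
      (φ (fun j => Fin.append (path m ς j) (fun _ : Fin 1 => L)) -
        φ (fun j => Fin.append (path m ς j) (fun _ : Fin 1 => 0))) = 0 := by
  have hst := stokes L hL φ hφ
  rw [Finset.sum_eq_zero (fun m hm => Finset.sum_eq_zero
    (fun ς _ => by rw [h0 m hm, mul_zero]))] at hst
  have hz : ∑ ς : Perm (Fin (N + 1)), sg R ς * ∑ m ∈ (box L (N + 1)).filter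
      (fun m => m (ς.symm (Fin.last N)) = 0),
        (φ (path (fun d => m d + if d = ς.symm (Fin.last N) then L else 0) ς) -
          φ (path m ς)) = 0 := by
    have hu : IsUnit ((-1 : R) ^ N) := (isUnit_one.neg).pow N
    exact (hu.mul_right_eq_zero).mp hst.symm
  rw [sum_blk (a := N) (b := 1)] at hz
  · rw [← hz]
    apply Finset.sum_congr rfl
    intro s _
    rw [Finset.sum_eq_single (1 : Perm (Fin 1)) (fun b _ hb => absurd (Subsingleton.elim _ _) hb)
      (fun h => absurd (Finset.mem_univ _) h)]
    have hlast : Fin.last N = Fin.natAdd N (0 : Fin 1) := by ext; simp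
    have hs : (blk s (1 : Perm (Fin 1))).symm (Fin.last N) = Fin.last N := by
      rw [Equiv.symm_apply_eq, hlast, blk_natAdd]; rfl
    rw [sg_blk, hs]
    simp only [sg, Perm.sign_one, Units.val_one, Int.cast_one, mul_one]
    congr 1
    rw [Finset.sum_filter, sum_box_append]
    apply Finset.sum_congr rfl
    intro m _
    have := sum_box_one (R := R) hL (fun m2 => φ (path (fun d => Fin.append m m2 d +
      if d = Fin.last N then L else 0) (blk s 1)) - φ (path (Fin.append m m2) (blk s 1)))
    simp only [hlast, Fin.append_right]
    simp only [hlast] at this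
    rw [this]
    congr 1
    · apply hφ
      intro j hj
      funext c
      refine Fin.addCases (fun i => ?_) (fun i => ?_) c
      · have : Fin.castAdd 1 i ≠ Fin.natAdd N (0 : Fin 1) := by
          intro h; have := congrArg Fin.val h; have := i.2; simp at *; omega
        simp [path, blk_castAdd, this]
      · have h2 := Subsingleton.elim i 0
        subst h2
        simp [path, blk_natAdd, hj]
    · apply hφ
      intro j hj
      funext c
      refine Fin.addCases (fun i => ?_) (fun i => ?_) c
      · simp [path, blk_castAdd]
      · have h2 := Subsingleton.elim i 0
        subst h2
        simp [path, blk_natAdd, hj]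
  · intro ς hς i
    have hl : ς.symm (Fin.last N) = Fin.last N := by
      by_contra h
      exact hς (by rw [hside ς h, mul_zero])
    have h1 : ς (Fin.last N) = Fin.last N := by rw [Equiv.symm_apply_eq] at hl; exact hl.symm
    have h2 : ς (Fin.castAdd 1 i) ≠ Fin.last N := by
      rw [← h1]
      intro h
      have := congrArg Fin.val (ς.injective h)
      have := i.2
      simp at *; omega
    have h3 : (ς (Fin.castAdd 1 i) : ℕ) ≠ N := fun h => h2 (Fin.ext h)
    have := (ς (Fin.castAdd 1 i)).2
    omega

/-- the collapse of the product of jump functions. -/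
theorem susp_collapse {R : Type*} [CommRing R] {r L m0 : ℕ} (hm : m0 < L)
    (κ : ℕ → R) (hκ0 : ∀ m ≤ m0, κ m = 0) (hκ1 : ∀ m, m0 < m → κ m = 1)
    (D : (Fin r → ℕ) → R) :
    ∑ s : Perm (Fin r), sg R s * ∑ m ∈ box L r,
      (∏ i : Fin r, (κ (path m s (i + 1) i) - κ (path m s i i))) * D m = D (fun _ => m0) := by
  have key : ∀ (s : Perm (Fin r)) (m : Fin r → ℕ),
      (∏ i : Fin r, (κ (path m s (i + 1) i) - κ (path m s i i))) ≠ 0 → s = 1 ∧ m = fun _ => m0 := by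
    intro s m h
    have h1 : ∀ i : Fin r, κ (path m s (i + 1) i) - κ (path m s i i) ≠ 0 := by
      intro i hi
      exact h (Finset.prod_eq_zero (Finset.mem_univ i) hi)
    have h2 : ∀ i : Fin r, s i = i ∧ m i = m0 := by
      intro i
      have hs : (s i : ℕ) = i := by
        by_contra hne
        apply h1 i
        rw [path_step m s i i hne, sub_self]
      refine ⟨Fin.ext hs, ?_⟩
      have h3 := h1 i
      simp only [path, hs, lt_add_one, if_true, lt_self_iff_false, if_false, add_zero] at h3
      by_contra hne
      apply h3
      rcases lt_or_gt_of_ne hne with hlt | hgt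
      · rw [hκ0 _ (by omega), hκ0 _ (by omega), sub_self]
      · rw [hκ1 _ (by omega), hκ1 _ (by omega), sub_self]
    exact ⟨Equiv.ext fun i => (h2 i).1, funext fun i => (h2 i).2⟩
  rw [Finset.sum_eq_single (1 : Perm (Fin r))]
  · rw [Finset.sum_eq_single (fun _ => m0)]
    · simp only [sg, Perm.sign_one, Units.val_one, Int.cast_one, one_mul, path, Perm.one_apply,
        lt_add_one, if_true, lt_self_iff_false, if_false, add_zero]
      rw [hκ0 m0 le_rfl, hκ1 (m0 + 1) (by omega)]
      simp
    · intro m _ hne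
      by_contra h
      exact hne (key _ _ (left_ne_zero_of_mul h)).2
    · intro h
      exact absurd (mem_box.mpr (fun _ => hm)) h
  · intro s _ hs
    rw [Finset.sum_eq_zero, mul_zero]
    intro m _
    by_contra h
    exact hs (key _ _ (left_ne_zero_of_mul h)).1
  · intro h
    exact absurd (Finset.mem_univ _) h

/-- evaluation of a suspended cochain on a grid. -/
theorem susp_eval {R : Type*} [CommRing R] {r d L m0 : ℕ} (hm : m0 < L)
    (κ : ℕ → R) (hκ0 : ∀ m ≤ m0, κ m = 0) (hκ1 : ∀ m, m0 < m → κ m = 1)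
    (T : (ℕ → (Fin (r + d) → ℕ)) → R) :
    ∑ ς : Perm (Fin (r + d)), sg R ς * ∑ m ∈ box L (r + d),
      (∏ i : Fin r, (κ (path m ς (i + 1) (Fin.castAdd d i)) - κ (path m ς i (Fin.castAdd d i)))) *
        T (fun j => path m ς (r + j)) =
    ∑ t : Perm (Fin d), sg R t * ∑ m ∈ box L d,
        T (fun j => Fin.append (fun _ => m0 + 1) (path m t j)) := by
  have h := block_prod (R := R) (a := r) (b := d) (L := L)
    (fun x : ℕ → (Fin r → ℕ) => ∏ i : Fin r, (κ (x (i + 1) i) - κ (x i i)))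
    (by
      rintro x ⟨i, hi, hx⟩
      exact Finset.prod_eq_zero (Finset.mem_univ ⟨i, hi⟩) (by simp [hx]))
    (fun m => m) T
  simp only at h
  rw [h, susp_collapse hm κ hκ0 hκ1 (fun m₁ => ∑ t : Perm (Fin d), sg R t * ∑ m ∈ box L d,
        T (fun j => Fin.append (fun c => m₁ c + 1) (path m t j)))]

end KTC

namespace KTC
open Finset Equiv

/-- grid integral -/
def gint {X R : Type*} [CommRing R] (L a : ℕ) (u : (ℕ → X) → R) (f : (Fin a → ℕ) → X) : R :=
  ∑ s : Perm (Fin a), sg R s * ∑ m ∈ box L a, u (fun j => f (path m s j))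

theorem card_steps {a b : ℕ} (ς : Perm (Fin b)) (n o : ℕ) (ι : Fin a → Fin b)
    (h : ∀ i < n, ∃ c, (ς (ι c) : ℕ) = o + i) : n ≤ a := by
  choose f hf using fun i : Fin n => h i i.2
  have hinj : Function.Injective f := by
    intro i j hij
    have h1 := hf i
    rw [hij, hf j] at h1
    exact Fin.ext (by omega)
  simpa using Fintype.card_le_of_injective f hinj

theorem main_term {X R : Type*} [CommRing R] {a b L : ℕ} (u v : (ℕ → X) → R) (hu : Nrm a u)
    (f : (Fin a → ℕ) → X) (g : (Fin b → ℕ) → X) :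
    ∑ ς : Perm (Fin (a + b)), sg R ς * ∑ m ∈ box L (a + b),
      u (fun j => f (fun c => path m ς j (Fin.castAdd b c))) *
      v (fun j => g (fun c => path m ς (a + j) (Fin.natAdd a c))) =
    gint L a u f * gint L b v g := by
  rw [block_prod u hu f (fun x => v (fun j => g (fun c => x j (Fin.natAdd a c))))]
  simp only [Fin.append_right, gint, ← Finset.sum_mul, ← mul_assoc]

theorem cross_terms {X R : Type*} [CommRing R] {a b L : ℕ} (ha : 0 < a) (hb : 0 < b)
    (u v : (ℕ → X) → R) (hu : Nrm a u) (hv : Nrm b v)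
    (f : (Fin a → ℕ) → X) (g : (Fin b → ℕ) → X) :
    ∑ ς : Perm (Fin (a + b)), sg R ς * ∑ m ∈ box L (a + b),
      ((u (fun j => f (fun c => path m ς j (Fin.castAdd b c))) -
        u (fun j => g (fun c => path m ς j (Fin.natAdd a c)))) *
      (v (fun j => f (fun c => path m ς (a + j) (Fin.castAdd b c))) -
       v (fun j => g (fun c => path m ς (a + j) (Fin.natAdd a c))))) =
    - (gint L a u f * gint L b v g) - ∑ ς : Perm (Fin (a + b)), sg R ς * ∑ m ∈ box L (a + b),
      u (fun j => g (fun c => path m ς j (Fin.natAdd a c))) *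
      v (fun j => f (fun c => path m ς (a + j) (Fin.castAdd b c))) := by
  rw [← main_term u v hu f g, ← Finset.sum_neg_distrib, ← Finset.sum_sub_distrib]
  apply Finset.sum_congr rfl
  intro ς _
  rw [← mul_neg, ← mul_sub, ← Finset.sum_neg_distrib, ← Finset.sum_sub_distrib]
  congr 1
  apply Finset.sum_congr rfl
  intro m _
  have h1 : u (fun j => f (fun c => path m ς j (Fin.castAdd b c))) *
      v (fun j => f (fun c => path m ς (a + j) (Fin.castAdd b c))) = 0 := by
    by_contra h
    have h1 := perm_fst_block ς (by
      intro i hi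
      simpa using step_of_ne u a 0 hu f (Fin.castAdd b) m ς
        (by simpa using left_ne_zero_of_mul h) i hi)
    obtain ⟨c, hc⟩ := step_of_ne v b a hv f (Fin.castAdd b) m ς (right_ne_zero_of_mul h) 0 hb
    have := h1 c
    omega
  have h2 : u (fun j => g (fun c => path m ς j (Fin.natAdd a c))) *
      v (fun j => g (fun c => path m ς (a + j) (Fin.natAdd a c))) = 0 := by
    by_contra h
    have : a + b ≤ b := by
      apply card_steps ς (a + b) 0 (Fin.natAdd a : Fin b → Fin (a + b))
      intro i hi
      by_cases hia : i < a
      · exact step_of_ne u a 0 hu g (Fin.natAdd a) m ς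
          (by simpa using left_ne_zero_of_mul h) i hia
      · obtain ⟨c, hc⟩ := step_of_ne v b a hv g (Fin.natAdd a) m ς
          (right_ne_zero_of_mul h) (i - a) (by omega)
        exact ⟨c, by omega⟩
    omega
  have : ∀ p q r s : R, p * r = 0 → q * s = 0 → (p - q) * (r - s) = -(p * s) - q * r := by
    intro p q r s h1 h2
    linear_combination h1 + h2
  exact this _ _ _ _ h1 h2

theorem cross_lt {X R : Type*} [CommRing R] {a b L : ℕ} (hab : a < b)
    (u v : (ℕ → X) → R) (hv : Nrm b v)
    (f : (Fin a → ℕ) → X) (g : (Fin b → ℕ) → X) :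
    ∑ ς : Perm (Fin (a + b)), sg R ς * ∑ m ∈ box L (a + b),
      u (fun j => g (fun c => path m ς j (Fin.natAdd a c))) *
      v (fun j => f (fun c => path m ς (a + j) (Fin.castAdd b c))) = 0 := by
  apply Finset.sum_eq_zero
  intro ς _
  rw [Finset.sum_eq_zero, mul_zero]
  intro m _
  by_contra h
  have := card_steps ς b a (Fin.castAdd b)
    (fun i hi => step_of_ne v b a hv f (Fin.castAdd b) m ς (right_ne_zero_of_mul h) i hi)
  omega

/-- swap of two blocks -/
def bswap (k : ℕ) : Perm (Fin (k + k)) := finSumFinEquiv.permCongr (Equiv.sumComm (Fin k) (Fin k))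

theorem bswap_castAdd (k : ℕ) (i : Fin k) : bswap k (Fin.castAdd k i) = Fin.natAdd k i := by
  simp [bswap, Equiv.permCongr_apply]

theorem bswap_natAdd (k : ℕ) (i : Fin k) : bswap k (Fin.natAdd k i) = Fin.castAdd k i := by
  rw [bswap, Equiv.permCongr_apply, finSumFinEquiv_symm_apply_natAdd]; rfl

theorem sign_bswap {k : ℕ} (hk : Even k) : Perm.sign (bswap k) = 1 := by
  rw [bswap, Perm.sign_permCongr]
  have h : Perm.sign (Equiv.sumComm (Fin k) (Fin k) : Perm (Fin k ⊕ Fin k)) =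
      Perm.sign (prodCongrRight (fun _ : Fin k => Equiv.swap false true)) := by
    apply Perm.sign_eq_sign_of_equiv _ _
      ((Equiv.boolProdEquivSum (Fin k)).symm.trans (Equiv.prodComm _ _))
    rintro (x | x) <;> simp [boolProdEquivSum, prodCongrRight]
  rw [h, Perm.sign_prodCongrRight]
  simp [hk.neg_one_pow]

theorem cross_eq {X R : Type*} [CommRing R] {k L : ℕ} (hk : Even k)
    (u : (ℕ → X) → R) (hu : Nrm k u) (f : (Fin k → ℕ) → X) :
    ∑ ς : Perm (Fin (k + k)), sg R ς * ∑ m ∈ box L (k + k),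
      u (fun j => f (fun c => path m ς j (Fin.natAdd k c))) *
      u (fun j => f (fun c => path m ς (k + j) (Fin.castAdd k c))) =
    gint L k u f * gint L k u f := by
  rw [← main_term u u hu f f, ← Equiv.sum_comp (Equiv.mulRight (bswap k))]
  apply Finset.sum_congr rfl
  intro ς _
  simp only [Equiv.coe_mulRight]
  rw [sg_mul]
  have : sg R (bswap k) = 1 := by simp [sg, sign_bswap hk]
  rw [this, mul_one]
  congr 1
  have hinv : ∀ c, bswap k (bswap k c) = c := by
    intro c
    refine Fin.addCases (fun i => ?_) (fun i => ?_) c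
    · rw [bswap_castAdd, bswap_natAdd]
    · rw [bswap_natAdd, bswap_castAdd]
  apply Finset.sum_nbij' (fun m => m ∘ bswap k) (fun m => m ∘ bswap k)
  · intro m hm
    rw [mem_box] at hm ⊢
    intro c; exact hm _
  · intro m hm
    rw [mem_box] at hm ⊢
    intro c; exact hm _
  · intro m _
    funext c
    simp [hinv]
  · intro m _
    funext c
    simp [hinv]
  · intro m _
    simp only [path, Function.comp, Perm.mul_apply, bswap_castAdd, bswap_natAdd]

end KTC

namespace KTC
open Finset Equiv

theorem periodic_sum {R : Type*} [CommRing R] {M L l q : ℕ} (hL : L = q * l) (hl : 0 < l)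
    (hq : (q : R) = 0) (s : Finset (Fin M → ℕ)) (c : Fin M) (hs : ∀ m ∈ s, m c < L)
    (hs' : ∀ m ∈ s, ∀ v < L, Function.update m c v ∈ s) (f : (Fin M → ℕ) → R)
    (hf : ∀ m ∈ s, m c + l < L → f (Function.update m c (m c + l)) = f m) :
    ∑ m ∈ s, f m = 0 := by
  have hlL : ∀ i < q, ∀ x < l, x + i * l < L := by
    intro i hi x hx
    rw [hL]
    calc x + i * l < l + i * l := by omega
      _ = (i + 1) * l := by ring
      _ ≤ q * l := Nat.mul_le_mul_right _ hi
  have hstep : ∀ b ∈ s, b c < l → ∀ i < q, f (Function.update b c (b c + i * l)) = f b := by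
    intro b hb hbl i
    induction i with
    | zero => intro _; simp
    | succ i ih =>
      intro hi
      have h1 := hlL i (by omega) _ hbl
      have h2 := hlL (i + 1) hi _ hbl
      have h3 := hf _ (hs' b hb _ h1) (by simp only [Function.update_self]; linarith)
      simp only [Function.update_self, Function.update_idem] at h3
      rw [← ih (by omega), ← h3]
      congr 2
      ring
  have hmap : ∀ m ∈ s, Function.update m c (m c % l) ∈ s.filter (fun b => b c < l) := by
    intro m hm
    rw [Finset.mem_filter]
    refine ⟨hs' m hm _ ?_, ?_⟩
    · exact lt_of_le_of_lt (Nat.mod_le _ _) (hs m hm)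
    · simp [Nat.mod_lt _ hl]
  rw [← Finset.sum_fiberwise_of_maps_to hmap]
  apply Finset.sum_eq_zero
  intro b hb
  rw [Finset.mem_filter] at hb
  have hinj : Set.InjOn (fun i : ℕ => Function.update b c (b c + i * l)) (Finset.range q : Set ℕ) := by
    intro i _ j _ hij
    have := congrFun hij c
    simp only [Function.update_self] at this
    have h2 : i * l = j * l := by omega
    exact Nat.eq_of_mul_eq_mul_right hl h2
  have hfib : s.filter (fun m => Function.update m c (m c % l) = b) =
      (range q).image (fun i => Function.update b c (b c + i * l)) := by
    ext m
    simp only [Finset.mem_filter, Finset.mem_image, Finset.mem_range]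
    constructor
    · rintro ⟨hm, h⟩
      refine ⟨m c / l, ?_, ?_⟩
      · rw [Nat.div_lt_iff_lt_mul hl, ← hL]; exact hs m hm
      · rw [← h]
        simp only [Function.update_self, Function.update_idem]
        rw [Nat.mod_add_div' (m c) l]
        simp
    · rintro ⟨i, hi, rfl⟩
      refine ⟨hs' b hb.1 _ (hlL i hi _ hb.2), ?_⟩
      simp only [Function.update_self, Function.update_idem]
      rw [Nat.add_mul_mod_self_right, Nat.mod_eq_of_lt hb.2]
      simp
  rw [hfib, Finset.sum_image hinj]
  rw [Finset.sum_congr rfl (fun i hi => hstep b hb.1 hb.2 i (Finset.mem_range.mp hi))]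
  simp [hq]

/-- A face condition. -/
def Killed (R : Type*) [CommRing R] {G Z : Type*} (act : G → Z → Z) (q : ℕ) {N : ℕ}
    (P : (Fin N → ℝ) → Z) (j : Fin N) (e : ℝ) : Prop :=
  ∃ j', j' ≠ j ∧
    ((∀ t t' : Fin N → ℝ, (∀ i, i ≠ j' → t' i = t i) → t j = e → P t' = P t) ∨
    ((q : R) = 0 ∧ ∃ g, ∀ t t' : Fin N → ℝ, (∀ i, i ≠ j' → t' i = t i) → t j = e →
      t' j' = t j' + 1 / q → P t' = act g (P t)))

/-- Boundary condition on a singular cube. -/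
def BdOK (R : Type*) [CommRing R] {G Z : Type*} (act : G → Z → Z) (q : ℕ) {N : ℕ}
    (P : (Fin N → ℝ) → Z) : Prop :=
  ∀ j, (∃ g, ∀ t t' : Fin N → ℝ, (∀ i, i ≠ j → t' i = t i) → t j = 0 → t' j = 1 →
      P t' = act g (P t)) ∨ (Killed R act q P j 0 ∧ Killed R act q P j 1)

/-- sequences of grid points that are close to each other -/
def GS {M : ℕ} (L : ℕ) (x : ℕ → Fin M → ℕ) : Prop :=
  (∀ j c, x j c ≤ L) ∧ ∀ i j c, x i c ≤ x j c + 1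

/-- grid map -/
noncomputable def gridm {Z : Type*} {N : ℕ} (L : ℕ) (z : (Fin N → ℝ) → Z) (m : Fin (N + 1) → ℕ) :
    Z × ℝ :=
  (z (fun c => (m (Fin.castSucc c) : ℝ) / L), (m (Fin.last N) : ℝ) / L)

theorem GS_path {M : ℕ} {L : ℕ} {m : Fin M → ℕ} (hm : m ∈ box L M) (ς : Perm (Fin M)) :
    GS L (path m ς) := by
  rw [mem_box] at hm
  refine ⟨fun j c => ?_, fun i j c => ?_⟩
  · simp only [path]; have := hm c; split_ifs <;> omega
  · simp only [path]; split_ifs <;> omega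

theorem grid_stokes {R G Z : Type*} [CommRing R] (act : G → Z → Z) {N L q : ℕ} (hL : 0 < L)
    (hqL : q ∣ L) (z : (Fin N → ℝ) → Z) (hz : BdOK R act q z)
    (Φ : (ℕ → Z × ℝ) → R) (hD : Dep N Φ) (hN : Nrm N Φ) (S : (ℕ → Z × ℝ) → Prop)
    (hS : ∀ x, GS L x → S (fun j => gridm L z (x j)))
    (hcl : ∀ x, S x → dlt N Φ x = 0)
    (hinv : ∀ x y g, S x → S y → (∀ j, y j = (act g (x j).1, (x j).2)) → Φ y = Φ x) :
    ∑ ς : Perm (Fin N), sg R ς * ∑ m ∈ box L N,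
      (Φ (fun j => (z (fun c => (path m ς j c : ℝ) / L), 1)) -
        Φ (fun j => (z (fun c => (path m ς j c : ℝ) / L), 0))) = 0 := by
  have hL0 : (L : ℝ) ≠ 0 := by positivity
  have h := stokes_face L hL (fun x => Φ (fun j => gridm L z (x j))) ?_ ?_ ?_
  · rw [← h]
    apply Finset.sum_congr rfl
    intro ς _
    congr 1
    apply Finset.sum_congr rfl
    intro m _
    have hlast : Fin.last N = Fin.natAdd N (0 : Fin 1) := by ext; simp
    have hcs : ∀ c : Fin N, Fin.castSucc c = Fin.castAdd 1 c := fun c => rfl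
    simp only [gridm, hlast, hcs, Fin.append_left, Fin.append_right]
    simp [div_self hL0]
  · intro x y hxy
    apply hD
    intro j hj
    simp only [hxy j hj]
  · intro m hm ς
    exact hcl _ (hS _ (GS_path hm ς))
  · intro ς hς
    -- reduce to truncated paths
    set c := ς.symm (Fin.last N) with hc
    have hςc : (ς c : ℕ) = N := by rw [hc]; simp
    have htr : ∀ m : Fin (N + 1) → ℕ, Φ (fun j => gridm L z (path m ς j)) =
        Φ (fun j => gridm L z (path m ς (min j N))) := by
      intro m
      apply hD
      intro j hj
      simp only [min_eq_left hj]
    have hGS : ∀ m : Fin (N + 1) → ℕ, (∀ d, d ≠ c → m d < L) → m c ≤ L →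
        GS L (fun j => path m ς (min j N)) := by
      intro m hm hm'
      refine ⟨fun j d => ?_, fun i j d => ?_⟩
      · simp only [path]
        by_cases hd : d = c
        · subst hd; rw [if_neg (by omega)]; simpa using hm'
        · have := hm d hd; split_ifs <;> omega
      · simp only [path]; split_ifs <;> omega
    obtain ⟨j, hj⟩ : ∃ j : Fin N, c = Fin.castSucc j := by
      have : (c : ℕ) ≠ N := fun h => hς (Fin.ext h)
      exact ⟨⟨c, by have := c.2; omega⟩, rfl⟩
    rcases hz j with ⟨g, hg⟩ | ⟨hk0, hk1⟩
    · apply Finset.sum_eq_zero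
      intro m hm
      rw [Finset.mem_filter, mem_box] at hm
      rw [htr, htr, sub_eq_zero]
      apply hinv _ _ g
      · exact hS _ (hGS m (fun d _ => hm.1 d) (by omega))
      · apply hS _ (hGS _ _ _)
        · intro d hd; rw [if_neg hd]; exact hm.1 d
        · rw [if_pos rfl, hm.2]; omega
      · intro i
        have hi : min i N ≤ N := min_le_right _ _
        simp only [gridm]
        ext1
        · apply hg
          · intro d hd
            have : Fin.castSucc d ≠ c := by
              rw [hj]; exact fun h => hd (Fin.castSucc_injective _ h)
            simp only [path, if_neg this, add_zero]
          · rw [← hj]; simp only [path]; rw [if_neg (by omega), hm.2]; simp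
          · rw [← hj]; simp only [path, if_pos]; rw [if_neg (by omega), hm.2]; simp [hL0]
        · simp only [path, if_neg (Ne.symm hς), add_zero]
    · have hkill : ∀ E : ℕ, E = 0 ∨ E = L → Killed R act q z j ((E : ℝ) / L) →
          ∑ m ∈ (box L (N + 1)).filter (fun m => m c = 0),
          Φ (fun i => gridm L z (path (fun d => m d + if d = c then E else 0) ς i)) = 0 := by
        rintro E hE ⟨j', hj', hdeg | ⟨hq, g, hper⟩⟩
        · apply Finset.sum_eq_zero
          intro m hm
          rw [Finset.mem_filter, mem_box] at hm
          apply hN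
          have hne : Fin.castSucc j' ≠ c := by
              rw [hj]; exact fun h => hj' (Fin.castSucc_injective _ h)
          have hlt : (ς (Fin.castSucc j') : ℕ) ≠ N := by
            intro h; exact hne (ς.injective (Fin.ext (h.trans hςc.symm)))
          have hlt2 := (ς (Fin.castSucc j')).2
          refine ⟨ς (Fin.castSucc j'), by omega, ?_⟩
          have hoth : ∀ d, d ≠ Fin.castSucc j' → (ς d : ℕ) ≠ ς (Fin.castSucc j') := by
            intro d hd h; exact hd (ς.injective (Fin.ext h))
          simp only [gridm]
          ext1
          · symm
            apply hdeg
            · intro i hi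
              rw [path_step _ _ _ _ (hoth _ (fun h => hi (Fin.castSucc_injective _ h)))]
            · rw [← hj]; simp only [path, if_pos]; rw [if_neg (by omega), hm.2]; simp
          · rw [← path_step _ _ _ _ (hoth _ (Fin.castSucc_ne_last j').symm)]
        · obtain ⟨l, hl⟩ := hqL
          have hl0 : 0 < l := by
            rcases Nat.eq_zero_or_pos l with h | h
            · subst h; omega
            · exact h
          have hq0 : (q : ℝ) ≠ 0 := by
            have : q ≠ 0 := by rintro rfl; omega
            exact_mod_cast this
          have hl0' : (l : ℝ) ≠ 0 := by positivity
          have hne : Fin.castSucc j' ≠ c := by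
              rw [hj]; exact fun h => hj' (Fin.castSucc_injective _ h)
          apply periodic_sum hl hl0 hq _ (Fin.castSucc j')
          · intro m hm
            rw [Finset.mem_filter, mem_box] at hm
            exact hm.1 _
          · intro m hm v hv
            rw [Finset.mem_filter, mem_box] at hm ⊢
            refine ⟨fun d => ?_, ?_⟩
            · by_cases hd : d = Fin.castSucc j'
              · subst hd; simpa using hv
              · rw [Function.update_of_ne hd]; exact hm.1 d
            · rw [Function.update_of_ne hne.symm]; exact hm.2
          · intro m hm hml
            rw [Finset.mem_filter, mem_box] at hm
            rw [htr, htr]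
            apply hinv _ _ g
            · apply hS _ (hGS _ _ _)
              · intro d hd; rw [if_neg hd]; exact hm.1 d
              · rw [if_pos rfl, hm.2]; omega
            · apply hS _ (hGS _ _ _)
              · intro d hd; rw [if_neg hd]
                by_cases hd : d = Fin.castSucc j'
                · subst hd; simpa using hml
                · rw [Function.update_of_ne hd]; exact hm.1 d
              · rw [if_pos rfl, Function.update_of_ne hne.symm, hm.2]; omega
            · intro i
              have hi : min i N ≤ N := min_le_right _ _
              simp only [gridm]
              ext1
              · apply hper
                · intro d hd
                  have : Fin.castSucc d ≠ Fin.castSucc j' :=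
                    fun h => hd (Fin.castSucc_injective _ h)
                  simp only [path, Function.update_of_ne this]
                · rw [← hj]; simp only [path, if_pos]; rw [if_neg (by omega), hm.2]; simp
                · simp only [path, Function.update_self, if_neg hne]
                  rw [hl]
                  push_cast
                  field_simp
                  ring
              · simp only [path, Function.update_of_ne (Fin.castSucc_ne_last j').symm]
      rw [Finset.sum_sub_distrib, hkill L (Or.inr rfl) (by rwa [div_self hL0])]
      have h0 := hkill 0 (Or.inl rfl) (by simpa using hk0)
      simp only [ite_self, add_zero] at h0
      rw [h0, sub_zero]

end KTC

namespace KTC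
open Finset Equiv

/-- product action -/
def pact {G X : Type*} (act : G → X → X) : G × G → X × X → X × X :=
  fun g p => (act g.1 p.1, act g.2 p.2)

theorem killed_fst {R G X : Type*} [CommRing R] (act : G → X → X) (e1 : G) (he : ∀ x, act e1 x = x)
    {q a b : ℕ} (P : (Fin a → ℝ) → X) (Q : (Fin b → ℝ) → X) (j : Fin a) (e : ℝ)
    (h : Killed R act q P j e) :
    Killed R (pact act) q (fun t : Fin (a + b) → ℝ =>
      (P (fun c => t (Fin.castAdd b c)), Q (fun c => t (Fin.natAdd a c)))) (Fin.castAdd b j) e := by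
  obtain ⟨j', hj', h⟩ := h
  have hQ : ∀ t t' : Fin (a + b) → ℝ, (∀ i, i ≠ Fin.castAdd b j' → t' i = t i) →
      (fun c => t' (Fin.natAdd a c)) = (fun c => t (Fin.natAdd a c)) := by
    intro t t' ht
    funext c
    apply ht
    intro h; have := congrArg Fin.val h; have := j'.2; simp at *; omega
  have hP : ∀ t t' : Fin (a + b) → ℝ, (∀ i, i ≠ Fin.castAdd b j' → t' i = t i) →
      ∀ i, i ≠ j' → t' (Fin.castAdd b i) = t (Fin.castAdd b i) := by
    intro t t' ht i hi
    apply ht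
    exact fun h => hi (Fin.castAdd_injective _ _ h)
  refine ⟨Fin.castAdd b j', fun h => hj' (Fin.castAdd_injective _ _ h), ?_⟩
  rcases h with h | ⟨hq, g, h⟩
  · left
    intro t t' ht hte
    simp only
    rw [hQ t t' ht, h _ _ (hP t t' ht) hte]
  · right
    refine ⟨hq, (g, e1), ?_⟩
    intro t t' ht hte htt
    simp only [pact]
    rw [hQ t t' ht, he, h _ _ (hP t t' ht) hte htt]

theorem killed_snd {R G X : Type*} [CommRing R] (act : G → X → X) (e1 : G) (he : ∀ x, act e1 x = x)
    {q a b : ℕ} (P : (Fin a → ℝ) → X) (Q : (Fin b → ℝ) → X) (j : Fin b) (e : ℝ)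
    (h : Killed R act q Q j e) :
    Killed R (pact act) q (fun t : Fin (a + b) → ℝ =>
      (P (fun c => t (Fin.castAdd b c)), Q (fun c => t (Fin.natAdd a c)))) (Fin.natAdd a j) e := by
  obtain ⟨j', hj', h⟩ := h
  have hQ : ∀ t t' : Fin (a + b) → ℝ, (∀ i, i ≠ Fin.natAdd a j' → t' i = t i) →
      (fun c => t' (Fin.castAdd b c)) = (fun c => t (Fin.castAdd b c)) := by
    intro t t' ht
    funext c
    apply ht
    intro h; have := congrArg Fin.val h; have := c.2; simp at *; omega
  have hP : ∀ t t' : Fin (a + b) → ℝ, (∀ i, i ≠ Fin.natAdd a j' → t' i = t i) →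
      ∀ i, i ≠ j' → t' (Fin.natAdd a i) = t (Fin.natAdd a i) := by
    intro t t' ht i hi
    apply ht
    exact fun h => hi (Fin.natAdd_injective _ _ h)
  refine ⟨Fin.natAdd a j', fun h => hj' (Fin.natAdd_injective _ _ h), ?_⟩
  rcases h with h | ⟨hq, g, h⟩
  · left
    intro t t' ht hte
    simp only
    rw [hQ t t' ht, h _ _ (hP t t' ht) hte]
  · right
    refine ⟨hq, (e1, g), ?_⟩
    intro t t' ht hte htt
    simp only [pact]
    rw [hQ t t' ht, he, h _ _ (hP t t' ht) hte htt]

theorem bdOK_prod {R G X : Type*} [CommRing R] (act : G → X → X) (e1 : G) (he : ∀ x, act e1 x = x)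
    {q a b : ℕ} (P : (Fin a → ℝ) → X) (Q : (Fin b → ℝ) → X)
    (hP : BdOK R act q P) (hQ : BdOK R act q Q) :
    BdOK R (pact act) q (fun t : Fin (a + b) → ℝ =>
      (P (fun c => t (Fin.castAdd b c)), Q (fun c => t (Fin.natAdd a c)))) := by
  intro j
  refine Fin.addCases (fun j => ?_) (fun j => ?_) j
  · rcases hP j with ⟨g, hg⟩ | ⟨h0, h1⟩
    · left
      refine ⟨(g, e1), fun t t' ht h0 h1 => ?_⟩
      have hQ' : (fun c => t' (Fin.natAdd a c)) = (fun c => t (Fin.natAdd a c)) := by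
        funext c
        apply ht
        intro h; have := congrArg Fin.val h; have := j.2; simp at *; omega
      simp only [pact]
      rw [hQ', he, hg _ _ (fun i hi => ht _ (fun h => hi (Fin.castAdd_injective _ _ h))) h0 h1]
    · exact Or.inr ⟨killed_fst act e1 he P Q j 0 h0, killed_fst act e1 he P Q j 1 h1⟩
  · rcases hQ j with ⟨g, hg⟩ | ⟨h0, h1⟩
    · left
      refine ⟨(e1, g), fun t t' ht h0 h1 => ?_⟩
      have hQ' : (fun c => t' (Fin.castAdd b c)) = (fun c => t (Fin.castAdd b c)) := by
        funext c
        apply ht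
        intro h; have := congrArg Fin.val h; have := c.2; simp at *; omega
      simp only [pact]
      rw [hQ', he, hg _ _ (fun i hi => ht _ (fun h => hi (Fin.natAdd_injective _ _ h))) h0 h1]
    · exact Or.inr ⟨killed_snd act e1 he P Q j 0 h0, killed_snd act e1 he P Q j 1 h1⟩

/-- Homotopy data extracted from a cover by two sets. -/
structure HData {G X : Type*} [TopologicalSpace X] (act : G → X → X) where
  F1 : (X × X) × ℝ → X
  F2 : (X × X) × ℝ → X
  H1 : (X × X) × ℝ → X
  H2 : (X × X) × ℝ → X
  cF1 : Continuous F1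
  cF2 : Continuous F2
  cH1 : Continuous H1
  cH2 : Continuous H2
  eF1 : ∀ g p τ, F1 (pact act g p, τ) = act g.1 (F1 (p, τ))
  eF2 : ∀ g p τ, F2 (pact act g p, τ) = act g.2 (F2 (p, τ))
  eH1 : ∀ g p τ, H1 (pact act g p, τ) = act g.1 (H1 (p, τ))
  eH2 : ∀ g p τ, H2 (pact act g p, τ) = act g.2 (H2 (p, τ))
  zF1 : ∀ p, F1 (p, 0) = p.1
  zF2 : ∀ p, F2 (p, 0) = p.2
  zH1 : ∀ p, H1 (p, 0) = p.1
  zH2 : ∀ p, H2 (p, 0) = p.2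
  O1 : Set (X × X)
  O2 : Set (X × X)
  oO1 : IsOpen O1
  oO2 : IsOpen O2
  cov : ∀ p, p ∈ O1 ∨ p ∈ O2
  tO1 : ∀ p ∈ O1, ∃ g, act g (F1 (p, 1)) = F2 (p, 1)
  tO2 : ∀ p ∈ O2, ∃ g, act g (H1 (p, 1)) = H2 (p, 1)

/-- small sequences -/
def Small {X : Type*} [Dist X] (ε : ℝ) (x : ℕ → X) : Prop := ∀ i j, dist (x i) (x j) ≤ ε

/-- good cochains -/
structure GoodCochain {R G X : Type*} [CommRing R] [Dist X] (act : G → X → X) (ε : ℝ) (a : ℕ)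
    (u : (ℕ → X) → R) : Prop where
  dep : Dep a u
  nrm : Nrm a u
  closed : ∀ x, Small ε x → dlt a u x = 0
  inv : ∀ x y, Small ε x → Small ε y → (∀ j, ∃ g, act g (x j) = y j) → u x = u y

theorem small_grid {X : Type*} [PseudoMetricSpace X] {M : ℕ} (f : (Fin M → ℝ) → X)
    (hf : Continuous f) (ε : ℝ) (hε : 0 < ε) :
    ∃ L0 : ℕ, ∀ L, L0 ≤ L → 0 < L → ∀ x : ℕ → Fin M → ℕ, GS L x →
      Small ε (fun j => f (fun c => (x j c : ℝ) / L)) := by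
  have hc : IsCompact (Set.Icc (0 : Fin M → ℝ) 1) := isCompact_Icc
  have hu := hc.uniformContinuousOn_of_continuous hf.continuousOn
  rw [Metric.uniformContinuousOn_iff] at hu
  obtain ⟨δ, hδ, h⟩ := hu ε hε
  obtain ⟨L0, hL0⟩ := exists_nat_gt (1 / δ)
  refine ⟨L0, fun L hL hLp x hx i j => ?_⟩
  have hLp' : (0 : ℝ) < L := by exact_mod_cast hLp
  have hmem : ∀ i, (fun c => (x i c : ℝ) / L) ∈ Set.Icc (0 : Fin M → ℝ) 1 := by
    intro i
    constructor
    · intro c; simp only [Pi.zero_apply]; positivity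
    · intro c
      simp only [Pi.one_apply]
      rw [div_le_one hLp']
      exact_mod_cast hx.1 i c
  refine (h _ (hmem i) _ (hmem j) ?_).le
  have h1 : (1 : ℝ) / L < δ := by
    have : (L0 : ℝ) ≤ L := by exact_mod_cast hL
    rw [div_lt_iff₀ hLp']
    rw [div_lt_iff₀ hδ] at hL0
    nlinarith
  refine lt_of_le_of_lt ?_ h1
  rw [dist_pi_le_iff (by positivity)]
  intro c
  rw [Real.dist_eq, ← sub_div, abs_div, abs_of_pos hLp']
  gcongr
  have h2 := hx.2 i j c
  have h3 := hx.2 j i c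
  have h2' : (x i c : ℝ) ≤ x j c + 1 := by exact_mod_cast h2
  have h3' : (x j c : ℝ) ≤ x i c + 1 := by exact_mod_cast h3
  rw [abs_le]; constructor <;> linarith

theorem main_lemma {R G X : Type*} [CommRing R] [PseudoMetricSpace X] [CompactSpace X]
    (act : G → X → X)
    (e1 : G) (he : ∀ x, act e1 x = x) (D : HData act) {a b q : ℕ} {ε : ℝ} (hε : 0 < ε)
    (u v : (ℕ → X) → R) (hu : GoodCochain act ε a u) (hv : GoodCochain act ε b v)
    (P : (Fin a → ℝ) → X) (Q : (Fin b → ℝ) → X) (cP : Continuous P) (cQ : Continuous Q)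
    (hP : BdOK R act q P) (hQ : BdOK R act q Q) :
    ∃ L0 : ℕ, ∀ L, L0 ≤ L → 0 < L → q ∣ L →
    ∑ ς : Perm (Fin (a + b)), sg R ς * ∑ m ∈ box L (a + b),
      ((u (fun j => P (fun c => (path m ς j (Fin.castAdd b c) : ℝ) / L)) -
        u (fun j => Q (fun c => (path m ς j (Fin.natAdd a c) : ℝ) / L))) *
      (v (fun j => P (fun c => (path m ς (a + j) (Fin.castAdd b c) : ℝ) / L)) -
       v (fun j => Q (fun c => (path m ς (a + j) (Fin.natAdd a c) : ℝ) / L)))) = 0 := by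
  set z : (Fin (a + b) → ℝ) → X × X := fun t =>
      (P (fun c => t (Fin.castAdd b c)), Q (fun c => t (Fin.natAdd a c))) with hzdef
  have cz : Continuous z := by
    apply Continuous.prodMk
    · exact cP.comp (continuous_pi fun c => continuous_apply _)
    · exact cQ.comp (continuous_pi fun c => continuous_apply _)
  have hz : BdOK R (pact act) q z := bdOK_prod act e1 he P Q hP hQ
  set w : (Fin (a + b + 1) → ℝ) → (X × X) × ℝ := fun t =>
    (z (fun c => t (Fin.castSucc c)), t (Fin.last (a + b))) with hwdef
  have cw : Continuous w := by
    apply Continuous.prodMk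
    · have hh : Continuous (fun (t : Fin (a + b + 1) → ℝ) (c : Fin (a + b)) =>
          t (Fin.castSucc c)) := continuous_pi fun c => continuous_apply _
      exact cz.comp hh
    · exact continuous_apply _
  obtain ⟨L1, hL1⟩ := small_grid (fun t => D.F1 (w t)) (D.cF1.comp cw) ε hε
  obtain ⟨L2, hL2⟩ := small_grid (fun t => D.F2 (w t)) (D.cF2.comp cw) ε hε
  obtain ⟨L3, hL3⟩ := small_grid (fun t => D.H1 (w t)) (D.cH1.comp cw) ε hε
  obtain ⟨L4, hL4⟩ := small_grid (fun t => D.H2 (w t)) (D.cH2.comp cw) ε hε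
  obtain ⟨δ, hδ, hleb⟩ := lebesgue_number_lemma_of_metric (s := (Set.univ : Set (X × X)))
    (ι := Bool) (c := fun b => if b then D.O1 else D.O2) isCompact_univ
    (by intro b; cases b <;> simp [D.oO1, D.oO2])
    (by
      intro p _
      rw [Set.mem_iUnion]
      rcases D.cov p with h | h
      · exact ⟨true, by simpa using h⟩
      · exact ⟨false, by simpa using h⟩)
  obtain ⟨L5, hL5⟩ := small_grid z cz (δ / 2) (by positivity)
  refine ⟨L1 + L2 + L3 + L4 + L5, fun L hL hLp hq => ?_⟩
  have hLr : (L : ℝ) ≠ 0 := by positivity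
  set A : (ℕ → (X × X) × ℝ) → R := fun x => u (fun j => D.F1 (x j)) - u (fun j => D.F2 (x j))
    with hA
  set B : (ℕ → (X × X) × ℝ) → R := fun x => v (fun j => D.H1 (x j)) - v (fun j => D.H2 (x j))
    with hB
  have dA : Dep a A := by
    intro x y h
    simp only [hA]
    rw [hu.dep (fun j => D.F1 (x j)) (fun j => D.F1 (y j)) (fun j hj => by rw [h j hj]),
      hu.dep (fun j => D.F2 (x j)) (fun j => D.F2 (y j)) (fun j hj => by rw [h j hj])]
  have dB : Dep b B := by
    intro x y h
    simp only [hB]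
    rw [hv.dep (fun j => D.H1 (x j)) (fun j => D.H1 (y j)) (fun j hj => by rw [h j hj]),
      hv.dep (fun j => D.H2 (x j)) (fun j => D.H2 (y j)) (fun j hj => by rw [h j hj])]
  have nA : Nrm a A := by
    rintro x ⟨i, hi, h⟩
    simp only [hA]
    rw [hu.nrm _ ⟨i, hi, by rw [h]⟩, hu.nrm _ ⟨i, hi, by rw [h]⟩, sub_zero]
  have nB : Nrm b B := by
    rintro x ⟨i, hi, h⟩
    simp only [hB]
    rw [hv.nrm _ ⟨i, hi, by rw [h]⟩, hv.nrm _ ⟨i, hi, by rw [h]⟩, sub_zero]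
  have dltA : ∀ x, Small ε (fun j => D.F1 (x j)) → Small ε (fun j => D.F2 (x j)) →
      dlt a A x = 0 := by
    intro x h1 h2
    have : dlt a A x = dlt a u (fun j => D.F1 (x j)) - dlt a u (fun j => D.F2 (x j)) := by
      simp only [dlt, hA, mul_sub, Finset.sum_sub_distrib]
    rw [this, hu.closed _ h1, hu.closed _ h2, sub_zero]
  have dltB : ∀ x, Small ε (fun j => D.H1 (x j)) → Small ε (fun j => D.H2 (x j)) →
      dlt b B x = 0 := by
    intro x h1 h2
    have : dlt b B x = dlt b v (fun j => D.H1 (x j)) - dlt b v (fun j => D.H2 (x j)) := by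
      simp only [dlt, hB, mul_sub, Finset.sum_sub_distrib]
    rw [this, hv.closed _ h1, hv.closed _ h2, sub_zero]
  have hst := grid_stokes (R := R) (pact act) hLp hq z hz (cup a A B)
    (by
      intro x y h
      simp only [cup]
      rw [dA x y (fun j hj => h j (by omega)),
        dB _ (fun j => y (a + j)) (fun j hj => h (a + j) (by omega))])
    (by
      rintro x ⟨i, hi, h⟩
      simp only [cup]
      by_cases hia : i < a
      · rw [nA x ⟨i, hia, h⟩, zero_mul]
      · rw [nB (fun j => x (a + j)) ⟨i - a, by omega, ?_⟩, mul_zero]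
        rw [show a + (i - a) = i by omega, show a + (i - a + 1) = i + 1 by omega, h])
    (fun x => Small ε (fun j => D.F1 (x j)) ∧ Small ε (fun j => D.F2 (x j)) ∧
      Small ε (fun j => D.H1 (x j)) ∧ Small ε (fun j => D.H2 (x j)))
    (by
      intro x hx
      exact ⟨hL1 L (by omega) hLp x hx, hL2 L (by omega) hLp x hx, hL3 L (by omega) hLp x hx,
        hL4 L (by omega) hLp x hx⟩)
    (by
      rintro x ⟨h1, h2, h3, h4⟩
      rw [cup_leibniz a b A B dA x, dltA x h1 h2,
        dltB _ (fun i j => h3 _ _) (fun i j => h4 _ _)]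
      ring)
    (by
      rintro x y g ⟨h1, h2, h3, h4⟩ ⟨k1, k2, k3, k4⟩ hxy
      simp only [cup, hA, hB]
      rw [hu.inv (fun j => D.F1 (x j)) (fun j => D.F1 (y j)) h1 k1
          (fun j => ⟨g.1, by rw [hxy, D.eF1]⟩),
        hu.inv (fun j => D.F2 (x j)) (fun j => D.F2 (y j)) h2 k2
          (fun j => ⟨g.2, by rw [hxy, D.eF2]⟩),
        hv.inv (fun j => D.H1 (x (a + j))) (fun j => D.H1 (y (a + j))) (fun i j => h3 _ _)
          (fun i j => k3 _ _) (fun j => ⟨g.1, by rw [hxy, D.eH1]⟩),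
        hv.inv (fun j => D.H2 (x (a + j))) (fun j => D.H2 (y (a + j))) (fun i j => h4 _ _)
          (fun i j => k4 _ _) (fun j => ⟨g.2, by rw [hxy, D.eH2]⟩)])
  have htop : ∀ m ∈ box L (a + b), ∀ ς : Perm (Fin (a + b)),
      cup a A B (fun j => (z (fun c => (path m ς j c : ℝ) / L), 1)) = 0 := by
    intro m hm ς
    have hGS := GS_path hm ς
    have hsm := hL5 L (by omega) hLp _ hGS
    obtain ⟨bb, hbb⟩ := hleb (z (fun c => (path m ς 0 c : ℝ) / L)) (Set.mem_univ _)
    have hin : ∀ j, z (fun c => (path m ς j c : ℝ) / L) ∈ (if bb then D.O1 else D.O2) := by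
      intro j
      apply hbb
      rw [Metric.mem_ball]
      exact lt_of_le_of_lt (hsm j 0) (by linarith)
    -- smallness at the top, through the extended grid
    have hGS' : GS L (fun j => Fin.snoc (α := fun _ => ℕ) (path m ς j) L) := by
      constructor
      · intro j c
        refine Fin.lastCases ?_ (fun i => ?_) c
        · simp
        · simpa using hGS.1 j i
      · intro i j c
        refine Fin.lastCases ?_ (fun k => ?_) c
        · simp
        · simpa using hGS.2 i j k
    have hw : ∀ j, w (fun c => ((Fin.snoc (α := fun _ => ℕ) (path m ς j) L : Fin (a + b + 1) → ℕ) c : ℝ) / L) =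
        (z (fun c => (path m ς j c : ℝ) / L), 1) := by
      intro j
      simp only [hwdef, Fin.snoc_castSucc, Fin.snoc_last, div_self hLr]
    have s1 := hL1 L (by omega) hLp _ hGS'
    have s2 := hL2 L (by omega) hLp _ hGS'
    have s3 := hL3 L (by omega) hLp _ hGS'
    have s4 := hL4 L (by omega) hLp _ hGS'
    simp only [hw] at s1 s2 s3 s4
    simp only [cup, hA, hB]
    cases bb
    · simp only [Bool.false_eq_true, if_false] at hin
      rw [hv.inv (fun j => D.H1 (z (fun c => (path m ς (a + j) c : ℝ) / L), 1))
        (fun j => D.H2 (z (fun c => (path m ς (a + j) c : ℝ) / L), 1))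
        (fun i j => s3 _ _) (fun i j => s4 _ _) (fun j => D.tO2 _ (hin _)), sub_self, mul_zero]
    · simp only [if_true] at hin
      rw [hu.inv (fun j => D.F1 (z (fun c => (path m ς j c : ℝ) / L), 1))
        (fun j => D.F2 (z (fun c => (path m ς j c : ℝ) / L), 1))
        s1 s2 (fun j => D.tO1 _ (hin _)), sub_self, zero_mul]
  rw [← neg_eq_zero, ← Finset.sum_neg_distrib, ← hst]
  apply Finset.sum_congr rfl
  intro ς _
  rw [← mul_neg, ← Finset.sum_neg_distrib]
  congr 1
  apply Finset.sum_congr rfl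
  intro m hm
  rw [htop m hm ς, zero_sub]
  simp only [cup, hA, hB, D.zF1, D.zF2, D.zH1, D.zH2, hzdef]

theorem main_lt {R G X : Type*} [CommRing R] [PseudoMetricSpace X] [CompactSpace X]
    (act : G → X → X)
    (e1 : G) (he : ∀ x, act e1 x = x) (D : HData act) {a b q : ℕ} {ε : ℝ} (hε : 0 < ε)
    (ha : 0 < a) (hab : a < b)
    (u v : (ℕ → X) → R) (hu : GoodCochain act ε a u) (hv : GoodCochain act ε b v)
    (P : (Fin a → ℝ) → X) (Q : (Fin b → ℝ) → X) (cP : Continuous P) (cQ : Continuous Q)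
    (hP : BdOK R act q P) (hQ : BdOK R act q Q) :
    ∃ L0 : ℕ, ∀ L, L0 ≤ L → 0 < L → q ∣ L →
      gint L a u (fun m => P (fun c => (m c : ℝ) / L)) *
      gint L b v (fun m => Q (fun c => (m c : ℝ) / L)) = 0 := by
  obtain ⟨L0, h⟩ := main_lemma act e1 he D hε u v hu hv P Q cP cQ hP hQ
  refine ⟨L0, fun L h1 h2 h3 => ?_⟩
  have h := h L h1 h2 h3
  have h4 := cross_terms (L := L) ha (by omega) u v hu.nrm hv.nrm
    (fun m => P (fun c => (m c : ℝ) / L)) (fun m => Q (fun c => (m c : ℝ) / L))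
  have h5 := cross_lt (L := L) hab u v hv.nrm
    (fun m => P (fun c => (m c : ℝ) / L)) (fun m => Q (fun c => (m c : ℝ) / L))
  rw [h5, sub_zero] at h4
  exact neg_eq_zero.mp (h4.symm.trans h)

theorem main_eq {R G X : Type*} [CommRing R] [PseudoMetricSpace X] [CompactSpace X]
    (act : G → X → X)
    (e1 : G) (he : ∀ x, act e1 x = x) (D : HData act) {k q : ℕ} {ε : ℝ} (hε : 0 < ε)
    (hk0 : 0 < k) (hk : Even k)
    (u : (ℕ → X) → R) (hu : GoodCochain act ε k u)
    (P : (Fin k → ℝ) → X) (cP : Continuous P) (hP : BdOK R act q P) :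
    ∃ L0 : ℕ, ∀ L, L0 ≤ L → 0 < L → q ∣ L →
      2 * (gint L k u (fun m => P (fun c => (m c : ℝ) / L)) *
      gint L k u (fun m => P (fun c => (m c : ℝ) / L))) = 0 := by
  obtain ⟨L0, h⟩ := main_lemma act e1 he D hε u u hu hu P P cP cP hP hP
  refine ⟨L0, fun L h1 h2 h3 => ?_⟩
  have h := h L h1 h2 h3
  have h4 := cross_terms (L := L) hk0 hk0 u u hu.nrm hu.nrm
    (fun m => P (fun c => (m c : ℝ) / L)) (fun m => P (fun c => (m c : ℝ) / L))
  have h5 := cross_eq (L := L) hk u hu.nrm (fun m => P (fun c => (m c : ℝ) / L))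
  rw [h5] at h4
  have h6 := h4.symm.trans h
  linear_combination -h6

end KTC

namespace KTC
open Finset Equiv

theorem homot {Z X : Type*} [TopologicalSpace Z] [TopologicalSpace X] (d : Z → ℝ)
    (hd : Continuous d) (η : ℝ) (hη : 0 < η) (s : Z → C(I, X))
    (hs : ContinuousOn s {p | 0 < d p}) (c : Z → X) (hc : Continuous c)
    (hsc : ∀ p, 0 < d p → s p 0 = c p) :
    ∃ F : Z × ℝ → X, Continuous F ∧ (∀ p, F (p, 0) = c p) ∧
      (∀ p, 2 * η < d p → F (p, 1) = s p 1) ∧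
      (∀ (γ : Z → Z) (α : X → X), (∀ p, d (γ p) = d p) → (∀ p, c (γ p) = α (c p)) →
        (∀ p, 0 < d p → ∀ t, s (γ p) t = α (s p t)) → ∀ p τ, F (γ p, τ) = α (F (p, τ))) := by
  classical
  let ψ : Z → ℝ := fun p => max 0 (min 1 (d p / η - 1))
  have hψ : Continuous ψ := by fun_prop
  let pr : Z × ℝ → I := fun q => Set.projIcc 0 1 zero_le_one (q.2 * ψ q.1)
  have hpr : Continuous pr := by
    apply continuous_projIcc.comp
    fun_prop
  refine ⟨fun q => if 0 < d q.1 then s q.1 (pr q) else c q.1, ?_, ?_, ?_, ?_⟩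
  · rw [continuous_iff_continuousAt]
    rintro ⟨p, τ⟩
    by_cases h : 0 < d p
    · have hev : ∀ᶠ q : Z × ℝ in nhds (p, τ), 0 < d q.1 := by
        have : ContinuousAt (fun q : Z × ℝ => d q.1) (p, τ) := by fun_prop
        exact this.eventually (lt_mem_nhds h)
      have hsA : ContinuousAt s p := hs.continuousAt ((isOpen_lt continuous_const hd).mem_nhds h)
      have h2 : ContinuousAt (fun q : Z × ℝ => s q.1 (pr q)) (p, τ) := by
        have h3 : ContinuousAt (fun q : Z × ℝ => s q.1) (p, τ) :=
          ContinuousAt.comp (g := s) (f := Prod.fst) (x := (p, τ)) hsA continuousAt_fst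
        exact (h3.eval hpr.continuousAt)
      apply h2.congr
      filter_upwards [hev] with q hq
      rw [if_pos hq]
    · have hev : ∀ᶠ q : Z × ℝ in nhds (p, τ), d q.1 < η := by
        have : ContinuousAt (fun q : Z × ℝ => d q.1) (p, τ) := by fun_prop
        exact this.eventually (gt_mem_nhds (by simp only; linarith))
      have h2 : ContinuousAt (fun q : Z × ℝ => c q.1) (p, τ) := by fun_prop
      apply h2.congr
      filter_upwards [hev] with q hq
      split_ifs with h3
      · have : ψ q.1 = 0 := by
          simp only [ψ]
          apply max_eq_left
          apply (min_le_right _ _).trans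
          rw [sub_nonpos, div_le_one hη]
          exact hq.le
        have h4 : pr q = 0 := by
          simp only [pr, this, mul_zero]
          exact Set.projIcc_left _
        rw [h4, hsc _ h3]
      · rfl
  · intro p
    have h4 : pr (p, 0) = 0 := by
      simp only [pr, zero_mul]
      exact Set.projIcc_left _
    simp only [h4]
    split_ifs with h
    · exact hsc p h
    · rfl
  · intro p h
    have hψ1 : ψ p = 1 := by
      simp only [ψ]
      have : 1 ≤ d p / η - 1 := by
        rw [le_sub_iff_add_le, le_div_iff₀ hη]; linarith
      rw [min_eq_left this]; simp
    have h4 : pr (p, 1) = 1 := by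
      simp only [pr, hψ1, mul_one]
      exact Set.projIcc_right _
    simp only [h4]
    rw [if_pos (by linarith)]
  · intro γ α h1 h2 h3 p τ
    have : pr (γ p, τ) = pr (p, τ) := by
      simp only [pr, ψ, h1]
    simp only [this, h1]
    split_ifs with h
    · exact h3 p h _
    · exact h2 p

theorem exists_dfun {Z : Type*} [PseudoMetricSpace Z] (U : Set Z) (hU : IsOpen U) :
    ∃ d : Z → ℝ, Continuous d ∧ (∀ p, 0 < d p ↔ p ∈ U) ∧ (∀ p, 0 ≤ d p) ∧
      ∀ γ : Z ≃ᵢ Z, (∀ p, γ p ∈ U ↔ p ∈ U) → ∀ p, d (γ p) = d p := by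
  by_cases hne : Uᶜ.Nonempty
  · refine ⟨fun p => Metric.infDist p Uᶜ, Metric.continuous_infDist_pt _, ?_, ?_, ?_⟩
    · intro p
      rw [← hU.isClosed_compl.notMem_iff_infDist_pos hne]
      simp
    · intro p; exact Metric.infDist_nonneg
    · intro γ hγ p
      have : γ '' Uᶜ = Uᶜ := by
        ext q
        constructor
        · rintro ⟨r, hr, rfl⟩
          exact fun h => hr ((hγ r).mp h)
        · intro hq
          refine ⟨γ.symm q, fun h => hq ?_, by simp⟩
          have := (hγ _).mpr h
          simpa using this
      simp only
      conv_lhs => rw [← this]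
      exact Metric.infDist_image γ.isometry
  · rw [Set.not_nonempty_iff_eq_empty, Set.compl_empty_iff] at hne
    subst hne
    exact ⟨fun _ => 1, continuous_const, by simp, by simp, by simp⟩

theorem hdata_of_cover {G X : Type*} [Group G] [MetricSpace X] [CompactSpace X]
    (act : G → X → X) (h1 : ∀ x, act 1 x = x) (hm : ∀ g h x, act (g * h) x = act g (act h x))
    (hi : ∀ g, Isometry (act g)) (hcov : invTCcover act 2) : Nonempty (HData act) := by
  obtain ⟨U, hUo, hUu, hU⟩ := hcov
  have hinvU : ∀ i (g : G × G) p, pact act g p ∈ U i ↔ p ∈ U i := by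
    intro i g p
    constructor
    · intro h
      have := (hU i).1 g.1⁻¹ g.2⁻¹ _ h
      simpa [pact, ← hm, h1] using this
    · exact fun h => (hU i).1 g.1 g.2 p h
  let γ : G × G → (X × X ≃ᵢ X × X) := fun g => IsometryEquiv.mk' (pact act g) (pact act g⁻¹)
    (by intro p; simp [pact, ← hm, h1])
    ((hi g.1).prodMap (hi g.2))
  have hd : ∀ i, ∃ d : X × X → ℝ, Continuous d ∧ (∀ p, 0 < d p ↔ p ∈ U i) ∧ (∀ p, 0 ≤ d p) ∧
      ∀ g p, d (pact act g p) = d p := by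
    intro i
    obtain ⟨d, h1, h2, h3, h4⟩ := exists_dfun (U i) (hUo i)
    exact ⟨d, h1, h2, h3, fun g p => h4 (γ g) (hinvU i g) p⟩
  choose d hdc hdU hd0 hdi using hd
  obtain ⟨η', hη', hη2⟩ := (isCompact_univ (X := X × X)).exists_forall_le' (a := 0)
    (f := fun p => max (d 0 p) (d 1 p)) ((hdc 0).max (hdc 1)).continuousOn (by
      intro p _
      have : p ∈ ⋃ i, U i := by rw [hUu]; trivial
      rw [Set.mem_iUnion] at this
      obtain ⟨i, hi⟩ := this
      rw [lt_max_iff]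
      fin_cases i
      · left; exact (hdU 0 p).mpr hi
      · right; exact (hdU 1 p).mpr hi)
  set η := η' / 3 with hη
  have hη0 : 0 < η := by positivity
  have key : ∀ i, ∃ F F' : (X × X) × ℝ → X, Continuous F ∧ Continuous F' ∧
      (∀ g p τ, F (pact act g p, τ) = act g.1 (F (p, τ))) ∧
      (∀ g p τ, F' (pact act g p, τ) = act g.2 (F' (p, τ))) ∧
      (∀ p, F (p, 0) = p.1) ∧ (∀ p, F' (p, 0) = p.2) ∧
      (∀ p, 2 * η < d i p → ∃ g, act g (F (p, 1)) = F' (p, 1)) := by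
    intro i
    obtain ⟨-, s1, s2, cs1, cs2, hs, he⟩ := hU i
    have hset : {p | 0 < d i p} = U i := by ext p; exact hdU i p
    obtain ⟨F, f1, f2, f3, f4⟩ := homot (d i) (hdc i) η hη0 s1 (by rw [hset]; exact cs1)
      Prod.fst continuous_fst (fun p hp => (hs p ((hdU i p).mp hp)).1)
    let sy : C(I, I) := ⟨unitInterval.symm, unitInterval.continuous_symm⟩
    obtain ⟨F', f1', f2', f3', f4'⟩ := homot (d i) (hdc i) η hη0 (fun p => (s2 p).comp sy)
      (by rw [hset]; exact (ContinuousMap.continuous_precomp sy).comp_continuousOn cs2)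
      Prod.snd continuous_snd (fun p hp => by
        have := (hs p ((hdU i p).mp hp)).2.1
        simpa [sy] using this)
    refine ⟨F, F', f1, f1', ?_, ?_, f2, f2', ?_⟩
    · intro g
      exact f4 (pact act g) (act g.1) (hdi i g) (fun p => rfl)
        (fun p hp t => (he g.1 g.2 p ((hdU i p).mp hp) t).1)
    · intro g
      exact f4' (pact act g) (act g.2) (hdi i g) (fun p => rfl)
        (fun p hp t => (he g.1 g.2 p ((hdU i p).mp hp) _).2)
    · intro p hp
      rw [f3 p hp, f3' p hp]
      have ho := (hs p ((hdU i p).mp (by linarith))).2.2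
      have hmem : s2 p 0 ∈ orbit act (s1 p 1) := by
        rw [ho]; exact ⟨1, h1 _⟩
      obtain ⟨g, hg⟩ := hmem
      exact ⟨g, by rw [hg]; simp [sy]⟩
  choose F F' k1 k2 k3 k4 k5 k6 k7 using key
  exact ⟨{
    F1 := F 0, F2 := F' 0, H1 := F 1, H2 := F' 1
    cF1 := k1 0, cF2 := k2 0, cH1 := k1 1, cH2 := k2 1
    eF1 := k3 0, eF2 := k4 0, eH1 := k3 1, eH2 := k4 1
    zF1 := k5 0, zF2 := k6 0, zH1 := k5 1, zH2 := k6 1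
    O1 := {p | 2 * η < d 0 p}, O2 := {p | 2 * η < d 1 p}
    oO1 := isOpen_lt continuous_const (hdc 0)
    oO2 := isOpen_lt continuous_const (hdc 1)
    cov := by
      intro p
      have h := hη2 p (Set.mem_univ _)
      rcases le_max_iff.mp h with h | h
      · left; simp only [Set.mem_ofPred_eq]; linarith
      · right; simp only [Set.mem_ofPred_eq]; linarith
    tO1 := fun p hp => k7 0 p hp
    tO2 := fun p hp => k7 1 p hp }⟩

end KTC

namespace KTC
open Finset Equiv

/-- restriction of homotopy data to the fixed set. -/
def HData.restrict {G X : Type*} [TopologicalSpace X] {act : G → X → X} (D : HData act)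
    (Y : Set X) (hY : ∀ x, x ∈ Y ↔ ∀ g, act g x = x) : HData (fun (_ : Unit) (y : Y) => y) where
  F1 := fun q => ⟨D.F1 ((q.1.1, q.1.2), q.2), (hY _).mpr fun g => by
    rw [← D.eF1 (g, g)]; simp only [pact, (hY _).mp q.1.1.2, (hY _).mp q.1.2.2]⟩
  F2 := fun q => ⟨D.F2 ((q.1.1, q.1.2), q.2), (hY _).mpr fun g => by
    rw [← D.eF2 (g, g)]; simp only [pact, (hY _).mp q.1.1.2, (hY _).mp q.1.2.2]⟩
  H1 := fun q => ⟨D.H1 ((q.1.1, q.1.2), q.2), (hY _).mpr fun g => by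
    rw [← D.eH1 (g, g)]; simp only [pact, (hY _).mp q.1.1.2, (hY _).mp q.1.2.2]⟩
  H2 := fun q => ⟨D.H2 ((q.1.1, q.1.2), q.2), (hY _).mpr fun g => by
    rw [← D.eH2 (g, g)]; simp only [pact, (hY _).mp q.1.1.2, (hY _).mp q.1.2.2]⟩
  cF1 := (D.cF1.comp (by fun_prop)).subtype_mk _
  cF2 := (D.cF2.comp (by fun_prop)).subtype_mk _
  cH1 := (D.cH1.comp (by fun_prop)).subtype_mk _
  cH2 := (D.cH2.comp (by fun_prop)).subtype_mk _
  eF1 := fun _ _ _ => rfl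
  eF2 := fun _ _ _ => rfl
  eH1 := fun _ _ _ => rfl
  eH2 := fun _ _ _ => rfl
  zF1 := fun p => Subtype.ext (D.zF1 _)
  zF2 := fun p => Subtype.ext (D.zF2 _)
  zH1 := fun p => Subtype.ext (D.zH1 _)
  zH2 := fun p => Subtype.ext (D.zH2 _)
  O1 := {p | ((p.1 : X), (p.2 : X)) ∈ D.O1}
  O2 := {p | ((p.1 : X), (p.2 : X)) ∈ D.O2}
  oO1 := D.oO1.preimage (by fun_prop)
  oO2 := D.oO2.preimage (by fun_prop)
  cov := fun p => D.cov _
  tO1 := fun p hp => ⟨(), Subtype.ext (by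
    obtain ⟨g, hg⟩ := D.tO1 _ hp
    simp only
    rw [← hg]
    have : act g (D.F1 ((↑p.1, ↑p.2), 1)) = D.F1 ((↑p.1, ↑p.2), 1) := by
      rw [← D.eF1 (g, g)]; simp only [pact, (hY _).mp p.1.2, (hY _).mp p.2.2]
    exact this.symm)⟩
  tO2 := fun p hp => ⟨(), Subtype.ext (by
    obtain ⟨g, hg⟩ := D.tO2 _ hp
    simp only
    rw [← hg]
    have : act g (D.H1 ((↑p.1, ↑p.2), 1)) = D.H1 ((↑p.1, ↑p.2), 1) := by
      rw [← D.eH1 (g, g)]; simp only [pact, (hY _).mp p.1.2, (hY _).mp p.2.2]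
    exact this.symm)⟩

end KTC

namespace KTC
open Finset Equiv

/-- Heaviside function -/
noncomputable def hv (R : Type*) [CommRing R] (t : ℝ) : R := if 0 < t then 1 else 0

/-- product of jump cochains -/
noncomputable def Kc (R : Type*) [CommRing R] {X : Type*} (A : ℕ → X → ℝ) (r : ℕ) (x : ℕ → X) : R :=
  ∏ i ∈ range r, (hv R (A i (x (i + 1))) - hv R (A i (x i)))

theorem Kc_dep (R : Type*) [CommRing R] {X : Type*} (A : ℕ → X → ℝ) (r : ℕ) :
    Dep r (Kc R A r) := by
  intro x y h
  apply Finset.prod_congr rfl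
  intro i hi
  rw [Finset.mem_range] at hi
  rw [h i (by omega), h (i + 1) (by omega)]

theorem Kc_closed (R : Type*) [CommRing R] {X : Type*} (A : ℕ → X → ℝ) (r : ℕ) (x : ℕ → X) :
    dlt r (Kc R A r) x = 0 := by
  induction r generalizing x with
  | zero => simp [dlt, Kc, Finset.sum_range_succ]
  | succ r ih =>
    have h1 : Kc R A (r + 1) = cup r (Kc R A r)
        (fun y => hv R (A r (y 1)) - hv R (A r (y 0))) := by
      funext y
      simp [Kc, cup, Finset.prod_range_succ]
    rw [h1, cup_leibniz r 1 _ _ (Kc_dep R A r), ih]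
    simp [dlt, Finset.sum_range_succ, skip]

theorem Kc_near (R : Type*) [CommRing R] {X : Type*} [PseudoMetricSpace X] (A : ℕ → X → ℝ) (r : ℕ)
    (hA : ∀ i x y, |A i x - A i y| ≤ dist x y) (ε : ℝ) (x : ℕ → X) (hx : Small ε x)
    (hK : Kc R A r x ≠ 0) : ∀ i < r, ∀ j, |A i (x j)| ≤ 2 * ε := by
  intro i hi j
  have h1 : hv R (A i (x (i + 1))) - hv R (A i (x i)) ≠ 0 := by
    intro h
    exact hK (Finset.prod_eq_zero (Finset.mem_range.mpr hi) h)
  have h2 := (hA i (x (i + 1)) (x i)).trans (hx _ _)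
  have h3 := (hA i (x j) (x i)).trans (hx _ _)
  rw [abs_le] at h2 h3 ⊢
  simp only [hv] at h1
  split_ifs at h1 with h4 h5 h5
  · simp at h1
  · constructor <;> linarith
  · constructor <;> linarith
  · simp at h1

/-- suspended cochain -/
noncomputable def susp (R : Type*) [CommRing R] {X : Type*} (A : ℕ → X → ℝ) (r : ℕ)
    (τ : (ℕ → X) → R) : (ℕ → X) → R := cup r (Kc R A r) τ

theorem susp_good {R G X : Type*} [CommRing R] [PseudoMetricSpace X] (act : G → X → X)
    (A : ℕ → X → ℝ) (r d : ℕ) (ε : ℝ) (τ : (ℕ → X) → R)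
    (hA : ∀ i x y, |A i x - A i y| ≤ dist x y) (hAi : ∀ i g x, A i (act g x) = A i x)
    (hd : Dep d τ) (hn : Nrm d τ)
    (hc : ∀ x, Small ε x → (∀ i < r, ∀ j, |A i (x j)| ≤ 2 * ε) → dlt d τ x = 0)
    (hi : ∀ x y, Small ε x → Small ε y → (∀ i < r, ∀ j, |A i (x j)| ≤ 2 * ε) →
      (∀ i < r, ∀ j, |A i (y j)| ≤ 2 * ε) → (∀ j, ∃ g, act g (x j) = y j) → τ x = τ y) :
    GoodCochain act ε (r + d) (susp R A r τ) where
  dep := by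
    intro x y h
    simp only [susp, cup]
    rw [Kc_dep R A r x y (fun j hj => h j (by omega)),
      hd (fun j => x (r + j)) (fun j => y (r + j)) (fun j hj => h _ (by omega))]
  nrm := by
    rintro x ⟨i, hi, h⟩
    simp only [susp, cup]
    by_cases hir : i < r
    · have : Kc R A r x = 0 := Finset.prod_eq_zero (Finset.mem_range.mpr hir) (by rw [h, sub_self])
      rw [this, zero_mul]
    · rw [hn (fun j => x (r + j)) ⟨i - r, by omega, ?_⟩, mul_zero]
      rw [show r + (i - r) = i by omega, show r + (i - r + 1) = i + 1 by omega, h]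
  closed := by
    intro x hx
    rw [susp, cup_leibniz r d _ _ (Kc_dep R A r), Kc_closed, zero_mul, zero_add]
    by_cases hK : Kc R A r x = 0
    · rw [hK]; ring
    · rw [hc _ (fun i j => hx _ _)
        (fun i hi j => Kc_near R A r hA ε x hx hK i hi _), mul_zero]
  inv := by
    intro x y hx hy h
    have hAxy : ∀ i j, A i (y j) = A i (x j) := by
      intro i j
      obtain ⟨g, hg⟩ := h j
      rw [← hg, hAi]
    have hKxy : Kc R A r y = Kc R A r x := by simp only [Kc, hAxy]
    simp only [susp, cup, hKxy]
    by_cases hK : Kc R A r x = 0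
    · rw [hK]; ring
    · rw [hi (fun j => x (r + j)) (fun j => y (r + j)) (fun i j => hx _ _) (fun i j => hy _ _)
        (fun i hi j => Kc_near R A r hA ε x hx hK i hi _)
        (fun i hi j => by rw [hAxy]; exact Kc_near R A r hA ε x hx hK i hi _) (fun j => h _)]

/-- evaluation of a suspended cochain -/
theorem gint_susp {R X : Type*} [CommRing R] (A : ℕ → X → ℝ) (r d L m0 : ℕ) (hm : m0 < L)
    (τ : (ℕ → X) → R) (f : (Fin (r + d) → ℕ) → X)
    (hf : ∀ m ∈ box L (r + d), ∀ ς : Perm (Fin (r + d)),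
      τ (fun j => f (path m ς (r + j))) ≠ 0 → ∀ i : Fin r, ∀ j ≤ r,
      (0 < A i (f (path m ς j)) ↔ m0 < path m ς j (Fin.castAdd d i))) :
    gint L (r + d) (susp R A r τ) f = gint L d τ (fun m => f (Fin.append (fun _ => m0 + 1) m)) := by
  have h := susp_eval (R := R) (r := r) (d := d) hm (fun m => if m0 < m then 1 else 0)
    (fun m h => if_neg (by omega)) (fun m h => if_pos h) (fun x => τ (fun j => f (x j)))
  simp only [gint]
  rw [← h]
  apply Finset.sum_congr rfl
  intro ς _
  congr 1
  apply Finset.sum_congr rfl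
  intro m hm
  simp only [susp, cup]
  by_cases h0 : τ (fun j => f (path m ς (r + j))) = 0
  · rw [h0, mul_zero, mul_zero]
  · congr 1
    simp only [Kc]
    rw [Finset.prod_range]
    apply Finset.prod_congr rfl
    intro i _
    simp only [hv, hf m hm ς h0 i (i + 1) (by have := i.2; omega), hf m hm ς h0 i i i.2.le]

end KTC

namespace KTC
open Finset Equiv

/-- the collapse map from the cube to the sphere, in coordinates. -/
noncomputable def wA (k : ℕ) (t : Fin k → ℝ) : Fin (k + 1) → ℝ :=
  Fin.snoc (α := fun _ => ℝ) (fun i => (2 * t i - 1) * max 0 (1 - ‖fun i => 2 * t i - 1‖))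
    (max (-1) (1 - 2 * ‖fun i => 2 * t i - 1‖))

theorem wA_cont (k : ℕ) : Continuous (wA k) := by
  refine continuous_pi fun i => ?_
  refine Fin.lastCases ?_ (fun i => ?_) i
  · simp only [wA, Fin.snoc_last]; fun_prop
  · simp only [wA, Fin.snoc_castSucc]; fun_prop

theorem wA_ne (k : ℕ) (t : Fin k → ℝ) : wA k t ≠ 0 := by
  intro h
  have h1 : max (-1) (1 - 2 * ‖fun i => 2 * t i - 1‖) = 0 := by
    have := congrFun h (Fin.last k)
    simpa only [wA, Fin.snoc_last, Pi.zero_apply] using this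
  have h2 : ‖fun i => 2 * t i - 1‖ = 1 / 2 := by
    rcases max_choice (-1) (1 - 2 * ‖fun i => 2 * t i - 1‖) with h | h <;> rw [h] at h1 <;> linarith
  have h3 : (fun i => 2 * t i - 1) = 0 := by
    funext i
    have := congrFun h (Fin.castSucc i)
    simp only [wA, Fin.snoc_castSucc, h2] at this
    norm_num at this
    simpa using this
  rw [h3] at h2
  norm_num at h2

theorem wA_bd (k : ℕ) (t : Fin k → ℝ) (j : Fin k) (h : t j = 0 ∨ t j = 1) :
    wA k t = Fin.snoc (α := fun _ => ℝ) (fun _ => 0) (-1) := by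
  have h1 : 1 ≤ ‖fun i => 2 * t i - 1‖ := by
    refine le_trans ?_ (norm_le_pi_norm _ j)
    rcases h with h | h <;> rw [h] <;> norm_num
  simp only [wA]
  rw [max_eq_left (by linarith), max_eq_left (by linarith)]
  simp

theorem caseA {X : Type*} [PseudoMetricSpace X] [CompactSpace X] {k : ℕ} (hk0 : 0 < k)
    (hk : Even k) (D : HData (fun (_ : Unit) (y : X) => y)) (A : ℕ → X → ℝ)
    (hA : ∀ i x y, |A i x - A i y| ≤ dist x y)
    (hs : ∀ x, ∑ i ∈ Finset.range (k + 1), A i x ^ 2 = 1)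
    (N : (Fin (k + 1) → ℝ) → X) (cN : ContinuousOn N {0}ᶜ)
    (hN : ∀ w, w ≠ 0 → ∃ c : ℝ, 0 < c ∧ ∀ i : Fin (k + 1), A i (N w) = c * w i) : False := by
  set act : Unit → X → X := fun _ y => y with hact
  have hkr : (0 : ℝ) < k := by exact_mod_cast hk0
  set ε : ℝ := 1 / (4 * (k + 1)) with hεd
  have hε : 0 < ε := by positivity
  have hε4 : ε * (4 * (k + 1)) = 1 := by rw [hεd]; field_simp
  have hε5 : ε ≤ 1 / 4 := by nlinarith
  set τ : (ℕ → X) → ℤ := fun x => hv ℤ (A k (x 0)) with hτ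
  have hu : GoodCochain act ε (k + 0) (susp ℤ A k τ) := by
    refine susp_good act A k 0 ε τ hA (fun _ _ _ => rfl) ?_ ?_ ?_ ?_
    · intro x y h
      simp only [hτ, h 0 le_rfl]
    · rintro x ⟨i, hi, _⟩
      omega
    · intro x hx hn
      have key : ∀ j, 1 / 2 < |A k (x j)| := by
        intro j
        have h1 := hs (x j)
        rw [Finset.sum_range_succ] at h1
        have h2 : ∑ i ∈ Finset.range k, A i (x j) ^ 2 ≤ ∑ i ∈ Finset.range k, (2 * ε) ^ 2 := by
          apply Finset.sum_le_sum
          intro i hi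
          rw [← sq_abs]
          exact pow_le_pow_left₀ (abs_nonneg _) (hn i (Finset.mem_range.mp hi) j) 2
        rw [Finset.sum_const, Finset.card_range, nsmul_eq_mul] at h2
        by_contra hcon
        push Not at hcon
        have h3 : A k (x j) ^ 2 ≤ (1 / 2) ^ 2 := by
          rw [← sq_abs]
          exact pow_le_pow_left₀ (abs_nonneg _) hcon 2
        have h4 : (k : ℝ) * (2 * ε) ^ 2 ≤ 1 / 4 := by nlinarith
        linarith
      have h0 := key 0
      have h1 := key 1
      have h2 := (hA k (x 0) (x 1)).trans (hx 0 1)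
      have h3 : hv ℤ (A k (x 0)) = hv ℤ (A k (x 1)) := by
        simp only [hv]
        rw [abs_le] at h2
        rw [lt_abs] at h0 h1
        split_ifs with h5 h6 h6
        · rfl
        · exfalso; rcases h0 with h0 | h0 <;> rcases h1 with h1 | h1 <;> linarith
        · exfalso; rcases h0 with h0 | h0 <;> rcases h1 with h1 | h1 <;> linarith
        · rfl
      simp [dlt, Finset.sum_range_succ, skip, hτ, h3]
    · intro x y _ _ _ _ h
      have : x = y := by
        funext j
        obtain ⟨g, hg⟩ := h j
        exact hg
      rw [this]
  set P : (Fin k → ℝ) → X := fun t => N (wA k t) with hP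
  have cP : Continuous P := cN.comp_continuous (wA_cont k) (fun t => by simpa using wA_ne k t)
  have hk2 : 2 ≤ k := by obtain ⟨r, hr⟩ := hk; omega
  have hB : BdOK ℤ act 1 P := by
    intro j
    right
    have : ∃ j' : Fin k, j' ≠ j := by
      have : Nontrivial (Fin k) := Fin.nontrivial_iff_two_le.mpr hk2
      exact exists_ne j
    obtain ⟨j', hj'⟩ := this
    constructor
    · refine ⟨j', hj', Or.inl ?_⟩
      intro t t' h h0
      have := h j hj'.symm
      simp only [hP]
      rw [wA_bd k t j (Or.inl h0), wA_bd k t' j (Or.inl (this.trans h0))]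
    · refine ⟨j', hj', Or.inl ?_⟩
      intro t t' h h0
      have := h j hj'.symm
      simp only [hP]
      rw [wA_bd k t j (Or.inr h0), wA_bd k t' j (Or.inr (this.trans h0))]
  obtain ⟨L0, hL0⟩ := main_eq act () (fun _ => rfl) D hε hk0 hk _ hu P cP hB
  obtain ⟨L, hL1, hL2⟩ : ∃ L, L0 ≤ L ∧ 8 ≤ L := ⟨L0 + 8, by omega, by omega⟩
  have hLr : (8 : ℝ) ≤ L := by exact_mod_cast hL2
  have hLp : (0 : ℝ) < L := by linarith
  have hfin := hL0 L hL1 (by omega) (one_dvd _)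
  have hM : ∀ t : Fin k → ℝ, 0 < A k (P t) ↔ ‖fun i => 2 * t i - 1‖ < 1 / 2 := by
    intro t
    obtain ⟨c, hc, h⟩ := hN _ (wA_ne k t)
    have := h (Fin.last k)
    simp only [Fin.val_last] at this
    simp only [hP]
    rw [this, mul_pos_iff_of_pos_left hc]
    simp only [wA, Fin.snoc_last, lt_max_iff]
    constructor
    · rintro (h | h) <;> linarith
    · intro h; right; linarith
  have hI : ∀ (t : Fin k → ℝ) (i : Fin k), ‖fun i => 2 * t i - 1‖ < 1 →
      (0 < A i (P t) ↔ 1 < 2 * t i) := by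
    intro t i ht
    obtain ⟨c, hc, h⟩ := hN _ (wA_ne k t)
    have := h (Fin.castSucc i)
    simp only [Fin.val_castSucc] at this
    simp only [hP]
    rw [this, mul_pos_iff_of_pos_left hc]
    simp only [wA, Fin.snoc_castSucc]
    rw [mul_pos_iff_of_pos_right (lt_max_of_lt_right (by linarith))]
    constructor <;> intro h <;> linarith
  have h1 := gint_susp (R := ℤ) A k 0 L (L / 2) (by omega) τ (fun m => P (fun c => (m c : ℝ) / L)) (by
    intro m hm ς hne i j hj
    have hne' : 0 < A k (P (fun c => (path m ς (k + 0) c : ℝ) / L)) := by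
      by_contra hcon
      exact hne (by simp only [hτ, hv]; exact if_neg hcon)
    rw [hM] at hne'
    have hlt : ‖fun c : Fin k => 2 * ((path m ς j c : ℝ) / L) - 1‖ < 1 := by
      rw [pi_norm_lt_iff one_pos]
      intro c
      have h2 := lt_of_le_of_lt (norm_le_pi_norm _ c) hne'
      have h3 : (path m ς j c : ℝ) ≤ path m ς (k + 0) c := by
        exact_mod_cast (by simp only [path]; split_ifs <;> omega)
      have h4 : (path m ς (k + 0) c : ℝ) ≤ path m ς j c + 1 := by
        exact_mod_cast (by simp only [path]; split_ifs <;> omega)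
      have h5 : (path m ς j c : ℝ) / L ≤ path m ς (k + 0) c / L := by gcongr
      have h6 : (path m ς (k + 0) c : ℝ) / L ≤ path m ς j c / L + 1 / 8 := by
        have : (1 : ℝ) / L ≤ 1 / 8 := by gcongr
        calc (path m ς (k + 0) c : ℝ) / L ≤ (path m ς j c + 1) / L := by gcongr
          _ = path m ς j c / L + 1 / L := by ring
          _ ≤ _ := by linarith
      rw [Real.norm_eq_abs, abs_lt] at h2 ⊢
      constructor <;> linarith [h2.1, h2.2]
    have := hI _ i hlt
    refine this.trans ?_
    rw [mul_div_assoc', lt_div_iff₀ hLp, one_mul]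
    have : ((L : ℝ) < 2 * (path m ς j i : ℝ)) ↔ L < 2 * path m ς j i := by exact_mod_cast Iff.rfl
    rw [this]
    change _ ↔ L / 2 < path m ς j i
    omega)
  have h2 : gint L 0 τ (fun m => P (fun c : Fin k => ((Fin.append (fun _ : Fin k => L / 2 + 1) m c : ℕ) : ℝ) / L)) = 1 := by
    have h3 : 0 < A k (P (fun c : Fin k => ((L / 2 + 1 : ℕ) : ℝ) / L)) := by
      rw [hM, pi_norm_lt_iff (by norm_num)]
      intro i
      have h4 : (L : ℝ) < 2 * ((L / 2 + 1 : ℕ) : ℝ) := by exact_mod_cast (by omega)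
      have h5 : 2 * ((L / 2 + 1 : ℕ) : ℝ) ≤ L + 2 := by exact_mod_cast (by omega)
      rw [Real.norm_eq_abs, abs_lt]
      rw [mul_div_assoc', div_sub_one hLp.ne']
      constructor
      · rw [lt_div_iff₀ hLp]; linarith
      · rw [div_lt_iff₀ hLp]; linarith
    simp only [gint]
    have : ∀ (m : Fin 0 → ℕ), (fun c : Fin k => ((Fin.append (fun _ : Fin k => L / 2 + 1) m c : ℕ) : ℝ) / L)
        = fun c : Fin k => ((L / 2 + 1 : ℕ) : ℝ) / L := by
      intro m
      funext c
      have := Fin.append_left (fun _ : Fin k => L / 2 + 1) m c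
      have h6 : Fin.append (fun _ : Fin k => L / 2 + 1) m c = L / 2 + 1 := this
      rw [h6]
    simp only [this]
    push_cast at h3
    simp [hτ, hv, sg, box]
    exact h3
  have h3 : gint L k (susp ℤ A k τ) (fun m => P (fun c => (m c : ℝ) / L)) = 1 := h1.trans h2
  have h4 : 2 * (gint L k (susp ℤ A k τ) (fun m => P (fun c => (m c : ℝ) / L)) *
      gint L k (susp ℤ A k τ) (fun m => P (fun c => (m c : ℝ) / L))) = 0 := hfin
  rw [h3] at h4
  norm_num at h4

end KTC

namespace KTC
open Finset Equiv

/-- existence of a uniform displacement constant near the free part -/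
theorem displacement {G X : Type*} [Finite G] [One G] [PseudoMetricSpace X] [CompactSpace X]
    (act : G → X → X) (ci : ∀ g, Continuous (act g)) (A : ℕ → X → ℝ) (cA : ∀ i, Continuous (A i)) (r : ℕ)
    (hfree : ∀ x, (∀ i < r, A i x = 0) → ∀ g, g ≠ 1 → 0 < dist (act g x) x) :
    ∃ ε : ℝ, 0 < ε ∧ ∀ x, (∀ i < r, |A i x| ≤ 2 * ε) → ∀ g, g ≠ 1 → 2 * ε < dist (act g x) x := by
  classical
  have h1 : ∀ g : G, ∃ δ : ℝ, 0 < δ ∧ (g ≠ 1 → ∀ x, δ ≤ dist (act g x) x + ∑ i ∈ Finset.range r, |A i x|) := by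
    intro g
    by_cases hg : g = 1
    · exact ⟨1, one_pos, fun h => absurd hg h⟩
    have hc : Continuous (fun x => dist (act g x) x + ∑ i ∈ Finset.range r, |A i x|) := by
      have := ci g
      fun_prop
    obtain ⟨δ, hδ, h⟩ := (isCompact_univ (X := X)).exists_forall_le' (a := 0) hc.continuousOn (by
      intro x _
      by_contra hcon
      push Not at hcon
      have h2 : 0 ≤ ∑ i ∈ Finset.range r, |A i x| := Finset.sum_nonneg fun i _ => abs_nonneg _
      have h3 : ∑ i ∈ Finset.range r, |A i x| = 0 := by
        have := dist_nonneg (x := act g x) (y := x); linarith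
      rw [Finset.sum_eq_zero_iff_of_nonneg (fun i _ => abs_nonneg _)] at h3
      have := hfree x (fun i hi => abs_eq_zero.mp (h3 i (Finset.mem_range.mpr hi))) g hg
      linarith)
    exact ⟨δ, hδ, fun _ x => h x (mem_univ x)⟩
  choose δ hδ h using h1
  have h2 : ∃ d : ℝ, 0 < d ∧ ∀ g, d ≤ δ g := by
    cases nonempty_fintype G
    have hne : (Finset.univ : Finset G).Nonempty := ⟨1, Finset.mem_univ _⟩
    exact ⟨Finset.univ.inf' hne δ, (Finset.lt_inf'_iff hne).mpr fun g _ => hδ g,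
      fun g => Finset.inf'_le _ (Finset.mem_univ g)⟩
  obtain ⟨d, hd, hd2⟩ := h2
  refine ⟨d / (2 * (r + 2)), by positivity, ?_⟩
  intro x hx g hg
  have h3 := h g hg x
  have h4 : ∑ i ∈ Finset.range r, |A i x| ≤ ∑ i ∈ Finset.range r, 2 * (d / (2 * (r + 2))) :=
    Finset.sum_le_sum fun i hi => hx i (Finset.mem_range.mp hi)
  rw [Finset.sum_const, Finset.card_range, nsmul_eq_mul] at h4
  have h5 := hd2 g
  set e := d / (2 * ((r : ℝ) + 2)) with he
  have h6 : e * (2 * (r + 2)) = d := by rw [he]; field_simp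
  have h7 : 0 < e := by positivity
  nlinarith

/-- orbit coordinate -/
theorem exists_coord {G X : Type*} [Group G] (act : G → X → X)
    (h1 : ∀ x, act 1 x = x) (hm : ∀ g h x, act (g * h) x = act g (act h x)) :
    ∃ h : X → G, ∀ x, (∀ g, act g x = x → g = 1) → ∀ g, h (act g x) = g * h x := by
  let S : Setoid X := ⟨fun x y => ∃ g, act g x = y, ⟨fun x => ⟨1, h1 x⟩,
    fun {x y} ⟨g, hg⟩ => ⟨g⁻¹, by rw [← hg, ← hm, inv_mul_cancel, h1]⟩,
    fun {x y z} ⟨g, hg⟩ ⟨k, hk⟩ => ⟨k * g, by rw [hm, hg, hk]⟩⟩⟩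
  let rep : X → X := fun x => (Quotient.mk S x).out
  have hrep : ∀ x, ∃ g, act g (rep x) = x := fun x => Quotient.exact (Quotient.out_eq (Quotient.mk S x))
  have hrep2 : ∀ x g, rep (act g x) = rep x := by
    intro x g
    have : Quotient.mk S (act g x) = Quotient.mk S x := (Quotient.sound ⟨g, rfl⟩ : Quotient.mk S x = _).symm
    simp only [rep, this]
  choose h hh using hrep
  refine ⟨h, fun x hx g => ?_⟩
  have e1 : act (h (act g x)) (rep x) = act (g * h x) (rep x) := by
    rw [hm, hh x, ← hrep2 x g, hh]
  have e2 : act (h x * ((g * h x)⁻¹ * h (act g x)) * (h x)⁻¹) x = x := by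
    rw [hm, hm (h x)]
    have : act (h x)⁻¹ x = rep x := by
      have e0 : act (h x)⁻¹ (act (h x) (rep x)) = rep x := by rw [← hm, inv_mul_cancel, h1]
      rwa [hh] at e0
    rw [this, hm, e1, ← hm (g * h x)⁻¹, inv_mul_cancel, h1, hh]
  have e3 := hx _ e2
  have e4 : (g * h x)⁻¹ * h (act g x) = 1 := by
    have := mul_inv_eq_one.mp e3
    exact mul_eq_left.mp this
  exact (inv_mul_eq_one.mp e4).symm

/-- degree one cochain -/
def tau1 {p : ℕ} {X : Type*} (h : X → ZMod p) (x : ℕ → X) : ZMod p := h (x 1) - h (x 0)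

/-- lift of the degree one cochain to the integers -/
def cz {p : ℕ} {X : Type*} (h : X → ZMod p) (x : ℕ → X) : ℤ := ((h (x 1) - h (x 0)).val : ℤ)

/-- integral degree two cochain -/
def tz {p : ℕ} {X : Type*} (h : X → ZMod p) (x : ℕ → X) : ℤ := dlt 1 (cz h) x / p

/-- degree two cochain -/
def tau2 {p : ℕ} {X : Type*} (h : X → ZMod p) (x : ℕ → X) : ZMod p := (tz h x : ZMod p)

theorem cz_cast {p : ℕ} [NeZero p] {X : Type*} (h : X → ZMod p) (x : ℕ → X) :
    (cz h x : ZMod p) = h (x 1) - h (x 0) := by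
  simp [cz]

theorem tz_spec {p : ℕ} [NeZero p] {X : Type*} (h : X → ZMod p) (x : ℕ → X) :
    (p : ℤ) * tz h x = dlt 1 (cz h) x := by
  apply Int.mul_ediv_cancel'
  rw [← ZMod.intCast_zmod_eq_zero_iff_dvd]
  simp [dlt, Finset.sum_range_succ, cz_cast, skip]

theorem dlt_one {R X : Type*} [CommRing R] (f : (ℕ → X) → R) (x : ℕ → X) :
    dlt 1 f x = f (fun j => x (skip 0 j)) - f (fun j => x (skip 1 j)) + f (fun j => x (skip 2 j)) := by
  simp [dlt, Finset.sum_range_succ, sub_eq_add_neg]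

theorem tz_closed {p : ℕ} [NeZero p] {X : Type*} (h : X → ZMod p) (x : ℕ → X) :
    dlt 2 (tz h) x = 0 := by
  have hp : (p : ℤ) ≠ 0 := by exact_mod_cast NeZero.ne p
  apply mul_left_cancel₀ hp
  have : (p : ℤ) * dlt 2 (tz h) x = dlt 2 (fun x => (p : ℤ) * tz h x) x := by
    simp only [dlt, Finset.mul_sum]
    exact Finset.sum_congr rfl fun i _ => by ring
  rw [this]
  simp only [tz_spec]
  simp [dlt, Finset.sum_range_succ, cz, skip]
  ring

theorem cochains {p : ℕ} [NeZero p] {X : Type*} [PseudoMetricSpace X] [CompactSpace X]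
    (act : Multiplicative (ZMod p) → X → X)
    (h1 : ∀ x, act 1 x = x) (hm : ∀ g h x, act (g * h) x = act g (act h x))
    (hi : ∀ g, Isometry (act g)) (A : ℕ → X → ℝ)
    (hA : ∀ i x y, |A i x - A i y| ≤ dist x y) (hAi : ∀ i g x, A i (act g x) = A i x) (r : ℕ)
    (hfree : ∀ x, (∀ i < r, A i x = 0) → ∀ g, g ≠ 1 → 0 < dist (act g x) x) :
    ∃ (h : X → ZMod p) (ε : ℝ), 0 < ε ∧
      (∀ x, (∀ g, act g x = x → g = 1) → ∀ g, h (act g x) = g.toAdd + h x) ∧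
      GoodCochain act ε (r + 1) (susp (ZMod p) A r (tau1 h)) ∧
      GoodCochain act ε (r + 2) (susp (ZMod p) A r (tau2 h)) := by
  have : Finite (Multiplicative (ZMod p)) := inferInstance
  obtain ⟨ε, hε, hd⟩ := displacement act (fun g => (hi g).continuous) A (fun i => by
    rw [Metric.continuous_iff]
    intro x e he
    exact ⟨e, he, fun y hy => lt_of_le_of_lt (by rw [Real.dist_eq]; exact hA i y x) hy⟩) r hfree
  obtain ⟨h', hh'⟩ := exists_coord act h1 hm
  refine ⟨fun x => (h' x).toAdd, ε, hε, fun x hx g => by simp only [hh' x hx g]; rfl, ?_, ?_⟩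
  all_goals
    set h : X → ZMod p := fun x => (h' x).toAdd with hhd
  all_goals
    have hcom : ∀ x y : ℕ → X, Small ε x → Small ε y → (∀ i < r, ∀ j, |A i (x j)| ≤ 2 * ε) →
        (∀ j, ∃ g, act g (x j) = y j) → ∃ c : ZMod p, ∀ j, h (y j) = c + h (x j) := by
      intro x y hx hy hn hg
      choose g hg using hg
      refine ⟨(g 0).toAdd, fun j => ?_⟩
      have e0 : g j = g 0 := by
        by_contra hne
        have h3 := hd (x j) (fun i hi => hn i hi j) ((g j)⁻¹ * g 0) (by
          intro hh; exact hne (inv_mul_eq_one.mp hh))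
        have h4 : dist (act ((g j)⁻¹ * g 0) (x j)) (x j) = dist (act (g 0) (x j)) (act (g j) (x j)) := by
          rw [← (hi (g j)).dist_eq, ← hm, mul_inv_cancel_left]
        rw [h4, hg j] at h3
        have h5 := dist_triangle (act (g 0) (x j)) (act (g 0) (x 0)) (y j)
        rw [(hi (g 0)).dist_eq, hg 0] at h5
        have := hx j 0
        have := hy 0 j
        linarith
      rw [← hg j, e0]
      simp only [hhd]
      rw [hh' (x j) _ (g 0)]
      · rfl
      · intro g' hg'
        by_contra hne
        have := hd (x j) (fun i hi => hn i hi j) g' hne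
        rw [hg', dist_self] at this
        linarith
  · refine susp_good act A r 1 ε _ hA hAi ?_ ?_ ?_ ?_
    · intro x y hxy
      simp only [tau1, hxy 0 (by omega), hxy 1 le_rfl]
    · rintro x ⟨i, hi, hx⟩
      obtain rfl : i = 0 := by omega
      simp only [zero_add] at hx
      simp [tau1, hx]
    · intro x _ _
      simp [dlt_one, tau1, skip]
    · intro x y hx hy hn _ hg
      obtain ⟨c, hc⟩ := hcom x y hx hy hn hg
      simp [tau1, hc]
  · refine susp_good act A r 2 ε _ hA hAi ?_ ?_ ?_ ?_
    · intro x y hxy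
      simp only [tau2, tz, dlt_one, cz, skip]
      simp [hxy 0 (by omega), hxy 1 (by omega), hxy 2 le_rfl]
    · rintro x ⟨i, hi, hx⟩
      have : i = 0 ∨ i = 1 := by omega
      rcases this with rfl | rfl
      · simp only [zero_add] at hx
        simp [tau2, tz, dlt_one, cz, skip, hx]
      · simp only [Nat.reduceAdd] at hx
        simp [tau2, tz, dlt_one, cz, skip, hx]
    · intro x _ _
      have := congrArg (Int.cast : ℤ → ZMod p) (tz_closed h x)
      simpa [dlt, tau2] using this
    · intro x y hx hy hn _ hg
      obtain ⟨c, hc⟩ := hcom x y hx hy hn hg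
      simp [tau2, tz, dlt_one, cz, skip, hc]

end KTC

namespace KTC
open Finset Equiv

theorem gint_one {R X : Type*} [CommRing R] (L : ℕ) (u : (ℕ → X) → R) (f : (Fin 1 → ℕ) → X) :
    gint L 1 u f = ∑ a ∈ Finset.range L, u (fun j => f (fun _ => a + if 0 < j then 1 else 0)) := by
  simp only [gint]
  rw [Fintype.sum_unique]
  have h1 : sg R (default : Perm (Fin 1)) = 1 := by
    rw [Subsingleton.elim (default : Perm (Fin 1)) 1]; simp [sg]
  rw [h1, one_mul]
  refine Finset.sum_nbij' (fun m => m 0) (fun a _ => a) ?_ ?_ ?_ ?_ ?_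
  · intro m hm; exact Finset.mem_range.mpr (mem_box.mp hm 0)
  · intro a ha; exact mem_box.mpr fun _ => Finset.mem_range.mp ha
  · intro m _; funext c; rw [Subsingleton.elim c 0]
  · intro a _; rfl
  · intro m _
    congr 1
    funext j
    congr 1
    funext c
    rw [Subsingleton.elim c 0]
    simp [path]

theorem gint_two {X : Type*} (L : ℕ) (c : (ℕ → X) → ℤ) (hc : Dep 1 c) (f : ℕ → ℕ → X) :
    gint L 2 (dlt 1 c) (fun m => f (m 0) (m 1)) =
      (∑ b ∈ Finset.range L, (c (fun j => f L (b + if 0 < j then 1 else 0)) -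
        c (fun j => f 0 (b + if 0 < j then 1 else 0)))) +
      ∑ a ∈ Finset.range L, (c (fun j => f (a + if 0 < j then 1 else 0) 0) -
        c (fun j => f (a + if 0 < j then 1 else 0) L)) := by
  have hbox : ∀ F : ℕ → ℕ → ℤ, ∑ m ∈ box L 2, F (m 0) (m 1) =
      ∑ a ∈ Finset.range L, ∑ b ∈ Finset.range L, F a b := by
    intro F
    rw [← Finset.sum_product']
    refine Finset.sum_nbij' (fun m => (m 0, m 1)) (fun a => ![a.1, a.2]) ?_ ?_ ?_ ?_ ?_
    · intro m hm
      simp only [Finset.mem_product, Finset.mem_range]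
      exact ⟨mem_box.mp hm 0, mem_box.mp hm 1⟩
    · intro a ha
      simp only [Finset.mem_product, Finset.mem_range] at ha
      rw [mem_box]
      intro c
      fin_cases c
      · exact ha.1
      · exact ha.2
    · intro m _; funext c; fin_cases c <;> rfl
    · intro a _; rfl
    · intro m _; rfl
  have hperm : (Finset.univ : Finset (Perm (Fin 2))) = {1, Equiv.swap 0 1} := by decide
  simp only [gint]
  rw [hperm, Finset.sum_pair (by decide)]
  have e1 : ∀ m : Fin 2 → ℕ, dlt 1 c (fun j => f (path m 1 j 0) (path m 1 j 1)) =
      c (fun j => f (m 0 + 1) (m 1 + if 0 < j then 1 else 0))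
      - c (fun j => f (m 0 + if 0 < j then 1 else 0) (m 1 + if 0 < j then 1 else 0)) +
      c (fun j => f (m 0 + if 0 < j then 1 else 0) (m 1)) := by
    intro m
    rw [dlt_one]
    congr 1
    · congr 1
      · apply hc; intro j hj; interval_cases j <;> simp [skip, path]
      · apply hc; intro j hj; interval_cases j <;> simp [skip, path]
    · apply hc; intro j hj; interval_cases j <;> simp [skip, path]
  have e2 : ∀ m : Fin 2 → ℕ, dlt 1 c (fun j => f (path m (Equiv.swap 0 1) j 0) (path m (Equiv.swap 0 1) j 1)) =
      c (fun j => f (m 0 + if 0 < j then 1 else 0) (m 1 + 1))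
      - c (fun j => f (m 0 + if 0 < j then 1 else 0) (m 1 + if 0 < j then 1 else 0)) +
      c (fun j => f (m 0) (m 1 + if 0 < j then 1 else 0)) := by
    intro m
    rw [dlt_one]
    congr 1
    · congr 1
      · apply hc; intro j hj; interval_cases j <;> simp [skip, path]
      · apply hc; intro j hj; interval_cases j <;> simp [skip, path]
    · apply hc; intro j hj; interval_cases j <;> simp [skip, path]
  simp only [e1, e2]
  have s1 : sg ℤ (1 : Perm (Fin 2)) = 1 := by simp [sg]
  have s2 : sg ℤ (Equiv.swap (0 : Fin 2) 1) = -1 := by simp [sg]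
  rw [s1, s2, one_mul, neg_one_mul, ← sub_eq_add_neg, ← Finset.sum_sub_distrib]
  have := hbox (fun a b => (c (fun j => f (a + 1) (b + if 0 < j then 1 else 0)) - c (fun j => f a (b + if 0 < j then 1 else 0)))
    + (c (fun j => f (a + if 0 < j then 1 else 0) b) - c (fun j => f (a + if 0 < j then 1 else 0) (b + 1))))
  refine Eq.trans (Finset.sum_congr rfl fun m _ => ?_) (this.trans ?_)
  · ring
  simp only [Finset.sum_add_distrib]
  congr 1
  · rw [Finset.sum_comm]
    refine Finset.sum_congr rfl fun b _ => ?_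
    exact Finset.sum_range_sub (fun a => c (fun j => f a (b + if 0 < j then 1 else 0))) L
  · refine Finset.sum_congr rfl fun a _ => ?_
    exact Finset.sum_range_sub' (fun b => c (fun j => f (a + if 0 < j then 1 else 0) b)) L

theorem cz_dep {p : ℕ} {X : Type*} (h : X → ZMod p) : Dep 1 (cz h) := by
  intro x y hxy
  simp only [cz, hxy 0 (by omega), hxy 1 le_rfl]

/-- evaluation in degree one -/
theorem eval_one {p : ℕ} {X : Type*} (h : X → ZMod p) (L : ℕ) (f : ℕ → X) :
    gint L 1 (tau1 h) (fun m => f (m 0)) = h (f L) - h (f 0) := by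
  rw [gint_one]
  have := Finset.sum_range_sub (fun a => h (f a)) L
  simpa [tau1] using this

/-- evaluation in degree two -/
theorem eval_two {p : ℕ} [NeZero p] {X : Type*} (h : X → ZMod p) (L l : ℕ) (hL : L = p * l)
    (f : ℕ → ℕ → X) (hper : ∀ b, f L b = f 0 b) (hdeg : ∀ a, f (a + 1) L = f a L)
    (g : ZMod p) (hg : ∀ a, h (f (a + l) 0) = g + h (f a 0)) :
    gint L 2 (tau2 h) (fun m => f (m 0) (m 1)) = g := by
  have hp : (p : ℤ) ≠ 0 := by exact_mod_cast NeZero.ne p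
  have h1 : (p : ℤ) * gint L 2 (tz h) (fun m => f (m 0) (m 1)) =
      gint L 2 (dlt 1 (cz h)) (fun m => f (m 0) (m 1)) := by
    simp only [gint, Finset.mul_sum]
    refine Finset.sum_congr rfl fun s _ => Finset.sum_congr rfl fun m _ => ?_
    rw [← tz_spec]; ring
  rw [gint_two L _ (cz_dep h)] at h1
  simp only [hper, sub_self, Finset.sum_const_zero, zero_add] at h1
  have h2 : ∀ a, cz h (fun j => f (a + if 0 < j then 1 else 0) L) = 0 := by
    intro a; simp [cz, hdeg]
  simp only [h2, sub_zero] at h1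
  set C : ℕ → ℤ := fun a => cz h (fun j => f (a + if 0 < j then 1 else 0) 0) with hC
  have h3 : ∀ a, C (a + l) = C a := by
    intro a
    have e1 := hg (a + 1)
    have e2 := hg a
    rw [show a + 1 + l = a + l + 1 by ring] at e1
    simp [hC, cz, e1, e2]
  have h4 : ∀ n, ∑ a ∈ Finset.range (n * l), C a = n * ∑ a ∈ Finset.range l, C a := by
    intro n
    induction n with
    | zero => simp
    | succ n ih =>
      rw [Nat.succ_mul, Finset.sum_range_add, ih]
      have : ∀ n a, C (n * l + a) = C a := by
        intro n
        induction n with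
        | zero => simp
        | succ n ih => intro a; rw [Nat.succ_mul, show n * l + l + a = n * l + a + l by ring, h3, ih]
      simp only [this]
      push_cast; ring
  rw [hL, h4, ← hL] at h1
  have h5 := mul_left_cancel₀ hp h1
  have h6 : gint L 2 (tau2 h) (fun m => f (m 0) (m 1)) =
      ((gint L 2 (tz h) (fun m => f (m 0) (m 1)) : ℤ) : ZMod p) := by
    simp [gint, tau2, sg]
  rw [h6, h5]
  push_cast
  simp only [hC, cz_cast]
  have := Finset.sum_range_sub (fun a => h (f a 0)) l
  have e := hg 0
  rw [zero_add] at e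
  simp only [e, add_sub_cancel_right] at this
  simpa using this

end KTC

namespace KTC
open Finset Equiv

/-- suspension coordinates -/
def sB (r d : ℕ) (t : Fin (r + d) → ℝ) : Fin r → ℝ := fun i => 2 * t (Fin.castAdd d i) - 1

/-- argument of the suspended map -/
noncomputable def aB {W : Type*} [NormedAddCommGroup W] [NormedSpace ℝ W] (r d : ℕ)
    (F : (Fin d → ℝ) → W) (t : Fin (r + d) → ℝ) : (Fin r → ℝ) × W :=
  (sB r d t, max 0 (1 - ‖sB r d t‖) • F (fun c => t (Fin.natAdd r c)))

theorem aB_cont {W : Type*} [NormedAddCommGroup W] [NormedSpace ℝ W] (r d : ℕ)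
    (F : (Fin d → ℝ) → W) (cF : Continuous F) : Continuous (aB r d F) := by
  have h : Continuous (sB r d) := by unfold sB; fun_prop
  unfold aB
  fun_prop

theorem aB_ne {W : Type*} [NormedAddCommGroup W] [NormedSpace ℝ W] (r d : ℕ)
    (F : (Fin d → ℝ) → W) (hF : ∀ t, F t ≠ 0) (t : Fin (r + d) → ℝ) : aB r d F t ≠ 0 := by
  intro h
  have h1 : sB r d t = 0 := congrArg Prod.fst h
  have h2 := congrArg Prod.snd h
  simp only [aB, h1, norm_zero, sub_zero, Prod.snd_zero] at h2
  rw [max_eq_right zero_le_one, one_smul] at h2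
  exact hF _ h2

theorem aB_bd {W : Type*} [NormedAddCommGroup W] [NormedSpace ℝ W] (r d : ℕ)
    (F : (Fin d → ℝ) → W) (t : Fin (r + d) → ℝ) (i : Fin r)
    (h : t (Fin.castAdd d i) = 0 ∨ t (Fin.castAdd d i) = 1) : aB r d F t = (sB r d t, 0) := by
  have h1 : 1 ≤ ‖sB r d t‖ := by
    refine le_trans ?_ (norm_le_pi_norm _ i)
    simp only [sB]
    rcases h with h | h <;> rw [h] <;> norm_num
  simp only [aB]
  rw [max_eq_left (by linarith), zero_smul]

theorem killed_B {R G X W : Type*} [CommRing R] [NormedAddCommGroup W] [NormedSpace ℝ W]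
    (act : G → X → X) (q r d : ℕ)
    (F : (Fin d → ℝ) → W) (N : (Fin r → ℝ) × W → X) (i : Fin r) (j' : Fin d) (e : ℝ)
    (he : e = 0 ∨ e = 1) :
    Killed R act q (fun t => N (aB r d F t)) (Fin.castAdd d i) e := by
  have hne : ∀ i : Fin r, Fin.castAdd d i ≠ Fin.natAdd r j' := by
    intro i h
    have := congrArg Fin.val h
    have := i.2
    simp at *
    omega
  refine ⟨Fin.natAdd r j', (hne i).symm, Or.inl ?_⟩
  intro t t' h h0
  have h1 : t' (Fin.castAdd d i) = e := by rw [h _ (hne i), h0]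
  simp only
  rw [aB_bd r d F t i (by rw [h0]; exact he), aB_bd r d F t' i (by rw [h1]; exact he)]
  have : sB r d t' = sB r d t := by
    funext c
    simp only [sB]
    rw [h _ (hne c)]
  rw [this]

theorem gint_B {R X W : Type*} [CommRing R] [NormedAddCommGroup W] [NormedSpace ℝ W]
    (A : ℕ → X → ℝ) (r d L : ℕ) (hL : 8 ≤ L) (τ : (ℕ → X) → R)
    (F : (Fin d → ℝ) → W) (hF : ∀ t, F t ≠ 0) (N : (Fin r → ℝ) × W → X)
    (hN : ∀ s w, (s, w) ≠ 0 → ∃ c : ℝ, 0 < c ∧ ∀ i : Fin r, A i (N (s, w)) = c * s i) :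
    ∃ (s0 : Fin r → ℝ) (μ0 : ℝ), 0 < μ0 ∧
    gint L (r + d) (susp R A r τ) (fun m => N (aB r d F (fun c => (m c : ℝ) / L))) =
      gint L d τ (fun m => N (s0, μ0 • F (fun c => (m c : ℝ) / L))) := by
  have hLr : (8 : ℝ) ≤ L := by exact_mod_cast hL
  have hLp : (0 : ℝ) < L := by linarith
  refine ⟨fun _ => 2 * (((L / 2 + 1 : ℕ) : ℝ) / L) - 1,
    max 0 (1 - ‖fun _ : Fin r => 2 * (((L / 2 + 1 : ℕ) : ℝ) / L) - 1‖), ?_, ?_⟩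
  · apply lt_max_of_lt_right
    rw [sub_pos, pi_norm_lt_iff one_pos]
    intro i
    have h4 : (L : ℝ) < 2 * ((L / 2 + 1 : ℕ) : ℝ) := by exact_mod_cast (by omega)
    have h5 : 2 * ((L / 2 + 1 : ℕ) : ℝ) ≤ L + 2 := by exact_mod_cast (by omega)
    rw [Real.norm_eq_abs, abs_lt]
    rw [mul_div_assoc', div_sub_one hLp.ne']
    constructor
    · rw [lt_div_iff₀ hLp]; linarith
    · rw [div_lt_iff₀ hLp]; linarith
  · rw [gint_susp A r d L (L / 2) (by omega) τ]
    · simp only [aB]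
      congr 1
      funext m
      have e1 : sB r d (fun c => ((Fin.append (fun _ : Fin r => L / 2 + 1) m c : ℕ) : ℝ) / L) =
          fun _ => 2 * (((L / 2 + 1 : ℕ) : ℝ) / L) - 1 := by
        funext i
        simp only [sB, Fin.append_left]
      rw [e1]
      simp only [Fin.append_right]
    · intro m hm ς _ i j hj
      obtain ⟨c, hc, h⟩ := hN _ _ (aB_ne r d F hF (fun c => (path m ς j c : ℝ) / L))
      have h1 := h i
      have h2 : 0 < A i (N (aB r d F (fun c => (path m ς j c : ℝ) / L))) ↔
        0 < c * sB r d (fun c => (path m ς j c : ℝ) / L) i := by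
        rw [← h1]; rfl
      refine h2.trans ?_
      rw [mul_pos_iff_of_pos_left hc]
      simp only [sB]
      rw [sub_pos, mul_div_assoc', lt_div_iff₀ hLp, one_mul]
      have : ((L : ℝ) < 2 * (path m ς j (Fin.castAdd d i) : ℝ)) ↔ L < 2 * path m ς j (Fin.castAdd d i) := by
        exact_mod_cast Iff.rfl
      rw [this]
      omega

theorem caseB {p : ℕ} [Fact p.Prime] {X W : Type*} [PseudoMetricSpace X] [CompactSpace X]
    [NormedAddCommGroup W] [NormedSpace ℝ W]
    (act : Multiplicative (ZMod p) → X → X)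
    (h1 : ∀ x, act 1 x = x) (hm : ∀ g h x, act (g * h) x = act g (act h x))
    (hi : ∀ g, Isometry (act g)) (D : HData act) (A : ℕ → X → ℝ)
    (hA : ∀ i x y, |A i x - A i y| ≤ dist x y) (hAi : ∀ i g x, A i (act g x) = A i x) (r : ℕ)
    (hfree : ∀ x, (∀ i < r, A i x = 0) → ∀ g, g ≠ 1 → 0 < dist (act g x) x)
    (wact : Multiplicative (ZMod p) → W →ₗ[ℝ] W)
    (N : (Fin r → ℝ) × W → X) (cN : ContinuousOn N {0}ᶜ)
    (hN : ∀ s w, (s, w) ≠ 0 → ∃ c : ℝ, 0 < c ∧ ∀ i : Fin r, A i (N (s, w)) = c * s i)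
    (hNg : ∀ g s w, N (s, wact g w) = act g (N (s, w)))
    (hNf : ∀ s w, w ≠ 0 → ∀ g, act g (N (s, w)) = N (s, w) → g = 1)
    (lam : ℝ → W) (clam : Continuous lam) (hl0 : ∀ θ, lam θ ≠ 0)
    (hl : ∀ θ, lam (θ + 1 / p) = wact (Multiplicative.ofAdd 1) (lam θ))
    (hl1 : ∀ θ, lam (θ + 1) = lam θ)
    (q0 : W) (hq : ∀ θ s : ℝ, (1 - s) • lam θ + s • q0 ≠ 0) : False := by
  have hp0 : (p : ℝ) ≠ 0 := by exact_mod_cast (NeZero.ne p)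
  obtain ⟨h, ε, hε, hh, hu, hv⟩ := cochains act h1 hm hi A hA hAi r hfree
  set F1 : (Fin 1 → ℝ) → W := fun t => lam (t 0 / p) with hF1
  set F2 : (Fin 2 → ℝ) → W := fun t => (1 - t 1) • lam (t 0) + t 1 • q0 with hF2
  have nF1 : ∀ t, F1 t ≠ 0 := fun t => hl0 _
  have nF2 : ∀ t, F2 t ≠ 0 := fun t => hq _ _
  have cF1 : Continuous F1 := by simp only [hF1]; fun_prop
  have cF2 : Continuous F2 := by simp only [hF2]; fun_prop
  have cont : ∀ (d : ℕ) (F : (Fin d → ℝ) → W), Continuous F → (∀ t, F t ≠ 0) →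
      Continuous (fun t => N (aB r d F t)) := fun d F cF nF =>
    cN.comp_continuous (aB_cont r d F cF) (fun t => by simpa using aB_ne r d F nF t)
  have sBeq : ∀ (d : ℕ) (j : Fin d) (t t' : Fin (r + d) → ℝ),
      (∀ i, i ≠ Fin.natAdd r j → t' i = t i) → sB r d t' = sB r d t := by
    intro d j t t' ht
    funext c
    simp only [sB]
    rw [ht]
    intro h
    have := congrArg Fin.val h
    have := c.2
    simp at *
    omega
  have hP : BdOK (ZMod p) act p (fun t => N (aB r 1 F1 t)) := by
    intro j
    refine Fin.addCases (fun i => ?_) (fun i => ?_) j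
    · right
      exact ⟨killed_B act p r 1 F1 N i 0 0 (Or.inl rfl), killed_B act p r 1 F1 N i 0 1 (Or.inr rfl)⟩
    · left
      obtain rfl : i = 0 := Subsingleton.elim _ _
      refine ⟨Multiplicative.ofAdd 1, ?_⟩
      intro t t' ht h0 h0'
      have e1 := sBeq 1 0 t t' ht
      simp only [aB, e1]
      rw [← hNg, map_smul]
      simp only [hF1, h0, h0']
      rw [zero_div, ← hl, zero_add]
  have hQ : BdOK (ZMod p) act p (fun t => N (aB r 2 F2 t)) := by
    intro j
    refine Fin.addCases (fun i => ?_) (fun i => ?_) j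
    · right
      exact ⟨killed_B act p r 2 F2 N i 0 0 (Or.inl rfl), killed_B act p r 2 F2 N i 0 1 (Or.inr rfl)⟩
    · have hne : (Fin.natAdd r (1 : Fin 2)) ≠ Fin.natAdd r 0 := by
        intro h; have := congrArg Fin.val h; simp at this
      have hi' : i = 0 ∨ i = 1 := by fin_cases i <;> simp
      rcases hi' with rfl | rfl
      · left
        refine ⟨1, ?_⟩
        intro t t' ht h0 h0'
        have e1 := sBeq 2 0 t t' ht
        simp only [aB, e1]
        rw [h1]
        simp only [hF2, h0, h0', ht _ hne]
        have := hl1 0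
        rw [zero_add] at this
        rw [this]
      · right
        constructor
        · refine ⟨Fin.natAdd r 0, hne.symm, Or.inr ⟨by simp, Multiplicative.ofAdd 1, ?_⟩⟩
          intro t t' ht h0 htt
          have e1 := sBeq 2 0 t t' ht
          simp only [aB, e1]
          rw [← hNg, map_smul]
          simp only [hF2, h0, ht _ hne, htt, hl]
          simp
        · refine ⟨Fin.natAdd r 0, hne.symm, Or.inl ?_⟩
          intro t t' ht h0
          have e1 := sBeq 2 0 t t' ht
          simp only [aB, e1, hF2, h0, ht _ hne]
          simp
  obtain ⟨L0, hL0⟩ := main_lt act 1 h1 D hε (by omega) (by omega) _ _ hu hv _ _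
    (cont 1 F1 cF1 nF1) (cont 2 F2 cF2 nF2) hP hQ
  have hpp : 0 < p := Nat.pos_of_ne_zero (NeZero.ne p)
  obtain ⟨l, hl8⟩ : ∃ l, L0 + 8 ≤ l := ⟨_, le_rfl⟩
  set L := p * l with hLd
  have hLl : l ≤ L := Nat.le_mul_of_pos_left l hpp
  have hLr : (0 : ℝ) < L := by exact_mod_cast (by omega : 0 < L)
  have hlr : (0 : ℝ) < l := by exact_mod_cast (by omega : 0 < l)
  have hfin := hL0 L (by omega) (by omega) (Dvd.intro _ rfl)
  obtain ⟨s1, μ1, hμ1, ev1⟩ := gint_B A r 1 L (by omega) (tau1 h) F1 nF1 N hN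
  obtain ⟨s2, μ2, hμ2, ev2⟩ := gint_B A r 2 L (by omega) (tau2 h) F2 nF2 N hN
  have E1 := eval_one h L (fun a => N (s1, μ1 • lam (((a : ℝ) / L) / p)))
  have E2 := eval_two h L l hLd (fun a b => N (s2, μ2 • ((1 - (b : ℝ) / L) • lam ((a : ℝ) / L) + ((b : ℝ) / L) • q0)))
    (by
      intro b
      have := hl1 0
      rw [zero_add] at this
      simp only [div_self hLr.ne', Nat.cast_zero, zero_div, this])
    (by
      intro a
      simp only [div_self hLr.ne', sub_self, zero_smul])
    1 (by
      intro a
      have e : (((a + l : ℕ) : ℝ)) / L = a / L + 1 / p := by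
        rw [hLd]; push_cast; field_simp
      have e2 := hh (N (s2, μ2 • ((1 - ((0 : ℕ) : ℝ) / L) • lam ((a : ℝ) / L) + (((0 : ℕ) : ℝ) / L) • q0)))
        (hNf _ _ (smul_ne_zero hμ2.ne' (hq _ _))) (Multiplicative.ofAdd 1)
      rw [← hNg, map_smul] at e2
      rw [e, hl]
      simp only [Nat.cast_zero, zero_div, sub_zero, one_smul, zero_smul, add_zero] at e2 ⊢
      exact e2)
  have e2 := hh (N (s1, μ1 • lam ((((0 : ℕ) : ℝ) / L) / p)))
        (hNf _ _ (smul_ne_zero hμ1.ne' (hl0 _))) (Multiplicative.ofAdd 1)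
  rw [← hNg, map_smul, ← hl] at e2
  have e3 : h (N (s1, μ1 • lam (((L : ℝ) / L) / p))) = 1 + h (N (s1, μ1 • lam ((((0 : ℕ) : ℝ) / L) / p))) := by
    rw [div_self hLr.ne']
    simp only [Nat.cast_zero, zero_div, zero_add] at e2 ⊢
    exact e2
  rw [e3, add_sub_cancel_right] at E1
  rw [ev1, ev2] at hfin
  rw [show gint L 1 (tau1 h) (fun m => N (s1, μ1 • F1 fun c => (m c : ℝ) / L)) = 1 from E1,
    show gint L 2 (tau2 h) (fun m => N (s2, μ2 • F2 fun c => (m c : ℝ) / L)) = 1 from E2, one_mul] at hfin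
  exact one_ne_zero hfin

end KTC

namespace KTC
open Finset Equiv

/-- periodic tent function -/
noncomputable def tent (p : ℕ) (y : ℝ) : ℝ := max 0 (1 / 2 - ‖(y : AddCircle (p : ℝ))‖)

theorem tent_cont (p : ℕ) : Continuous (tent p) := by
  have := AddCircle.continuous_mk' (p : ℝ)
  unfold tent
  exact continuous_const.max (continuous_const.sub (continuous_norm.comp this))

theorem tent_per (p : ℕ) (y : ℝ) (n : ℤ) : tent p (y + n * p) = tent p y := by
  have : ((y + n * p : ℝ) : AddCircle (p : ℝ)) = y := by
    have e : ((n * p : ℝ) : AddCircle (p : ℝ)) = 0 := by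
      have := AddCircle.coe_zsmul (p : ℝ) (n := n) (x := (p : ℝ))
      rw [AddCircle.coe_period, smul_zero, zsmul_eq_mul] at this
      exact this
    rw [AddCircle.coe_add, e, add_zero]
  simp only [tent, this]

theorem tent_shift (p : ℕ) [NeZero p] (y : ℝ) (q : ℤ) :
    tent p (y - ((q : ZMod p).val : ℝ)) = tent p (y - q) := by
  have h : (((q : ZMod p).val : ℤ) : ZMod p) = (q : ZMod p) := by simp
  rw [ZMod.intCast_eq_intCast_iff_dvd_sub] at h
  obtain ⟨n, hn⟩ := h
  have : (q : ℝ) - ((q : ZMod p).val : ℝ) = p * n := by exact_mod_cast hn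
  have e : y - ((q : ZMod p).val : ℝ) = (y - q) + n * p := by linarith
  rw [e, tent_per]

theorem tent_uniq (p : ℕ) [NeZero p] (y : ℝ) (i j : ZMod p) (hi : tent p (y - (i.val : ℝ)) ≠ 0)
    (hj : tent p (y - (j.val : ℝ)) ≠ 0) : i = j := by
  have key : ∀ i : ZMod p, tent p (y - (i.val : ℝ)) ≠ 0 → ∃ n : ℤ, |y - i.val - n * p| < 1 / 2 := by
    intro i hi
    by_contra hcon
    push Not at hcon
    apply hi
    have := hcon (round ((p : ℝ)⁻¹ * (y - i.val)))
    rw [← AddCircle.norm_eq] at this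
    exact max_eq_left (by linarith)
  obtain ⟨n, hn⟩ := key i hi
  obtain ⟨m, hm⟩ := key j hj
  rw [abs_lt] at hn hm
  have h1 : ((i.val : ℤ) + n * p - j.val - m * p : ℤ) < (1 : ℤ) := by
    have : (i.val : ℝ) + n * p - j.val - m * p < 1 := by linarith [hn.1, hm.2]
    exact_mod_cast this
  have h2 : (-1 : ℤ) < ((i.val : ℤ) + n * p - j.val - m * p : ℤ) := by
    have : (-1 : ℝ) < (i.val : ℝ) + n * p - j.val - m * p := by linarith [hn.2, hm.1]
    exact_mod_cast this
  have h3 : ((i.val : ℤ) + n * p - j.val - m * p : ℤ) = 0 := by omega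
  have h4 := congrArg (Int.cast : ℤ → ZMod p) h3
  push_cast at h4
  simp only [ZMod.natCast_val, ZMod.cast_id', id, CharP.cast_eq_zero, mul_zero, add_zero, sub_zero] at h4
  exact sub_eq_zero.mp h4

theorem tent_pos (p : ℕ) (hp : 2 ≤ p) (y : ℝ) (h : |y| ≤ 1 / 4) : tent p y ≠ 0 := by
  have hp' : (2 : ℝ) ≤ p := by exact_mod_cast hp
  have : ‖(y : AddCircle (p : ℝ))‖ = |y| := by
    rw [AddCircle.norm_coe_eq_abs_iff (p : ℝ) (by linarith)]
    rw [abs_of_pos (by linarith : (0 : ℝ) < p)]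
    linarith
  simp only [tent, this]
  exact (lt_max_of_lt_right (by linarith)).ne'

/-- equivariant polygon -/
noncomputable def poly {p : ℕ} [NeZero p] {W : Type*} [AddCommGroup W] [Module ℝ W]
    (wact : Multiplicative (ZMod p) → W →ₗ[ℝ] W) (z : W) (y : ℝ) : W :=
  ∑ i : ZMod p, tent p (y - (i.val : ℝ)) • wact (Multiplicative.ofAdd i) z

theorem poly_cont {p : ℕ} [NeZero p] {W : Type*} [NormedAddCommGroup W] [NormedSpace ℝ W]
    (wact : Multiplicative (ZMod p) → W →ₗ[ℝ] W) (z : W) : Continuous (poly wact z) := by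
  have := tent_cont p
  unfold poly
  fun_prop

theorem poly_per {p : ℕ} [NeZero p] {W : Type*} [AddCommGroup W] [Module ℝ W]
    (wact : Multiplicative (ZMod p) → W →ₗ[ℝ] W) (z : W) (y : ℝ) :
    poly wact z (y + p) = poly wact z y := by
  refine Finset.sum_congr rfl fun i _ => ?_
  have := tent_per p (y - i.val) 1
  rw [← this]
  congr 2
  push_cast; ring

theorem poly_equiv {p : ℕ} [NeZero p] {W : Type*} [AddCommGroup W] [Module ℝ W]
    (wact : Multiplicative (ZMod p) → W →ₗ[ℝ] W)
    (hwm : ∀ g h w, wact (g * h) w = wact g (wact h w)) (z : W) (y : ℝ) :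
    poly wact z (y + 1) = wact (Multiplicative.ofAdd 1) (poly wact z y) := by
  simp only [poly, map_sum, map_smul]
  rw [← Equiv.sum_comp (Equiv.addLeft (1 : ZMod p))]
  refine Finset.sum_congr rfl fun i _ => ?_
  rw [Equiv.coe_addLeft, ofAdd_add, hwm]
  congr 1
  have h1 := tent_shift p (y + 1) (1 + (i.val : ℤ))
  push_cast at h1
  simp only [ZMod.natCast_val, ZMod.cast_id', id] at h1
  rw [ZMod.natCast_val, h1]
  congr 1
  simp
  ring

theorem poly_form {p : ℕ} [NeZero p] {W : Type*} [AddCommGroup W] [Module ℝ W]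
    (wact : Multiplicative (ZMod p) → W →ₗ[ℝ] W) (z : W) (y : ℝ) :
    ∃ i α, poly wact z y = (α : ℝ) • wact (Multiplicative.ofAdd i) z ∧
      (α = 0 → ∀ q : ℤ, tent p (y - q) = 0) := by
  by_cases h : ∃ i : ZMod p, tent p (y - (i.val : ℝ)) ≠ 0
  · obtain ⟨i, hi⟩ := h
    refine ⟨i, tent p (y - (i.val : ℝ)), ?_, fun h => absurd h hi⟩
    apply Finset.sum_eq_single i
    · intro j _ hj
      by_contra hcon
      exact hj (tent_uniq p y j i (fun h => hcon (by rw [h, zero_smul])) hi)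
    · intro h; exact absurd (Finset.mem_univ i) h
  · push Not at h
    refine ⟨0, 0, ?_, fun _ q => by rw [← tent_shift]; exact h _⟩
    rw [zero_smul]
    exact Finset.sum_eq_zero fun i _ => by rw [h i, zero_smul]

theorem exists_notMem {ι W : Type*} [Finite ι] [AddCommGroup W] [Module ℝ W] [FiniteDimensional ℝ W]
    (S : ι → Submodule ℝ W) (h : ∀ i, Module.finrank ℝ (S i) < Module.finrank ℝ W) :
    ∃ w, ∀ i, w ∉ S i := by
  by_contra hcon
  push Not at hcon
  obtain ⟨i, hi⟩ := Subspace.exists_eq_top_of_iUnion_eq_univ (p := S) (by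
    rw [Set.eq_univ_iff_forall]
    intro w
    obtain ⟨i, hi⟩ := hcon w
    exact Set.mem_iUnion.mpr ⟨i, hi⟩)
  have := h i
  rw [hi, finrank_top] at this
  omega

theorem exists_lam {p : ℕ} [Fact p.Prime] {W : Type*} [NormedAddCommGroup W] [NormedSpace ℝ W]
    [FiniteDimensional ℝ W] (h3 : 3 ≤ Module.finrank ℝ W)
    (wact : Multiplicative (ZMod p) → W →ₗ[ℝ] W) (hw1 : ∀ w, wact 1 w = w)
    (hwm : ∀ g h w, wact (g * h) w = wact g (wact h w)) :
    ∃ (lam : ℝ → W) (q0 : W), Continuous lam ∧ (∀ θ, lam θ ≠ 0) ∧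
      (∀ θ, lam (θ + 1 / p) = wact (Multiplicative.ofAdd 1) (lam θ)) ∧
      (∀ θ, lam (θ + 1) = lam θ) ∧ (∀ θ s : ℝ, (1 - s) • lam θ + s • q0 ≠ 0) := by
  classical
  have hp2 : 2 ≤ p := (Fact.out : p.Prime).two_le
  have hp0 : (p : ℝ) ≠ 0 := by exact_mod_cast (NeZero.ne p)
  have hinj : ∀ g w, wact g w = 0 → w = 0 := by
    intro g w h
    rw [← hw1 w, ← inv_mul_cancel g, hwm, h, map_zero]
  have : Nontrivial W := Module.nontrivial_of_finrank_pos (R := ℝ) (by omega)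
  obtain ⟨z, hz⟩ := exists_ne (0 : W)
  obtain ⟨z', hz'⟩ := exists_notMem (fun i : Multiplicative (ZMod p) => Submodule.span ℝ {wact i z}) (by
    intro i
    have := finrank_span_le_card (R := ℝ) ({wact i z} : Set W)
    simp at this
    omega)
  obtain ⟨q0, hq0⟩ := exists_notMem (fun i : Multiplicative (ZMod p) × Multiplicative (ZMod p) =>
      Submodule.span ℝ {wact i.1 z, wact i.2 z'}) (by
    intro i
    have h1 := finrank_span_le_card (R := ℝ) ({wact i.1 z, wact i.2 z'} : Set W)
    have h2 : ({wact i.1 z, wact i.2 z'} : Set W).toFinset.card ≤ 2 := by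
      rw [Set.toFinset_insert, Set.toFinset_singleton]
      exact Finset.card_le_two
    omega)
  have hind : ∀ i j (α β : ℝ), α • wact i z + β • wact j z' = 0 → α = 0 ∧ β = 0 := by
    intro i j α β h
    have hb : β = 0 := by
      by_contra hb
      apply hz' (j⁻¹ * i)
      rw [Submodule.mem_span_singleton]
      refine ⟨-(β⁻¹ * α), ?_⟩
      have h2 := congrArg (wact j⁻¹) h
      rw [map_add, map_smul, map_smul, map_zero, ← hwm, ← hwm, inv_mul_cancel, hw1] at h2
      have h3 : α • wact (j⁻¹ * i) z = - (β • z') := eq_neg_of_add_eq_zero_left h2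
      rw [neg_smul, mul_smul, h3, smul_neg, neg_neg, smul_smul, inv_mul_cancel₀ hb, one_smul]
    refine ⟨?_, hb⟩
    rw [hb, zero_smul, add_zero] at h
    rcases smul_eq_zero.mp h with h | h
    · exact h
    · exact absurd (hinj _ _ h) hz
  set lam : ℝ → W := fun θ => poly wact z (p * θ) + poly wact z' (p * θ - 1 / 2) with hlam
  have hform : ∀ θ, lam θ ≠ 0 ∧ ∃ i, lam θ ∈ Submodule.span ℝ {wact i.1 z, wact (i : Multiplicative (ZMod p) × Multiplicative (ZMod p)).2 z'} := by
    intro θ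
    obtain ⟨i, α, e1, a1⟩ := poly_form wact z (p * θ)
    obtain ⟨j, β, e2, a2⟩ := poly_form wact z' (p * θ - 1 / 2)
    constructor
    · intro h
      simp only [hlam] at h
      rw [e1, e2] at h
      obtain ⟨hα, hβ⟩ := hind _ _ _ _ h
      have a1 := a1 hα
      have a2 := a2 hβ
      have hr := abs_sub_round (2 * (p * θ))
      rcases Int.even_or_odd' (round (2 * (p * θ))) with ⟨q, hq | hq⟩
      · refine tent_pos p hp2 _ ?_ (a1 q)
        rw [hq] at hr
        push_cast at hr
        rw [abs_le] at hr ⊢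
        constructor <;> linarith [hr.1, hr.2]
      · refine tent_pos p hp2 _ ?_ (a2 q)
        rw [hq] at hr
        push_cast at hr
        rw [abs_le] at hr ⊢
        constructor <;> linarith [hr.1, hr.2]
    · refine ⟨(Multiplicative.ofAdd i, Multiplicative.ofAdd j), ?_⟩
      simp only [hlam]
      rw [e1, e2]
      exact Submodule.mem_span_pair.mpr ⟨α, β, rfl⟩
  refine ⟨lam, q0, ?_, fun θ => (hform θ).1, ?_, ?_, ?_⟩
  · have h1 := poly_cont wact z
    have h2 := poly_cont wact z'
    simp only [hlam]
    fun_prop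
  · intro θ
    simp only [hlam]
    have e : (p : ℝ) * (θ + 1 / p) = p * θ + 1 := by field_simp
    rw [e, map_add, ← poly_equiv wact hwm, ← poly_equiv wact hwm]
    congr 2
    ring
  · intro θ
    simp only [hlam]
    have e : (p : ℝ) * (θ + 1) = p * θ + p := by ring
    rw [e, poly_per, ← poly_per wact z' (p * θ - 1 / 2)]
    congr 2
    ring
  · intro θ s h
    by_cases hs : s = 0
    · rw [hs] at h
      simp only [sub_zero, one_smul, zero_smul, add_zero] at h
      exact (hform θ).1 h
    · obtain ⟨i, hi⟩ := (hform θ).2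
      apply hq0 i
      have e : q0 = (-(s⁻¹ * (1 - s))) • lam θ := by
        have h3 : (1 - s) • lam θ = - (s • q0) := eq_neg_of_add_eq_zero_left h
        rw [neg_smul, mul_smul, h3, smul_neg, neg_neg, smul_smul, inv_mul_cancel₀ hs, one_smul]
      rw [e]
      exact Submodule.smul_mem _ _ hi

end KTC

namespace KTC
open Finset Equiv

theorem lift_cont {Z E : Type*} [TopologicalSpace Z] [TopologicalSpace E] {S : Set E} (s0 : S)
    (f : Z → E) (s : Set Z) (hf : ContinuousOn f s) (hS : ∀ z ∈ s, f z ∈ S) :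
    ∃ N : Z → S, ContinuousOn N s ∧ (∀ z ∈ s, (N z : E) = f z) ∧ ∀ z ∉ s, N z = s0 := by
  classical
  refine ⟨fun z => if h : z ∈ s then ⟨f z, hS z h⟩ else s0, ?_, ?_, ?_⟩
  · rw [Topology.IsInducing.subtypeVal.continuousOn_iff]
    refine hf.congr fun z hz => ?_
    simp [hz]
  · intro z hz; simp [hz]
  · intro z hz; simp [hz]

section sphere
variable {p n k : ℕ} 
  (ρ : Multiplicative (ZMod p) →*
      (EuclideanSpace ℝ (Fin (n + 1)) ≃ₗᵢ[ℝ] EuclideanSpace ℝ (Fin (n + 1))))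

theorem sa_one (x : Sph n) : sphereAct ρ 1 x = x := by
  apply Subtype.ext; simp [sphereAct]

theorem sa_mul (g h : Multiplicative (ZMod p)) (x : Sph n) :
    sphereAct ρ (g * h) x = sphereAct ρ g (sphereAct ρ h x) := by
  apply Subtype.ext; simp [sphereAct]

theorem sa_isom (g : Multiplicative (ZMod p)) : Isometry (sphereAct ρ g) := by
  refine Isometry.of_dist_eq fun x y => ?_
  simp only [Subtype.dist_eq, sphereAct]
  exact (ρ g).dist_map _ _

theorem sa_fix (hp : p.Prime) (g : Multiplicative (ZMod p)) (hg : g ≠ 1) (x : Sph n)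
    (hx : sphereAct ρ g x = x) (g' : Multiplicative (ZMod p)) : sphereAct ρ g' x = x := by
  have : Fact p.Prime := ⟨hp⟩
  have hc : Nat.card (Multiplicative (ZMod p)) = p := by simp
  have h1 : Subgroup.zpowers g = ⊤ := zpowers_eq_top_of_prime_card hc hg
  let S : Subgroup (Multiplicative (ZMod p)) :=
    { carrier := {g | sphereAct ρ g x = x}
      mul_mem' := by
        intro a b ha hb
        change sphereAct ρ (a * b) x = x
        rw [sa_mul, show sphereAct ρ b x = x from hb, show sphereAct ρ a x = x from ha]
      one_mem' := sa_one ρ x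
      inv_mem' := by
        intro a ha
        change sphereAct ρ a⁻¹ x = x
        have ha : sphereAct ρ a x = x := ha
        conv_lhs => rw [← ha]
        rw [← sa_mul, inv_mul_cancel, sa_one] }
  have h2 : Subgroup.zpowers g ≤ S := by
    rw [Subgroup.zpowers_le]; exact hx
  rw [h1] at h2
  exact h2 (Subgroup.mem_top g')

/-- an orthonormal family spanning `V` and coordinate functions -/
theorem exists_frame (V : Submodule ℝ (EuclideanSpace ℝ (Fin (n + 1))))
    (hV : Module.finrank ℝ V = k + 1) :
    ∃ (e : Fin (k + 1) → EuclideanSpace ℝ (Fin (n + 1)))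
      (A : ℕ → EuclideanSpace ℝ (Fin (n + 1)) → ℝ), Orthonormal ℝ e ∧ (∀ i, e i ∈ V) ∧
      (∀ i : Fin (k + 1), ∀ x, A i x = inner ℝ (e i) x) ∧
      (∀ i x y, |A i x - A i y| ≤ dist x y) ∧
      (∀ x ∈ V, ∑ i ∈ Finset.range (k + 1), A i x ^ 2 = ‖x‖ ^ 2) ∧
      (∀ x, (∀ i < k + 1, A i x = 0) → x ∈ Vᗮ) ∧
      (∀ i x w, w ∈ Vᗮ → A i (x + w) = A i x) ∧
      (∀ i (f : EuclideanSpace ℝ (Fin (n + 1)) ≃ₗᵢ[ℝ] EuclideanSpace ℝ (Fin (n + 1))),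
        (∀ v ∈ V, f v = v) → ∀ x, A i (f x) = A i x) := by
  classical
  let b : OrthonormalBasis (Fin (k + 1)) ℝ V := (stdOrthonormalBasis ℝ V).reindex (finCongr hV)
  let e : Fin (k + 1) → EuclideanSpace ℝ (Fin (n + 1)) := fun i => (b i : EuclideanSpace ℝ (Fin (n + 1)))
  let A : ℕ → EuclideanSpace ℝ (Fin (n + 1)) → ℝ := fun i x =>
    if h : i < k + 1 then inner ℝ (e ⟨i, h⟩) x else 0
  have hA : ∀ i : Fin (k + 1), ∀ x, A i x = inner ℝ (e i) x := by
    intro i x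
    simp only [A, dif_pos i.2, Fin.eta]
  have hA' : ∀ i, (∃ v ∈ V, ‖v‖ ≤ 1 ∧ ∀ x, A i x = inner ℝ v x) := by
    intro i
    by_cases h : i < k + 1
    · exact ⟨e ⟨i, h⟩, (b _).2, (b.orthonormal.1 _).le, fun x => hA ⟨i, h⟩ x⟩
    · exact ⟨0, V.zero_mem, by simp, fun x => by simp only [A, dif_neg h, inner_zero_left]⟩
  refine ⟨e, A, b.orthonormal.comp_linearIsometry V.subtypeₗᵢ, fun i => (b i).2, hA, ?_, ?_, ?_, ?_, ?_⟩
  · intro i x y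
    obtain ⟨v, _, hv, h⟩ := hA' i
    rw [h, h, ← inner_sub_right, dist_eq_norm]
    refine (abs_real_inner_le_norm _ _).trans ?_
    nlinarith [norm_nonneg (x - y)]
  · intro x hx
    rw [Finset.sum_range]
    have := b.sum_sq_norm_inner_right ⟨x, hx⟩
    simp only [Submodule.coe_norm] at this
    rw [← this]
    refine Finset.sum_congr rfl fun i _ => ?_
    rw [hA, Real.norm_eq_abs, sq_abs]
    rfl
  · intro x hx
    rw [Submodule.mem_orthogonal]
    intro v hv
    have h1 := b.sum_repr ⟨v, hv⟩
    have h2 : v = ∑ i, b.repr ⟨v, hv⟩ i • e i := by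
      have := congrArg (Subtype.val) h1
      simpa [e] using this.symm
    rw [h2, sum_inner]
    refine Finset.sum_eq_zero fun i _ => ?_
    rw [inner_smul_left, ← hA, hx _ i.2, mul_zero]
  · intro i x w hw
    obtain ⟨v, hv, _, h⟩ := hA' i
    rw [h, h, inner_add_right, Submodule.inner_right_of_mem_orthogonal hv hw, add_zero]
  · intro i f hf x
    obtain ⟨v, hv, _, h⟩ := hA' i
    rw [h, h]
    conv_lhs => rw [← hf v hv]
    exact f.inner_map_map v x

theorem frame_coord {e : Fin (k + 1) → EuclideanSpace ℝ (Fin (n + 1))} (he : Orthonormal ℝ e)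
    (w : Fin (k + 1) → ℝ) (i : Fin (k + 1)) : inner ℝ (e i) (∑ j, w j • e j) = w i :=
  he.inner_right_fintype w i

theorem lowerA (hk0 : 0 < k) (hk : Even k) 
    (V : Submodule ℝ (EuclideanSpace ℝ (Fin (n + 1))))
    (hV : Module.finrank ℝ V = k + 1)
    (hfixV : ∀ x : ↥(Sph n),
      (∀ g : Multiplicative (ZMod p), sphereAct ρ g x = x) ↔
        (x : EuclideanSpace ℝ (Fin (n + 1))) ∈ V) (hcov : invTCcover (sphereAct ρ) 2) : False := by
  obtain ⟨D⟩ := hdata_of_cover (sphereAct ρ) (sa_one ρ) (sa_mul ρ) (sa_isom ρ) hcov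
  obtain ⟨e, A, he, heV, hAe, hA, hs, -, -, -⟩ := exists_frame V hV
  let Y : Set (Sph n) := {x | (x : EuclideanSpace ℝ (Fin (n + 1))) ∈ V}
  have hYc : IsClosed Y := (V.closed_of_finiteDimensional).preimage continuous_subtype_val
  have : CompactSpace Y := isCompact_iff_compactSpace.mp hYc.isCompact
  have D' := D.restrict Y (fun x => (hfixV x).symm)
  set f : (Fin (k + 1) → ℝ) → EuclideanSpace ℝ (Fin (n + 1)) := fun w =>
    ‖∑ j, w j • e j‖⁻¹ • ∑ j, w j • e j with hf
  have hne : ∀ w : Fin (k + 1) → ℝ, w ≠ 0 → ∑ j, w j • e j ≠ 0 := by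
    intro w hw h
    apply hw
    funext i
    rw [← frame_coord he w i, h, inner_zero_right]; rfl
  have hmem : ∀ w, f w ∈ V := fun w => V.smul_mem _ (V.sum_mem fun i _ => V.smul_mem _ (heV i))
  have hc : ContinuousOn f {0}ᶜ := by
    have hS : Continuous (fun w : Fin (k + 1) → ℝ => ∑ j, w j • e j) := by fun_prop
    exact ContinuousOn.smul (ContinuousOn.inv₀ hS.norm.continuousOn
      (fun w hw => norm_ne_zero_iff.mpr (hne w hw))) hS.continuousOn
  obtain ⟨N1, cN1, hN1, -⟩ := lift_cont (S := Sph n) ⟨e 0, by simp [he.1 0]⟩ f {0}ᶜ hc (by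
    intro w hw
    have := norm_ne_zero_iff.mpr (hne w hw)
    simp [hf, norm_smul, this])
  obtain ⟨N, cN, hN, -⟩ := lift_cont (S := Y) ⟨⟨e 0, by simp [he.1 0]⟩, heV 0⟩ N1 {0}ᶜ cN1 (by
    intro w hw
    change (N1 w : EuclideanSpace ℝ (Fin (n + 1))) ∈ V
    rw [hN1 w hw]; exact hmem w)
  refine caseA hk0 hk D' (fun i y => A i y.1.1) (fun i x y => hA i _ _) ?_ N cN ?_
  · intro x
    rw [hs _ x.2]
    have : ‖(x.1 : EuclideanSpace ℝ (Fin (n + 1)))‖ = 1 := by simpa using x.1.2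
    rw [this, one_pow]
  · intro w hw
    refine ⟨‖∑ j, w j • e j‖⁻¹, inv_pos.mpr (norm_pos_iff.mpr (hne w hw)), fun i => ?_⟩
    simp only [hN w hw, hN1 w hw, hf, hAe]
    rw [inner_smul_right, frame_coord he]

theorem lowerB (hp : p.Prime) (hkn : k + 3 ≤ n)
    (V : Submodule ℝ (EuclideanSpace ℝ (Fin (n + 1))))
    (hV : Module.finrank ℝ V = k + 1)
    (hVfix : ∀ g : Multiplicative (ZMod p), ∀ v ∈ V, ρ g v = v)
    (hfixV : ∀ x : ↥(Sph n),
      (∀ g : Multiplicative (ZMod p), sphereAct ρ g x = x) ↔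
        (x : EuclideanSpace ℝ (Fin (n + 1))) ∈ V) (hcov : invTCcover (sphereAct ρ) 2) : False := by
  have : Fact p.Prime := ⟨hp⟩
  obtain ⟨D⟩ := hdata_of_cover (sphereAct ρ) (sa_one ρ) (sa_mul ρ) (sa_isom ρ) hcov
  obtain ⟨e, A, he, heV, hAe, hA, hs, hAo, hAw, hAi⟩ := exists_frame V hV
  have hW : ∀ g, ∀ w ∈ Vᗮ, ρ g w ∈ Vᗮ := by
    intro g w hw
    rw [Submodule.mem_orthogonal] at hw ⊢
    intro v hv
    rw [← hVfix g v hv, (ρ g).inner_map_map]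
    exact hw v hv
  let wact : Multiplicative (ZMod p) → Vᗮ →ₗ[ℝ] Vᗮ := fun g =>
    ((ρ g).toLinearEquiv.toLinearMap).restrict (fun w hw => hW g w hw)
  have hwact : ∀ g w, ((wact g w : Vᗮ) : EuclideanSpace ℝ (Fin (n + 1))) = ρ g w := fun g w => rfl
  have hfr : 3 ≤ Module.finrank ℝ Vᗮ := by
    have := Submodule.finrank_add_finrank_orthogonal V
    rw [hV, finrank_euclideanSpace, Fintype.card_fin] at this
    omega
  obtain ⟨lam, q0, clam, hl0, hl, hl1, hq⟩ := exists_lam hfr wact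
    (fun w => by apply Subtype.ext; rw [hwact]; simp)
    (fun g h w => by apply Subtype.ext; simp only [hwact]; simp)
  have hdis : ∀ w, w ∈ V → w ∈ Vᗮ → w = 0 := fun w h1 h2 =>
    (Submodule.disjoint_def.mp V.orthogonal_disjoint) w h1 h2
  set S : (Fin (k + 1) → ℝ) × Vᗮ → EuclideanSpace ℝ (Fin (n + 1)) := fun z =>
    ∑ j, z.1 j • e j + (z.2 : EuclideanSpace ℝ (Fin (n + 1))) with hSd
  have hSA : ∀ z (i : Fin (k + 1)), inner ℝ (e i) (S z) = z.1 i := by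
    intro z i
    simp only [hSd]
    rw [inner_add_right, Submodule.inner_right_of_mem_orthogonal (heV i) z.2.2, add_zero, frame_coord he]
  have hSV : ∀ z : (Fin (k + 1) → ℝ) × Vᗮ, ∑ j, z.1 j • e j ∈ V :=
    fun z => V.sum_mem fun i _ => V.smul_mem _ (heV i)
  have hne : ∀ z, z ≠ 0 → S z ≠ 0 := by
    intro z hz h
    apply hz
    have h1 : z.1 = 0 := by
      funext i
      rw [← hSA z i, h, inner_zero_right]; rfl
    refine Prod.ext h1 (Subtype.ext ?_)
    simpa [hSd, h1] using h
  have hρS : ∀ g z, ρ g (S z) = S (z.1, wact g z.2) := by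
    intro g z
    simp only [hSd, map_add, hwact]
    rw [hVfix g _ (hSV z)]
  set f : (Fin (k + 1) → ℝ) × Vᗮ → EuclideanSpace ℝ (Fin (n + 1)) := fun w =>
    ‖S w‖⁻¹ • S w with hf
  have hc : ContinuousOn f {0}ᶜ := by
    have : Continuous S := by simp only [hSd]; fun_prop
    exact ContinuousOn.smul (ContinuousOn.inv₀ this.norm.continuousOn
      (fun w hw => norm_ne_zero_iff.mpr (hne w hw))) this.continuousOn
  obtain ⟨N, cN, hN, hN0⟩ := lift_cont (S := Sph n) ⟨e 0, by simp [he.1 0]⟩ f {0}ᶜ hc (by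
    intro w hw
    have := norm_ne_zero_iff.mpr (hne w hw)
    simp [hf, norm_smul, this])
  have hfx : ∀ g, g ≠ 1 → ∀ x : Sph n, sphereAct ρ g x = x → (x : EuclideanSpace ℝ (Fin (n + 1))) ∈ V :=
    fun g hg x hx => (hfixV x).mp (sa_fix ρ hp g hg x hx)
  refine caseB (sphereAct ρ) (sa_one ρ) (sa_mul ρ) (sa_isom ρ) D (fun i y => A i y.1)
    (fun i x y => hA i _ _) (fun i g x => hAi i (ρ g) (hVfix g) x) (k + 1) ?_ wact N cN ?_ ?_ ?_
    lam clam hl0 hl hl1 q0 hq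
  · intro x hx g hg
    rw [dist_pos]
    intro h
    have := hdis _ (hfx g hg x h) (hAo _ hx)
    have h2 := x.2
    rw [this] at h2
    simp at h2
  · intro s w hz
    refine ⟨‖S (s, w)‖⁻¹, inv_pos.mpr (norm_pos_iff.mpr (hne _ hz)), fun i => ?_⟩
    simp only [hN (s, w) hz, hf, hAe]
    rw [inner_smul_right, hSA]
  · intro g s w
    have hz' : (s, wact g w) = 0 ↔ (s, w) = 0 := by
      rw [Prod.mk_eq_zero, Prod.mk_eq_zero]
      refine and_congr_right fun _ => ?_
      constructor
      · intro h
        have : ρ g (w : EuclideanSpace ℝ (Fin (n + 1))) = 0 := by rw [← hwact, h]; rfl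
        apply Subtype.ext
        simpa using this
      · intro h; rw [h, map_zero]
    apply Subtype.ext
    by_cases hz : (s, w) = 0
    · rw [hN0 (s, wact g w) (by simpa using hz'.mpr hz), hN0 (s, w) (by simpa using hz)]
      exact (hVfix g _ (heV 0)).symm
    · rw [hN _ (fun h => hz (hz'.mp h))]
      simp only [sphereAct, hN _ hz, hf]
      rw [map_smul, hρS, ← (ρ g).norm_map (S (s, w)), hρS]
  · intro s w hw g hg
    by_contra hne1
    have hz : (s, w) ≠ 0 := fun h => hw (congrArg Prod.snd h)
    have h1 := hfx g hne1 _ hg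
    rw [hN _ hz] at h1
    simp only [hf] at h1
    have h2 : S (s, w) ∈ V := by
      have h3 := V.smul_mem ‖S (s, w)‖ h1
      rwa [smul_smul, mul_inv_cancel₀ (norm_ne_zero_iff.mpr (hne _ hz)), one_smul] at h3
    have h3 : (w : EuclideanSpace ℝ (Fin (n + 1))) ∈ V := by
      have := V.sub_mem h2 (hSV (s, w))
      simpa [hSd] using this
    exact hw (Subtype.ext (hdis _ h3 w.2))

end sphere
end KTC

namespace KTC
open Finset Equiv

theorem curry_on {X : Type*} [TopologicalSpace X] (N : X × I → X) (W : Set X)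
    (hN : ContinuousOn N (W ×ˢ (univ : Set I))) :
    ∃ H : X → C(I, X), ContinuousOn H W ∧ ∀ x ∈ W, ∀ t, H x t = N (x, t) := by
  classical
  have hc : Continuous (fun z : W × I => N (z.1.1, z.2)) :=
    hN.comp_continuous (by fun_prop) (fun z => ⟨z.1.2, mem_univ _⟩)
  let K : C(W, C(I, X)) := ContinuousMap.curry ⟨_, hc⟩
  have hK : ∀ (x : W) t, K x t = N (x.1, t) := fun x t => rfl
  refine ⟨fun x => if h : x ∈ W then K ⟨x, h⟩ else ContinuousMap.const I x, ?_, ?_⟩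
  · rw [continuousOn_iff_continuous_domRestrict]
    refine K.continuous.congr fun x => ?_
    simp [x.2]
  · intro x hx t
    simp only [dif_pos hx, hK]

section sphere
variable {p n k : ℕ} 
  (ρ : Multiplicative (ZMod p) →*
      (EuclideanSpace ℝ (Fin (n + 1)) ≃ₗᵢ[ℝ] EuclideanSpace ℝ (Fin (n + 1))))

theorem contr (c : ℝ → EuclideanSpace ℝ (Fin (n + 1))) (hc : Continuous c)
    (hc1 : ∀ u, ‖c u‖ = 1) (hfix : ∀ g u, ρ g (c u) = c u) :
    ∃ H : Sph n → C(I, Sph n),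
      ContinuousOn H {x | (x : EuclideanSpace ℝ (Fin (n + 1))) ≠ - c 0} ∧
      ∀ x : Sph n, (x : EuclideanSpace ℝ (Fin (n + 1))) ≠ - c 0 →
        H x 0 = x ∧ (H x 1 : EuclideanSpace ℝ (Fin (n + 1))) = c 1 ∧
        ∀ g t, H (sphereAct ρ g x) t = sphereAct ρ g (H x t) := by
  set W : Set (Sph n) := {x | (x : EuclideanSpace ℝ (Fin (n + 1))) ≠ - c 0} with hW
  let s : I → ℝ := fun t => min (2 * (t : ℝ)) 1
  let u : I → ℝ := fun t => max (2 * (t : ℝ) - 1) 0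
  have hs : Continuous s := by fun_prop
  have hu : Continuous u := by fun_prop
  let F : Sph n × I → EuclideanSpace ℝ (Fin (n + 1)) := fun z =>
    (1 - s z.2) • (z.1 : EuclideanSpace ℝ (Fin (n + 1))) + s z.2 • c (u z.2)
  have hF : Continuous F := by fun_prop
  have hne : ∀ z ∈ W ×ˢ (univ : Set I), F z ≠ 0 := by
    rintro ⟨x, t⟩ ⟨hx, -⟩ h0
    have hx1 : ‖(x : EuclideanSpace ℝ (Fin (n + 1)))‖ = 1 := mem_sphere_zero_iff_norm.mp x.2
    have hst0 : 0 ≤ s t := le_min (by have := t.2.1; linarith) zero_le_one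
    have hst1 : s t ≤ 1 := min_le_right _ _
    have h1 : (1 - s t) • (x : EuclideanSpace ℝ (Fin (n + 1))) = - (s t • c (u t)) :=
      eq_neg_of_add_eq_zero_left h0
    have h2 := congrArg norm h1
    rw [norm_neg, norm_smul, norm_smul, hx1, hc1, mul_one, mul_one, Real.norm_eq_abs,
      Real.norm_eq_abs, abs_of_nonneg hst0, abs_of_nonneg (by linarith)] at h2
    have h3 : s t = 1 / 2 := by linarith
    have h4 : u t = 0 := by
      apply max_eq_right
      by_contra h5
      have : s t = 1 := min_eq_right (by linarith)
      linarith
    rw [h3, h4, ← smul_neg, show (1 : ℝ) - 1 / 2 = 1 / 2 by norm_num] at h1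
    exact hx (smul_right_injective _ (show (1 / 2 : ℝ) ≠ 0 by norm_num) h1)
  have hnc : ContinuousOn (fun z => ‖F z‖⁻¹ • F z) (W ×ˢ (univ : Set I)) :=
    ContinuousOn.smul (ContinuousOn.inv₀ hF.norm.continuousOn
      (fun w hw => norm_ne_zero_iff.mpr (hne w hw))) hF.continuousOn
  obtain ⟨N, cN, hN, -⟩ := lift_cont (S := Sph n) ⟨c 0, by simp [hc1]⟩ _ _ hnc (by
    intro w hw
    have := norm_ne_zero_iff.mpr (hne w hw)
    simp [norm_smul, this])
  obtain ⟨H, cH, hH⟩ := curry_on N W cN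
  have hHF : ∀ x ∈ W, ∀ t, (H x t : EuclideanSpace ℝ (Fin (n + 1))) = ‖F (x, t)‖⁻¹ • F (x, t) := by
    intro x hx t
    rw [hH x hx t, hN (x, t) ⟨hx, mem_univ _⟩]
  refine ⟨H, cH, fun x hx => ⟨?_, ?_, ?_⟩⟩
  · apply Subtype.ext
    have h1 : F (x, 0) = x := by simp [F, s]
    have hx1 : ‖(x : EuclideanSpace ℝ (Fin (n + 1)))‖ = 1 := mem_sphere_zero_iff_norm.mp x.2
    rw [hHF x hx, h1, hx1]; simp
  · have h1 : F (x, 1) = c 1 := by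
      have e1 : s 1 = 1 := by simp [s]
      have e2 : u 1 = 1 := by simp only [u, Set.Icc.coe_one]; norm_num
      simp only [F, e1, e2]; simp
    rw [hHF x hx, h1, hc1]; simp
  · intro g t
    have hgx : sphereAct ρ g x ∈ W := by
      intro h
      apply hx
      apply (ρ g).injective
      rw [map_neg, hfix]
      exact h
    have h1 : F (sphereAct ρ g x, t) = ρ g (F (x, t)) := by
      simp only [F, map_add, map_smul, hfix]; rfl
    apply Subtype.ext
    rw [hHF _ hgx, h1, (ρ g).norm_map]
    change _ = ρ g (H x t)
    rw [hHF x hx, map_smul]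

theorem upper (hk : 0 < k) (V : Submodule ℝ (EuclideanSpace ℝ (Fin (n + 1))))
    (hV : Module.finrank ℝ V = k + 1)
    (hVfix : ∀ g : Multiplicative (ZMod p), ∀ v ∈ V, ρ g v = v) :
    invTCcover (sphereAct ρ) 3 := by
  classical
  obtain ⟨e, A, he, heV, -⟩ := exists_frame V hV
  set a : EuclideanSpace ℝ (Fin (n + 1)) := e 0 with ha
  set b : EuclideanSpace ℝ (Fin (n + 1)) := e ⟨1, by omega⟩ with hb
  have ha1 : ‖a‖ = 1 := he.1 _
  have hb1 : ‖b‖ = 1 := he.1 _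
  have hab : inner ℝ a b = 0 := he.2 (by simp [Fin.ext_iff])
  have hga : ∀ g, ρ g a = a := fun g => hVfix g _ (heV _)
  have hgb : ∀ g, ρ g b = b := fun g => hVfix g _ (heV _)
  obtain ⟨H0, cH0, h0⟩ := contr ρ (fun _ => a) continuous_const (fun _ => ha1) (fun g _ => hga g)
  obtain ⟨H1, cH1, h1⟩ := contr ρ (fun u => -(Real.cos (Real.pi * u)) • a + Real.sin (Real.pi * u) • b)
    (by fun_prop) (by
      intro u
      rw [← sq_eq_sq₀ (norm_nonneg _) zero_le_one, norm_add_sq_real, norm_smul, norm_smul,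
        inner_smul_left, inner_smul_right, hab, ha1, hb1]
      simp) (by intro g u; simp only [map_add, map_smul, hga, hgb])
  simp only [mul_zero, Real.cos_zero, Real.sin_zero, zero_smul, add_zero, neg_smul, one_smul, neg_neg,
    mul_one, Real.cos_pi, Real.sin_pi] at cH1 h1
  let W0 : Set (Sph n) := {x | (x : EuclideanSpace ℝ (Fin (n + 1))) ≠ - a}
  let W1 : Set (Sph n) := {x | (x : EuclideanSpace ℝ (Fin (n + 1))) ≠ a}
  let d : Sph n → ℝ := fun x => dist (x : EuclideanSpace ℝ (Fin (n + 1))) a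
  have hd : ∀ g x, d (sphereAct ρ g x) = d x := by
    intro g x
    change dist (ρ g x) a = dist (x : EuclideanSpace ℝ (Fin (n + 1))) a
    conv_lhs => rw [← hga g]
    exact (ρ g).dist_map _ _
  have cd : Continuous d := by fun_prop
  have oW0 : IsOpen W0 := isOpen_ne_fun continuous_subtype_val continuous_const
  have oW1 : IsOpen W1 := isOpen_ne_fun continuous_subtype_val continuous_const
  have hgW0 : ∀ g x, x ∈ W0 → sphereAct ρ g x ∈ W0 := by
    intro g x hx h
    apply hx
    apply (ρ g).injective
    rw [map_neg, hga]
    exact h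
  have hgW1 : ∀ g x, x ∈ W1 → sphereAct ρ g x ∈ W1 := by
    intro g x hx h
    apply hx
    apply (ρ g).injective
    rw [hga]
    exact h
  have hda : ∀ x, x ∉ W1 → d x = 0 := by
    intro x hx
    have : (x : EuclideanSpace ℝ (Fin (n + 1))) = a := not_not.mp hx
    simp only [d, this, dist_self]
  have hd0 : ∀ x, 0 ≤ d x := fun x => dist_nonneg
  have hdm : ∀ x, x ∉ W0 → d x = 2 := by
    intro x hx
    have : (x : EuclideanSpace ℝ (Fin (n + 1))) = -a := not_not.mp hx
    simp only [d, this, dist_eq_norm]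
    rw [show -a - a = (-2 : ℝ) • a by module, norm_smul, ha1]; norm_num
  have hd2 : ∀ x, d x ≤ 2 := by
    intro x
    have hx1 : ‖(x : EuclideanSpace ℝ (Fin (n + 1)))‖ = 1 := mem_sphere_zero_iff_norm.mp x.2
    simp only [d, dist_eq_norm]
    refine (norm_sub_le _ _).trans ?_
    rw [ha1, hx1]; norm_num
  -- a general builder
  have build : ∀ (U : Set (Sph n × Sph n)) (K1 K2 : Sph n × Sph n → C(I, Sph n)),
      ContinuousOn K1 U → ContinuousOn K2 U →
      (∀ q ∈ U, K1 q 0 = q.1 ∧ K2 q 0 = q.2 ∧ (K1 q 1).1 = a ∧ (K2 q 1).1 = a) →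
      (∀ g₁ g₂, ∀ q ∈ U, ∀ t,
          K1 (sphereAct ρ g₁ q.1, sphereAct ρ g₂ q.2) t = sphereAct ρ g₁ (K1 q t) ∧
          K2 (sphereAct ρ g₁ q.1, sphereAct ρ g₂ q.2) t = sphereAct ρ g₂ (K2 q t)) →
      ∃ s₁ s₂ : Sph n × Sph n → C(I, Sph n),
        ContinuousOn s₁ U ∧ ContinuousOn s₂ U ∧
        (∀ p ∈ U, s₁ p 0 = p.1 ∧ s₂ p 1 = p.2 ∧
          orbit (sphereAct ρ) (s₁ p 1) = orbit (sphereAct ρ) (s₂ p 0)) ∧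
        (∀ g₁ g₂, ∀ p, p ∈ U → ∀ t : I,
          s₁ (sphereAct ρ g₁ p.1, sphereAct ρ g₂ p.2) t = sphereAct ρ g₁ (s₁ p t) ∧
          s₂ (sphereAct ρ g₁ p.1, sphereAct ρ g₂ p.2) t = sphereAct ρ g₂ (s₂ p t)) := by
    intro U K1 K2 c1 c2 hK hE
    let r : C(I, I) := ⟨unitInterval.symm, unitInterval.continuous_symm⟩
    refine ⟨K1, fun q => (K2 q).comp r, c1,
      (ContinuousMap.continuous_precomp r).comp_continuousOn c2, ?_, ?_⟩
    · intro q hq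
      obtain ⟨e1, e2, e3, e4⟩ := hK q hq
      have r1 : r 1 = 0 := unitInterval.symm_one
      have r0 : r 0 = 1 := unitInterval.symm_zero
      refine ⟨e1, ?_, ?_⟩
      · rw [ContinuousMap.comp_apply, r1, e2]
      · rw [ContinuousMap.comp_apply, r0, Subtype.ext (e3.trans e4.symm)]
    · intro g₁ g₂ q hq t
      exact ⟨(hE g₁ g₂ q hq t).1, (hE g₁ g₂ q hq (r t)).2⟩
  let U : Fin 3 → Set (Sph n × Sph n) := ![W0 ×ˢ W0, {q | d q.1 ≠ d q.2}, W1 ×ˢ W1]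
  have cfst : ∀ (H : Sph n → C(I, Sph n)) (W : Set (Sph n)) (Z : Set (Sph n × Sph n)),
      ContinuousOn H W → (∀ q ∈ Z, q.1 ∈ W) → ContinuousOn (fun q => H q.1) Z :=
    fun H W Z hH hZ => hH.comp continuous_fst.continuousOn hZ
  have csnd : ∀ (H : Sph n → C(I, Sph n)) (W : Set (Sph n)) (Z : Set (Sph n × Sph n)),
      ContinuousOn H W → (∀ q ∈ Z, q.2 ∈ W) → ContinuousOn (fun q => H q.2) Z :=
    fun H W Z hH hZ => hH.comp continuous_snd.continuousOn hZ
  refine ⟨U, ?_, ?_, ?_⟩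
  · intro i
    fin_cases i
    · exact oW0.prod oW0
    · exact isOpen_ne_fun (cd.comp continuous_fst) (cd.comp continuous_snd)
    · exact oW1.prod oW1
  · rw [eq_univ_iff_forall]
    rintro ⟨x, y⟩
    rw [mem_iUnion]
    by_cases hq : d x = d y
    · by_cases hx : d x = 2
      · refine ⟨2, ?_⟩
        change x ∈ W1 ∧ y ∈ W1
        constructor
        · by_contra h
          linarith [hda x h]
        · by_contra h
          linarith [hda y h]
      · refine ⟨0, ?_⟩
        change x ∈ W0 ∧ y ∈ W0
        constructor
        · by_contra h
          exact hx (hdm x h)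
        · by_contra h
          exact hx (hq.trans (hdm y h))
    · exact ⟨1, hq⟩
  · intro i
    fin_cases i
    · refine ⟨fun g₁ g₂ q hq => ⟨hgW0 g₁ _ hq.1, hgW0 g₂ _ hq.2⟩, ?_⟩
      refine build _ (fun q => H0 q.1) (fun q => H0 q.2) (cfst _ W0 _ cH0 fun q hq => hq.1)
        (csnd _ W0 _ cH0 fun q hq => hq.2) ?_ ?_
      · intro q hq
        exact ⟨(h0 _ hq.1).1, (h0 _ hq.2).1, (h0 _ hq.1).2.1, (h0 _ hq.2).2.1⟩
      · intro g₁ g₂ q hq t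
        exact ⟨(h0 _ hq.1).2.2 g₁ t, (h0 _ hq.2).2.2 g₂ t⟩
    · refine ⟨fun g₁ g₂ q hq => ?_, ?_⟩
      · change d _ ≠ d _
        rw [hd, hd]; exact hq
      · let Zl : Set (Sph n × Sph n) := {q | d q.1 < d q.2}
        let Zg : Set (Sph n × Sph n) := {q | d q.2 < d q.1}
        have oZl : IsOpen Zl := isOpen_lt (cd.comp continuous_fst) (cd.comp continuous_snd)
        have oZg : IsOpen Zg := isOpen_lt (cd.comp continuous_snd) (cd.comp continuous_fst)
        have l1 : ∀ q ∈ Zl, q.1 ∈ W0 := by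
          intro q hq
          by_contra h
          have hq : d q.1 < d q.2 := hq
          linarith [hdm _ h, hd2 q.2]
        have l2 : ∀ q ∈ Zl, q.2 ∈ W1 := by
          intro q hq
          by_contra h
          have hq : d q.1 < d q.2 := hq
          linarith [hda _ h, hd0 q.1]
        have g1 : ∀ q ∈ Zg, q.1 ∈ W1 := by
          intro q hq
          by_contra h
          have hq : d q.2 < d q.1 := hq
          linarith [hda _ h, hd0 q.2]
        have g2 : ∀ q ∈ Zg, q.2 ∈ W0 := by
          intro q hq
          by_contra h
          have hq : d q.2 < d q.1 := hq
          linarith [hdm _ h, hd2 q.1]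
        have glue : ∀ J K : Sph n × Sph n → C(I, Sph n), ContinuousOn J Zl → ContinuousOn K Zg →
            ContinuousOn (fun q => if d q.1 < d q.2 then J q else K q) {q | d q.1 ≠ d q.2} := by
          intro J K hJ hK q hq
          apply ContinuousAt.continuousWithinAt
          rcases lt_or_gt_of_ne (show d q.1 ≠ d q.2 from hq) with h | h
          · refine (hJ.continuousAt (oZl.mem_nhds h)).congr ?_
            filter_upwards [oZl.mem_nhds h] with z hz
            exact (if_pos hz).symm
          · refine (hK.continuousAt (oZg.mem_nhds h)).congr ?_
            filter_upwards [oZg.mem_nhds h] with z hz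
            exact (if_neg (not_lt.mpr (le_of_lt hz))).symm
        refine build _ (fun q => if d q.1 < d q.2 then H0 q.1 else H1 q.1)
          (fun q => if d q.1 < d q.2 then H1 q.2 else H0 q.2)
          (glue (fun q => H0 q.1) (fun q => H1 q.1) (cfst _ W0 _ cH0 l1) (cfst _ W1 _ cH1 g1))
          (glue (fun q => H1 q.2) (fun q => H0 q.2) (csnd _ W1 _ cH1 l2) (csnd _ W0 _ cH0 g2)) ?_ ?_
        · intro q hq
          rcases lt_or_gt_of_ne (show d q.1 ≠ d q.2 from hq) with h | h
          · simp only [if_pos h]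
            exact ⟨(h0 _ (l1 q h)).1, (h1 _ (l2 q h)).1, (h0 _ (l1 q h)).2.1, (h1 _ (l2 q h)).2.1⟩
          · simp only [if_neg (not_lt.mpr (le_of_lt h))]
            exact ⟨(h1 _ (g1 q h)).1, (h0 _ (g2 q h)).1, (h1 _ (g1 q h)).2.1, (h0 _ (g2 q h)).2.1⟩
        · intro g₁ g₂ q hq t
          simp only [hd]
          rcases lt_or_gt_of_ne (show d q.1 ≠ d q.2 from hq) with h | h
          · simp only [if_pos h]
            exact ⟨(h0 _ (l1 q h)).2.2 g₁ t, (h1 _ (l2 q h)).2.2 g₂ t⟩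
          · simp only [if_neg (not_lt.mpr (le_of_lt h))]
            exact ⟨(h1 _ (g1 q h)).2.2 g₁ t, (h0 _ (g2 q h)).2.2 g₂ t⟩
    · refine ⟨fun g₁ g₂ q hq => ⟨hgW1 g₁ _ hq.1, hgW1 g₂ _ hq.2⟩, ?_⟩
      refine build _ (fun q => H1 q.1) (fun q => H1 q.2) (cfst _ W1 _ cH1 fun q hq => hq.1)
        (csnd _ W1 _ cH1 fun q hq => hq.2) ?_ ?_
      · intro q hq
        exact ⟨(h1 _ hq.1).1, (h1 _ hq.2).1, (h1 _ hq.1).2.1, (h1 _ hq.2).2.1⟩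
      · intro g₁ g₂ q hq t
        exact ⟨(h1 _ hq.1).2.2 g₁ t, (h1 _ hq.2).2.2 g₂ t⟩

theorem cover_one_two {G X : Type*} [TopologicalSpace X] (act : G → X → X)
    (h : invTCcover act 1) : invTCcover act 2 := by
  obtain ⟨U, h1, h2, h3⟩ := h
  refine ⟨fun _ => U 0, fun _ => h1 0, ?_, fun _ => h3 0⟩
  rw [eq_univ_iff_forall] at h2 ⊢
  intro x
  obtain ⟨i, hi⟩ := mem_iUnion.mp (h2 x)
  rw [Subsingleton.elim i 0] at hi
  exact mem_iUnion.mpr ⟨0, hi⟩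

end sphere
end KTC

/-- Let `ℤ/p` (`p` prime) act linearly on `S^n` with fixed point set the
great `k`-sphere cut out by a pointwise-fixed subspace `V` of dimension `k + 1`, where
`0 < k < n`.  If either (i) `k < n - 2`, or (ii) `k = n - 2` and `n` is even, or
(iii) `k = n - 1` and `n` is odd, then `TC^{ℤ/p}(S^n) = 3`. -/
theorem invTC_linear_zmod_sphere_eq_three (p : ℕ) (hp : p.Prime) (n k : ℕ)
    (hk : 0 < k) (hkn : k < n)
    (ρ : Multiplicative (ZMod p) →*
      (EuclideanSpace ℝ (Fin (n + 1)) ≃ₗᵢ[ℝ] EuclideanSpace ℝ (Fin (n + 1))))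
    (V : Submodule ℝ (EuclideanSpace ℝ (Fin (n + 1))))
    (hV : Module.finrank ℝ V = k + 1)
    (hVfix : ∀ g : Multiplicative (ZMod p), ∀ v ∈ V, ρ g v = v)
    (hfixV : ∀ x : ↥(Sph n),
      (∀ g : Multiplicative (ZMod p), sphereAct ρ g x = x) ↔
        (x : EuclideanSpace ℝ (Fin (n + 1))) ∈ V)
    (hcase : k < n - 2 ∨ (k = n - 2 ∧ Even n) ∨ (k = n - 1 ∧ Odd n)) :
    invTC (sphereAct ρ) = 3 := by
  have h2 : ¬ invTCcover (sphereAct ρ) 2 := by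
    intro hcov
    rcases hcase with h | ⟨h, hn⟩ | ⟨h, hn⟩
    · exact KTC.lowerB ρ hp (by omega) V hV hVfix hfixV hcov
    · refine KTC.lowerA ρ hk ?_ V hV hfixV hcov
      obtain ⟨m, hm⟩ := hn
      exact ⟨m - 1, by omega⟩
    · refine KTC.lowerA ρ hk ?_ V hV hfixV hcov
      obtain ⟨m, hm⟩ := hn
      exact ⟨m, by omega⟩
  have h1 : ¬ invTCcover (sphereAct ρ) 1 := fun h => h2 (KTC.cover_one_two _ h)
  have h3 := KTC.upper ρ hk V hV hVfix
  unfold invTC minCover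
  apply le_antisymm
  · exact sInf_le ⟨3, by norm_num, by norm_num, h3⟩
  · refine le_sInf ?_
    rintro _ ⟨m, rfl, hm, hP⟩
    have : 3 ≤ m := by
      by_contra hlt
      have : m = 1 ∨ m = 2 := by omega
      rcases this with rfl | rfl
      · exact h1 hP
      · exact h2 hP
    exact_mod_cast this
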